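/- Under Assumptions A1, A2 and A3, with probability one, for every ε > 0 and every x ∈ ℝ^d, limsup_{n→∞} sup_{y ∈ B(x,ε)} g_n(y) ≤ sup_{y ∈ B(x,ε)} f(y). -/

import Mathlib

open MeasureTheory Filter Metric
open scoped Topology ENNReal NNReal

noncomputable def kb {d : ℕ} (K : EuclideanSpace ℝ (Fin d) → ℝ) (b : ℝ)
    (x : EuclideanSpace ℝ (Fin d)) : ℝ :=
  (b ^ d)⁻¹ * K (b⁻¹ • x)

def natFilt {Ω : Type*} {d : ℕ} (X : ℕ → Ω → EuclideanSpace ℝ (Fin d)) (n : ℕ) :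
    MeasurableSpace Ω :=
  ⨆ i ∈ Finset.Icc 1 n, MeasurableSpace.comap (X i) inferInstance

/-!
Since `q_n` is a mixture of `g_n / ∫ g_n` and `q0`, the mean of `w_{n+1}^η K_b(x - X_{n+1})` given
`F_n` is about `f x ^ η * q_n x ^ (1 - η)`: up to noise, `g_n x` averages the map
`l ↦ f x ^ η * l ^ (1 - η)`, whose attracting fixed point is `f x`.

*Noise.* Truncate the weights at the level `f / q_n` cannot exceed where `q_n ≥ lam_n / 2 * q0`. The
averaged martingale differences have sub-Gaussian exponential moments, so by a Chernoff bound, a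
grid and the Borel–Cantelli lemma they are `o(lam_n ^ (1 - η))`, uniformly on `‖x‖ ≤ n`.

*Exploration.* As the factors `1 - γ_n` may be negative at first, so may be the masses and the
values of `g_n`. If `g_n` has positive mass and a negative value, it must be positive at a point
with `f > 0`, since otherwise a later proposal could be negative with positive probability. Around
that point `g_n` grows like the recursion `l ↦ (1 - γ) l + γ κ l ^ (1 - η)`, and the mass created
dominates the decaying negative part. From then on `q_n ≥ lam_n / 2 * q0` everywhere and the
truncation is inactive.

*Convergence.* Iterating `l ↦ a ^ η * l ^ (1 - η)` on shrinking balls gives `f ≤ liminf g_n`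
locally uniformly. By Fatou's lemma the mass of `g_n` is at least `1` in the limit, which turns the
recursion into a bound from above; the dual iteration on balls gives the claim.
-/

namespace Midas

/-! ### Rescaled kernels -/

/-- The state space `ℝ^d` with its Euclidean norm. -/
abbrev E (d : ℕ) := EuclideanSpace ℝ (Fin d)

lemma eventually_forall_mem_ball_norm_le {V : Type*} [SeminormedAddCommGroup V] (x₀ : V) (r : ℝ) :
    ∀ᶠ n : ℕ in atTop, ∀ x ∈ ball x₀ r, ‖x‖ ≤ n := by
  filter_upwards [eventually_ge_atTop ⌈‖x₀‖ + r⌉₊] with n hn x hx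
  rw [mem_ball, dist_eq_norm] at hx
  linarith [norm_le_norm_add_norm_sub' x x₀, Nat.ceil_le.1 hn]

section RescaledKernel

variable {d : ℕ} {K : E d → ℝ} {β : ℝ}

lemma kb_nonneg (hK : ∀ x, 0 ≤ K x) (hβ : 0 ≤ β) (x : E d) : 0 ≤ kb K β x :=
  mul_nonneg (by positivity) (hK _)

lemma kb_le {M : ℝ} (hK : ∀ x, K x ≤ M) (hβ : 0 ≤ β) (x : E d) : kb K β x ≤ M / β ^ d := by
  rw [kb, div_eq_inv_mul]
  gcongr
  exact hK _

lemma abs_kb_le {M : ℝ} (hK : ∀ x, 0 ≤ K x) (hM : ∀ x, K x ≤ M) (hβ : 0 ≤ β) (x : E d) :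
    |kb K β x| ≤ M / β ^ d := by
  rw [abs_of_nonneg (kb_nonneg hK hβ x)]
  exact kb_le hM hβ x

lemma continuous_kb (hK : Continuous K) (β : ℝ) : Continuous (kb K β) := by
  unfold kb
  fun_prop

lemma integrable_kb (hK : Integrable K) (hβ : 0 < β) : Integrable (kb K β) :=
  ((integrable_comp_smul_iff volume K (inv_ne_zero hβ.ne')).2 hK).const_mul _

lemma integral_kb (K : E d → ℝ) (hβ : 0 < β) : ∫ x, kb K β x = ∫ x, K x := by
  unfold kb
  rw [integral_const_mul, Measure.integral_comp_inv_smul]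
  simp only [finrank_euclideanSpace, Fintype.card_fin, smul_eq_mul]
  rw [abs_of_pos (by positivity), inv_mul_cancel_left₀ (by positivity)]

lemma abs_kb_sub_kb_le {L : ℝ≥0} (hK : LipschitzWith L K) (hβ : 0 < β) (x y : E d) :
    |kb K β x - kb K β y| ≤ L / β ^ (d + 1) * ‖x - y‖ := by
  have hKxy := hK.dist_le_mul (β⁻¹ • x) (β⁻¹ • y)
  rw [Real.dist_eq, dist_eq_norm, ← smul_sub, norm_smul,
    Real.norm_of_nonneg (by positivity)] at hKxy
  calc |kb K β x - kb K β y| = (β ^ d)⁻¹ * |K (β⁻¹ • x) - K (β⁻¹ • y)| := by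
        rw [kb, kb, ← mul_sub, abs_mul, abs_of_pos (by positivity)]
    _ ≤ (β ^ d)⁻¹ * (L * (β⁻¹ * ‖x - y‖)) := by gcongr
    _ = L / β ^ (d + 1) * ‖x - y‖ := by rw [pow_succ]; field_simp

lemma kb_le_of_le_norm {r C δ : ℝ} (hr : 0 ≤ r) (hK : ∀ x, 0 ≤ K x)
    (htail : ∀ x, (1 + ‖x‖ ^ ((d : ℝ) + r)) * K x ≤ C) (hβ : 0 < β) (hδ : 0 < δ) {x : E d}
    (hx : δ ≤ ‖x‖) : kb K β x ≤ C * β ^ r / δ ^ ((d : ℝ) + r) := by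
  have hpow : (β⁻¹ * δ) ^ ((d : ℝ) + r) ≤ ‖β⁻¹ • x‖ ^ ((d : ℝ) + r) := by
    rw [norm_smul, Real.norm_of_nonneg (by positivity)]
    gcongr
  have hfar : (β⁻¹ * δ) ^ ((d : ℝ) + r) * K (β⁻¹ • x) ≤ C :=
    (mul_le_mul_of_nonneg_right (by linarith) (hK _)).trans (htail (β⁻¹ • x))
  rw [Real.mul_rpow (by positivity) hδ.le, Real.inv_rpow hβ.le, Real.rpow_add hβ,
    Real.rpow_natCast] at hfar
  have : 0 < β ^ r := by positivity
  rw [le_div_iff₀ (by positivity), kb]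
  calc (β ^ d)⁻¹ * K (β⁻¹ • x) * δ ^ ((d : ℝ) + r)
      = β ^ r * ((β ^ d * β ^ r)⁻¹ * δ ^ ((d : ℝ) + r) * K (β⁻¹ • x)) := by field_simp
    _ ≤ β ^ r * C := by gcongr
    _ = C * β ^ r := mul_comm _ _

lemma setIntegral_ball_kb (K : E d → ℝ) (hβ : 0 < β) (δ : ℝ) (x : E d) :
    ∫ y in ball x δ, kb K β (x - y) = ∫ z in ball (0 : E d) (δ / β), K z := by
  have hscale : ∀ y, (ball x δ).indicator (fun y => kb K β (x - y)) y
      = kb ((ball (0 : E d) (δ / β)).indicator K) β (x - y) := by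
    intro y
    have hmem : β⁻¹ • (x - y) ∈ ball (0 : E d) (δ / β) ↔ y ∈ ball x δ := by
      rw [mem_ball_zero_iff, norm_smul, Real.norm_of_nonneg (by positivity), inv_mul_eq_div,
        div_lt_div_iff_of_pos_right hβ, mem_ball', dist_eq_norm]
    by_cases hy : y ∈ ball x δ
    · simp [kb, hy, hmem.2 hy]
    · simp [kb, hy, mt hmem.1 hy]
  rw [← integral_indicator measurableSet_ball, integral_congr_ae (.of_forall hscale),
    integral_sub_left_eq_self (kb _ β) volume x, integral_kb _ hβ,
    integral_indicator measurableSet_ball]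

lemma exists_forall_le_setIntegral_ball_kb (hK : ∀ x, 0 ≤ K x) (hKint : Integrable K) {δ m : ℝ}
    (hδ : 0 < δ) (hm : m < ∫ x, K x) :
    ∃ β₀ > 0, ∀ β, 0 < β → β < β₀ → ∀ x : E d, m ≤ ∫ y in ball x δ, kb K β (x - y) := by
  have hlim : Tendsto (fun n : ℕ => ∫ x in ball (0 : E d) n, K x) atTop (𝓝 (∫ x, K x)) := by
    rw [← setIntegral_univ, ← iUnion_ball_nat (0 : E d)]
    exact tendsto_setIntegral_of_monotone (fun _ => measurableSet_ball)
      (fun i j hij => ball_subset_ball (by exact_mod_cast hij)) hKint.integrableOn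
  obtain ⟨n, hmn, hn⟩ := ((hlim.eventually (lt_mem_nhds hm)).and (eventually_ge_atTop 1)).exists
  have hn0 : (0 : ℝ) < n := by exact_mod_cast hn
  refine ⟨δ / n, by positivity, fun β hβ hβn x => ?_⟩
  have hnβ : (n : ℝ) ≤ δ / β := by
    rw [lt_div_iff₀ hn0] at hβn
    rw [le_div_iff₀ hβ]
    linarith
  rw [setIntegral_ball_kb K hβ]
  exact hmn.le.trans (setIntegral_mono_set hKint.integrableOn (.of_forall hK)
    (.of_forall (ball_subset_ball hnβ)))

-- The point moved by `s / r` of the way from `x` to the centre stays `s`-deep inside the ball.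
lemma exists_ball_subset_ball_inter_ball {F : Type*} [NormedAddCommGroup F] [NormedSpace ℝ F]
    {x₀ x : F} {r s : ℝ} (hx : x ∈ ball x₀ r) (hs : 0 < s) (hsr : s ≤ r) :
    ∃ z, ball z s ⊆ ball x₀ r ∩ ball x (2 * s) := by
  have hr : 0 < r := hs.trans_le hsr
  have ht : s / r ≤ 1 := (div_le_one hr).2 hsr
  rw [mem_ball, dist_eq_norm] at hx
  refine ⟨x + (s / r) • (x₀ - x), fun y hy => ?_⟩
  rw [mem_ball, dist_eq_norm] at hy
  have hsr' : s / r * r = s := div_mul_cancel₀ s hr.ne'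
  constructor
  · have hsplit : y - x₀ = (y - (x + (s / r) • (x₀ - x))) + (1 - s / r) • (x - x₀) := by
      module
    rw [mem_ball, dist_eq_norm, hsplit]
    calc _ ≤ ‖y - (x + (s / r) • (x₀ - x))‖ + (1 - s / r) * ‖x - x₀‖ := by
          refine (norm_add_le _ _).trans_eq ?_
          rw [norm_smul, Real.norm_of_nonneg (by linarith)]
      _ < s + (1 - s / r) * r :=
          add_lt_add_of_lt_of_le hy (mul_le_mul_of_nonneg_left hx.le (by linarith))
      _ = r := by linarith
  · have hsplit : y - x = (y - (x + (s / r) • (x₀ - x))) + (s / r) • (x₀ - x) := by module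
    rw [mem_ball, dist_eq_norm, hsplit]
    calc _ ≤ ‖y - (x + (s / r) • (x₀ - x))‖ + s / r * ‖x - x₀‖ := by
          refine (norm_add_le _ _).trans_eq ?_
          rw [norm_smul, Real.norm_of_nonneg (by positivity), norm_sub_rev x₀ x]
      _ < s + s / r * r :=
          add_lt_add_of_lt_of_le hy (mul_le_mul_of_nonneg_left hx.le (by positivity))
      _ = 2 * s := by linarith

lemma exists_forall_le_setIntegral_ball_kb_of_mem (hd : 1 ≤ d) (hK : ∀ x, 0 ≤ K x)
    (hKcont : Continuous K) (hKint : Integrable K) (hK0 : 0 < K 0) :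
    ∃ κ > 0, ∃ ρ > 0, ∀ β r : ℝ, 0 < β → β * ρ ≤ r → ∀ x₀ x : E d, x ∈ ball x₀ r →
      κ ≤ ∫ y in ball x₀ r, kb K β (x - y) := by
  have : Nonempty (Fin d) := ⟨⟨0, hd⟩⟩
  obtain ⟨ρ, hρ, hKρ⟩ := Metric.continuousAt_iff.1 hKcont.continuousAt (K 0 / 2) (by linarith)
  have hKhalf : ∀ z : E d, ‖z‖ < ρ → K 0 / 2 ≤ K z := by
    intro z hz
    have h := (abs_lt.1 (hKρ (x := z) (by rwa [dist_zero_right]))).1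
    linarith
  set v := volume.real (ball (0 : E d) 1)
  have hv : 0 < v := ENNReal.toReal_pos (measure_ball_pos _ _ one_pos).ne' measure_ball_lt_top.ne
  refine ⟨K 0 / 2 * (ρ / 2) ^ d * v, by positivity, ρ, hρ, fun β r hβ hβr x₀ x hx => ?_⟩
  have hs : 0 < β * ρ / 2 := by positivity
  obtain ⟨z, hz⟩ := exists_ball_subset_ball_inter_ball hx hs (by linarith)
  have hnear : ∀ y ∈ ball z (β * ρ / 2), (β ^ d)⁻¹ * (K 0 / 2) ≤ kb K β (x - y) := by
    intro y hy
    have hyx := (hz hy).2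
    rw [mem_ball', dist_eq_norm] at hyx
    unfold kb
    gcongr
    apply hKhalf
    rw [norm_smul, Real.norm_of_nonneg (by positivity), inv_mul_lt_iff₀ hβ]
    linarith
  have hI : Integrable fun y => kb K β (x - y) := (integrable_kb hKint hβ).comp_sub_left x
  calc K 0 / 2 * (ρ / 2) ^ d * v = ∫ _ in ball z (β * ρ / 2), (β ^ d)⁻¹ * (K 0 / 2) := by
        rw [setIntegral_const, smul_eq_mul, Measure.real, Measure.addHaar_ball _ _ hs.le,
          ENNReal.toReal_mul, ENNReal.toReal_ofReal (by positivity), finrank_euclideanSpace,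
          Fintype.card_fin, ← Measure.real, mul_div_assoc β, mul_pow]
        field_simp
        rfl
    _ ≤ ∫ y in ball z (β * ρ / 2), kb K β (x - y) :=
        setIntegral_mono_on (integrableOn_const measure_ball_lt_top.ne) hI.integrableOn
          measurableSet_ball hnear
    _ ≤ ∫ y in ball x₀ r, kb K β (x - y) :=
        setIntegral_mono_set hI.integrableOn (.of_forall fun y => kb_nonneg hK hβ.le _)
          (.of_forall fun y hy => (hz hy).1)

end RescaledKernel

/-! ### Exponential averaging -/

section Averaging

/-- The weight `∏_{m < j ≤ n} (1 - γ_j)` that the recursion `u_{n+1} = (1 - γ_{n+1}) u_n + …`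
leaves on its value at time `m`. -/
noncomputable def decay (γ : ℕ → ℝ) (m n : ℕ) : ℝ := ∏ j ∈ Finset.Ioc m n, (1 - γ j)

/-- The solution of `u_{n+1} = (1 - γ_{n+1}) u_n + γ_{n+1} a_n` that vanishes at time `m`; note the
shift between the indices of `γ` and `a`. -/
noncomputable def avg (γ : ℕ → ℝ) (m : ℕ) (a : ℕ → ℝ) (n : ℕ) : ℝ :=
  ∑ k ∈ Finset.Ico m n, decay γ (k + 1) n * (γ (k + 1) * a k)

variable {γ a a' u : ℕ → ℝ} {l m n : ℕ}

@[simp]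
lemma decay_self (γ : ℕ → ℝ) (m : ℕ) : decay γ m m = 1 := by simp [decay]

lemma decay_succ (h : m ≤ n) : decay γ m (n + 1) = (1 - γ (n + 1)) * decay γ m n := by
  rw [decay, ← Finset.insert_Ioc_right_eq_Ioc_add_one h, Finset.prod_insert (by simp), decay]

lemma decay_mul_decay (hlm : l ≤ m) (hmn : m ≤ n) : decay γ l m * decay γ m n = decay γ l n :=
  Finset.prod_Ioc_consecutive _ hlm hmn

lemma decay_pos (hγ : ∀ j, m < j → γ j < 1) : 0 < decay γ m n :=
  Finset.prod_pos fun j hj => sub_pos.2 (hγ j (Finset.mem_Ioc.1 hj).1)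

lemma decay_le_one (hγ0 : ∀ j, m < j → 0 ≤ γ j) (hγ : ∀ j, m < j → γ j ≤ 1) : decay γ m n ≤ 1 :=
  Finset.prod_le_one (fun j hj => sub_nonneg.2 (hγ j (Finset.mem_Ioc.1 hj).1))
    fun j hj => sub_le_self _ (hγ0 j (Finset.mem_Ioc.1 hj).1)

@[simp]
lemma avg_self (γ : ℕ → ℝ) (m : ℕ) (a : ℕ → ℝ) : avg γ m a m = 0 := by simp [avg]

lemma avg_succ (h : m ≤ n) :
    avg γ m a (n + 1) = (1 - γ (n + 1)) * avg γ m a n + γ (n + 1) * a n := by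
  rw [avg, Finset.sum_Ico_succ_top h, avg, Finset.mul_sum, decay_self, one_mul]
  congr 1
  refine Finset.sum_congr rfl fun k hk => ?_
  rw [decay_succ (Finset.mem_Ico.1 hk).2, mul_assoc]

lemma avg_add (γ : ℕ → ℝ) (m : ℕ) (a a' : ℕ → ℝ) (n : ℕ) :
    avg γ m (fun k => a k + a' k) n = avg γ m a n + avg γ m a' n := by
  simp only [avg, mul_add, Finset.sum_add_distrib]

lemma avg_sub (γ : ℕ → ℝ) (m : ℕ) (a a' : ℕ → ℝ) (n : ℕ) :
    avg γ m (fun k => a k - a' k) n = avg γ m a n - avg γ m a' n := by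
  simp only [avg, mul_sub, Finset.sum_sub_distrib]

lemma avg_nonneg (hγ0 : ∀ j, m < j → 0 ≤ γ j) (hγ : ∀ j, m < j → γ j < 1)
    (ha : ∀ k, m ≤ k → 0 ≤ a k) : 0 ≤ avg γ m a n :=
  Finset.sum_nonneg fun k hk =>
    have hmk := (Finset.mem_Ico.1 hk).1
    mul_nonneg (decay_pos fun j hj => hγ j (by omega)).le
      (mul_nonneg (hγ0 _ (by omega)) (ha k hmk))

lemma decay_mul_add_avg_le (hγ : ∀ j, m < j → γ j ≤ 1) (hmn : m ≤ n)
    (hu : ∀ k, m ≤ k → k < n → (1 - γ (k + 1)) * u k + γ (k + 1) * a k ≤ u (k + 1)) :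
    decay γ m n * u m + avg γ m a n ≤ u n := by
  induction n, hmn using Nat.le_induction with
  | base => simp
  | succ n hn ih =>
    have hprev := mul_le_mul_of_nonneg_left (ih fun k h₁ h₂ => hu k h₁ (by omega))
      (sub_nonneg.2 (hγ (n + 1) (by omega)))
    have hlast := hu n hn n.lt_succ_self
    rw [decay_succ hn, avg_succ hn]
    linarith

lemma avg_const (hmn : m ≤ n) (A : ℝ) : avg γ m (fun _ => A) n = (1 - decay γ m n) * A := by
  induction n, hmn using Nat.le_induction with
  | base => simp
  | succ n hn ih => rw [avg_succ hn, ih, decay_succ hn]; ring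

lemma add_decay_mul_sub_le {A : ℝ} (hγ : ∀ j, m < j → γ j ≤ 1) (hmn : m ≤ n)
    (hu : ∀ k, m ≤ k → k < n → (1 - γ (k + 1)) * u k + γ (k + 1) * A ≤ u (k + 1)) :
    A + decay γ m n * (u m - A) ≤ u n := by
  have h := decay_mul_add_avg_le hγ hmn hu
  rw [avg_const hmn] at h
  linarith

lemma le_add_decay_mul_sub {A : ℝ} (hγ : ∀ j, m < j → γ j ≤ 1) (hmn : m ≤ n)
    (hu : ∀ k, m ≤ k → k < n → u (k + 1) ≤ (1 - γ (k + 1)) * u k + γ (k + 1) * A) :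
    u n ≤ A + decay γ m n * (u m - A) := by
  have h := add_decay_mul_sub_le (u := fun k => -u k) (A := -A) hγ hmn fun k h₁ h₂ => by
    linarith [hu k h₁ h₂]
  linarith

lemma eq_decay_mul (hmn : m ≤ n)
    (hu : ∀ k, m ≤ k → k < n → u (k + 1) = (1 - γ (k + 1)) * u k) : u n = decay γ m n * u m := by
  induction n, hmn using Nat.le_induction with
  | base => simp
  | succ n hn ih =>
    rw [hu n hn n.lt_succ_self, ih fun k h₁ h₂ => hu k h₁ (by omega), decay_succ hn, mul_assoc]

lemma avg_le_of_le {A : ℝ} (hA : 0 ≤ A) (hγ0 : ∀ j, m < j → 0 ≤ γ j) (hγ : ∀ j, m < j → γ j < 1)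
    (ha : ∀ k, m ≤ k → k < n → a k ≤ A) : avg γ m a n ≤ A := by
  rcases lt_or_ge n m with hmn | hmn
  · simpa [avg, Finset.Ico_eq_empty (not_lt.2 hmn.le)] using hA
  have h := le_add_decay_mul_sub (u := avg γ m a) (A := A) (fun j hj => (hγ j hj).le) hmn
    fun k hmk hkn => by
      rw [avg_succ hmk]
      exact add_le_add_right (mul_le_mul_of_nonneg_left (ha k hmk hkn) (hγ0 _ (by omega))) _
  rw [avg_self] at h
  linarith [mul_nonneg (decay_pos hγ (n := n)).le hA]

lemma avg_neg (γ : ℕ → ℝ) (m : ℕ) (a : ℕ → ℝ) (n : ℕ) :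
    avg γ m (fun k => -a k) n = -avg γ m a n := by
  simp only [avg, mul_neg, Finset.sum_neg_distrib]

lemma abs_avg_le {A : ℝ} (hA : 0 ≤ A) (hγ0 : ∀ j, m < j → 0 ≤ γ j) (hγ : ∀ j, m < j → γ j < 1)
    (ha : ∀ k, m ≤ k → k < n → |a k| ≤ A) : |avg γ m a n| ≤ A := by
  refine abs_le'.2 ⟨avg_le_of_le hA hγ0 hγ fun k h₁ h₂ => (le_abs_self _).trans (ha k h₁ h₂), ?_⟩
  rw [← avg_neg]
  exact avg_le_of_le hA hγ0 hγ fun k h₁ h₂ => (neg_le_abs _).trans (ha k h₁ h₂)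

end Averaging

/-! ### Standing assumptions -/

/-- `q` is a probability density with respect to `volume`. Integrability is automatic, since a
non-integrable function has Bochner integral `0`. -/
structure IsDensity {α : Type*} [MeasureSpace α] (q : α → ℝ) : Prop where
  nonneg : ∀ x, 0 ≤ q x
  integral_eq_one : ∫ x, q x = 1

lemma IsDensity.integrable {α : Type*} [MeasureSpace α] {q : α → ℝ} (hq : IsDensity q) :
    Integrable q := by
  by_contra h
  exact zero_ne_one ((integral_undef h).symm.trans hq.integral_eq_one)

lemma IsDensity.comp_sub_left {d : ℕ} {q : E d → ℝ} (hq : IsDensity q) (x : E d) :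
    IsDensity fun y => q (x - y) where
  nonneg _ := hq.nonneg _
  integral_eq_one := (integral_sub_left_eq_self q volume x).trans hq.integral_eq_one

lemma IsDensity.comp_sub_right {d : ℕ} {q : E d → ℝ} (hq : IsDensity q) (x : E d) :
    IsDensity fun y => q (y - x) where
  nonneg _ := hq.nonneg _
  integral_eq_one := (integral_sub_right_eq_self q x).trans hq.integral_eq_one

/-- Assumption A1 on the target `f` and the exploration density `q0`, with named constants; the
moment condition on `f` is not part of it. -/
structure Target {d : ℕ} (f q0 : E d → ℝ) where
  F : ℝ
  Q : ℝ
  c : ℝ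
  f_density : IsDensity f
  f_le : ∀ x, f x ≤ F
  f_continuous : Continuous f
  q0_density : IsDensity q0
  q0_le : ∀ x, q0 x ≤ Q
  q0_continuous : Continuous q0
  c_pos : 0 < c
  c_mul_f_le : ∀ x, c * f x ≤ q0 x

/-- Assumption A2 on the kernel `K`, with named constants: `Kmax` bounds `K`, and `r`, `CK` are
those of the decay condition `(1 + ‖x‖^(d+r)) K x ≤ CK`. -/
structure SmoothingKernel {d : ℕ} (K : E d → ℝ) where
  Kmax : ℝ
  L : ℝ≥0
  r : ℝ
  CK : ℝ
  K_density : IsDensity K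
  K_le : ∀ x, K x ≤ Kmax
  K_lipschitz : LipschitzWith L K
  K_zero_pos : 0 < K 0
  r_pos : 0 < r
  CK_pos : 0 < CK
  K_tail : ∀ x, (1 + ‖x‖ ^ ((d : ℝ) + r)) * K x ≤ CK

/-- The order of magnitude of `𝔼[w_{n+1}^{2η} K_b(x - X_{n+1})² | F_n]` up to a constant. -/
noncomputable def varFactor (η : ℝ) (d : ℕ) (lam b : ℕ → ℝ) (n : ℕ) : ℝ :=
  if 1 / 2 ≤ η then lam n ^ (-(2 * η - 1)) * (b n ^ d)⁻¹ else b n ^ (-(2 * (d : ℝ) * (1 - η)))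

/-- Assumption A3 on the step sizes, bandwidths and exploration weights, from a time `N` on after
which all of them are small. The two limits are the two regimes of Bernstein's inequality for the
noise, measured against `lam n ^ (1 - η)`: the range of the increments and their variance. -/
structure Schedule (d : ℕ) (η : ℝ) (γ b lam : ℕ → ℝ) where
  N : ℕ
  Cγ : ℝ
  γ_pos : ∀ n, 0 < γ n
  b_pos : ∀ n, 0 < b n
  lam_pos : ∀ n, 0 < lam n
  γ_antitone : Antitone γ
  b_antitone : Antitone b
  lam_antitone : Antitone lam
  tendsto_γ : Tendsto γ atTop (𝓝 0)
  tendsto_b : Tendsto b atTop (𝓝 0)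
  tendsto_lam : Tendsto lam atTop (𝓝 0)
  one_le_N : 1 ≤ N
  γ_le_half : ∀ n, N ≤ n → γ n ≤ 1 / 2
  lam_le_half : ∀ n, N ≤ n → lam n ≤ 1 / 2
  b_le_one : ∀ n, N ≤ n → b n ≤ 1
  γ_mul_one_sub_le : ∀ n, N ≤ n → γ n * (1 - γ (n + 1)) ≤ γ (n + 1)
  Cγ_pos : 0 < Cγ
  inv_le_Cγ_mul : ∀ n : ℕ, 1 ≤ n → (n : ℝ)⁻¹ ≤ Cγ * γ n
  tendsto_range : Tendsto (fun n : ℕ => γ n * Real.log n / (lam n * b n ^ d)) atTop (𝓝 0)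
  tendsto_variance : Tendsto (fun n : ℕ => (n : ℝ) * γ n ^ 2 * Real.log n * varFactor η d lam b n
    / lam n ^ (2 * (1 - η))) atTop (𝓝 0)

/-- The standing assumptions: dimension, exponent, and A1–A3. -/
structure Setting (d : ℕ) (η : ℝ) (f q0 K : E d → ℝ) (γ b lam : ℕ → ℝ) extends
    Target f q0, SmoothingKernel K, Schedule d η γ b lam where
  one_le_d : 1 ≤ d
  η_pos : 0 < η
  η_lt_one : η < 1

namespace Target

variable {d : ℕ} {f q0 : E d → ℝ}

lemma F_nonneg (T : Target f q0) : 0 ≤ T.F := (T.f_density.nonneg 0).trans (T.f_le 0)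

lemma Q_nonneg (T : Target f q0) : 0 ≤ T.Q := (T.q0_density.nonneg 0).trans (T.q0_le 0)

end Target

namespace SmoothingKernel

variable {d : ℕ} {K : E d → ℝ} {β : ℝ}

lemma K_continuous (S : SmoothingKernel K) : Continuous K := S.K_lipschitz.continuous

lemma Kmax_pos (S : SmoothingKernel K) : 0 < S.Kmax := S.K_zero_pos.trans_le (S.K_le 0)

lemma isDensity_kb (S : SmoothingKernel K) (hβ : 0 < β) : IsDensity (kb K β) where
  nonneg := kb_nonneg S.K_density.nonneg hβ.le
  integral_eq_one := (integral_kb K hβ).trans S.K_density.integral_eq_one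

lemma continuous_kb_sub (S : SmoothingKernel K) (β : ℝ) (x : E d) :
    Continuous fun y => kb K β (x - y) :=
  (continuous_kb S.K_continuous β).comp (continuous_sub_left x)

end SmoothingKernel

namespace Schedule

variable {d : ℕ} {η : ℝ} {γ b lam : ℕ → ℝ} {k m n : ℕ}

lemma γ_lt_one (S : Schedule d η γ b lam) (hn : S.N ≤ n) : γ n < 1 := by
  linarith [S.γ_le_half n hn]

lemma γ_lt_one_of_lt (S : Schedule d η γ b lam) (hm : S.N ≤ m) (j : ℕ) (hj : m < j) : γ j < 1 :=
  S.γ_lt_one (hm.trans hj.le)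

lemma decay_pos (S : Schedule d η γ b lam) (hm : S.N ≤ m) : 0 < decay γ m n :=
  Midas.decay_pos (S.γ_lt_one_of_lt hm)

lemma decay_le_one (S : Schedule d η γ b lam) (hm : S.N ≤ m) : decay γ m n ≤ 1 :=
  Midas.decay_le_one (fun j _ => (S.γ_pos j).le) fun j hj => (S.γ_lt_one_of_lt hm j hj).le

lemma decay_le_decay (S : Schedule d η γ b lam) (hm : S.N ≤ m) (hmn : m ≤ n) (hnk : n ≤ k) :
    decay γ m k ≤ decay γ m n := by
  rw [← decay_mul_decay hmn hnk]
  exact mul_le_of_le_one_right (S.decay_pos hm).le (S.decay_le_one (hm.trans hmn))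

lemma half_decay_le_decay_succ (S : Schedule d η γ b lam) (hm : S.N ≤ m) (hmn : m ≤ n) :
    decay γ m n / 2 ≤ decay γ m (n + 1) := by
  rw [decay_succ hmn]
  nlinarith [S.decay_pos hm (n := n), S.γ_le_half (n + 1) (by omega)]

lemma exists_decay_le_and_le_two_mul (S : Schedule d η γ b lam) (hm : S.N ≤ m) (hmk : m ≤ k)
    (hkn : k ≤ n) {t : ℝ} (ht : t < decay γ m k) (htn : decay γ m n ≤ t) :
    ∃ j, k ≤ j ∧ j ≤ n ∧ decay γ m j ≤ t ∧ t ≤ 2 * decay γ m j := by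
  induction n, hkn using Nat.le_induction with
  | base => exact absurd htn ht.not_ge
  | succ n hn ih =>
    rcases le_total (decay γ m n) t with h | h
    · obtain ⟨j, hkj, hjn, hj⟩ := ih h
      exact ⟨j, hkj, hjn.trans n.le_succ, hj⟩
    · exact ⟨n + 1, hn.trans n.le_succ, le_rfl, htn,
        by linarith [S.half_decay_le_decay_succ hm (hmk.trans hn)]⟩

lemma decay_le_div (S : Schedule d η γ b lam) (hm : S.N ≤ m) (hmn : m ≤ n) :
    decay γ m n ≤ γ n / γ m := by
  induction n, hmn using Nat.le_induction with
  | base => rw [decay_self, div_self (S.γ_pos m).ne']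
  | succ n hn ih =>
    have hγ : 0 ≤ 1 - γ (n + 1) := (sub_pos.2 (S.γ_lt_one (by omega))).le
    have := S.γ_pos m
    calc decay γ m (n + 1) = (1 - γ (n + 1)) * decay γ m n := decay_succ hn
      _ ≤ (1 - γ (n + 1)) * (γ n / γ m) := by gcongr
      _ = γ n * (1 - γ (n + 1)) / γ m := by ring
      _ ≤ γ (n + 1) / γ m := by gcongr; exact S.γ_mul_one_sub_le n (hm.trans hn)

lemma tendsto_decay (S : Schedule d η γ b lam) (hm : S.N ≤ m) :
    Tendsto (decay γ m) atTop (𝓝 0) := by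
  refine squeeze_zero' (.of_forall fun n => (S.decay_pos hm).le) ?_
    (by simpa using S.tendsto_γ.div_const (γ m))
  filter_upwards [eventually_ge_atTop m] with n hn using S.decay_le_div hm hn

lemma tendsto_γ_div_lam (S : Schedule d η γ b lam) :
    Tendsto (fun n => γ n / lam n) atTop (𝓝 0) := by
  refine squeeze_zero' (.of_forall fun n => (div_pos (S.γ_pos n) (S.lam_pos n)).le) ?_
    S.tendsto_range
  filter_upwards [eventually_ge_atTop S.N, eventually_ge_atTop 3] with n hn hn3
  have hγ := S.γ_pos n
  have hlam := S.lam_pos n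
  have := S.b_pos n
  have hbd : b n ^ d ≤ 1 := pow_le_one₀ (S.b_pos n).le (S.b_le_one n hn)
  have hlog : 1 ≤ Real.log n := by
    have hn3' : (3 : ℝ) ≤ n := by exact_mod_cast hn3
    rw [Real.le_log_iff_exp_le (by linarith)]
    linarith [Real.exp_one_lt_d9]
  exact div_le_div₀ (by positivity) (le_mul_of_one_le_right hγ.le hlog) (by positivity)
    (mul_le_of_le_one_right hlam.le hbd)

lemma eventually_decay_le_mul_lam (S : Schedule d η γ b lam) (hm : S.N ≤ m) {C : ℝ} (hC : 0 < C) :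
    ∀ᶠ n in atTop, decay γ m n ≤ C * lam n := by
  have hγm := S.γ_pos m
  filter_upwards [S.tendsto_γ_div_lam.eventually (gt_mem_nhds (mul_pos hC hγm)),
    eventually_ge_atTop m] with n hn hmn
  rw [div_lt_iff₀ (S.lam_pos n)] at hn
  refine (S.decay_le_div hm hmn).trans ?_
  rw [div_le_iff₀ hγm]
  linarith

lemma lam_rpow_anti (S : Schedule d η γ b lam) (hη : η < 1) (hmn : m ≤ n) :
    lam n ^ (1 - η) ≤ lam m ^ (1 - η) :=
  Real.rpow_le_rpow (S.lam_pos n).le (S.lam_antitone hmn) (by linarith)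

lemma lam_le_lam_rpow (S : Schedule d η γ b lam) (hη : 0 < η) (hn : S.N ≤ n) :
    lam n ≤ lam n ^ (1 - η) := by
  have hlam : lam n ≤ 1 := by linarith [S.lam_le_half n hn]
  calc lam n = lam n ^ (1 : ℝ) := (Real.rpow_one _).symm
    _ ≤ lam n ^ (1 - η) :=
        Real.rpow_le_rpow_of_exponent_ge (S.lam_pos n) hlam (by linarith)

lemma lam_rpow_le_one (S : Schedule d η γ b lam) (hη : η ≤ 1) (hn : S.N ≤ n) :
    lam n ^ (1 - η) ≤ 1 :=
  Real.rpow_le_one (S.lam_pos n).le (by linarith [S.lam_le_half n hn]) (by linarith)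

lemma eventually_decay_mul_le (S : Schedule d η γ b lam) (hη : 0 < η) (hm : S.N ≤ m) (C : ℝ)
    {τ : ℝ} (hτ : 0 < τ) : ∀ᶠ n in atTop, decay γ m n * C ≤ τ * lam n ^ (1 - η) := by
  filter_upwards [S.eventually_decay_le_mul_lam hm (C := τ / (|C| + 1)) (by positivity),
    eventually_ge_atTop S.N] with n hn hnN
  have hlam := S.lam_pos n
  calc decay γ m n * C ≤ decay γ m n * |C| :=
        mul_le_mul_of_nonneg_left (le_abs_self C) (S.decay_pos hm).le
    _ ≤ τ / (|C| + 1) * lam n * |C| := by gcongr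
    _ = τ * lam n * (|C| / (|C| + 1)) := by ring
    _ ≤ τ * lam n * 1 := by gcongr; exact (div_le_one (by positivity)).2 (by linarith)
    _ ≤ τ * lam n ^ (1 - η) := by rw [mul_one]; gcongr; exact S.lam_le_lam_rpow hη hnN

lemma mul_lam_rpow_mul_le_avg (S : Schedule d η γ b lam) (hη : η < 1) (hm : S.N ≤ m) (hmn : m ≤ n)
    {a : ℕ → ℝ} {A : ℝ} (hA : 0 ≤ A) (ha : ∀ k, m ≤ k → k < n → A * lam k ^ (1 - η) ≤ a k) :
    A * lam n ^ (1 - η) * (1 - decay γ m n) ≤ avg γ m a n := by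
  have h := add_decay_mul_sub_le (u := avg γ m a) (A := A * lam n ^ (1 - η))
    (fun j hj => (S.γ_lt_one_of_lt hm j hj).le) hmn fun k hmk hkn => by
      rw [avg_succ hmk]
      have hγ := S.γ_pos (k + 1)
      have hak : A * lam n ^ (1 - η) ≤ a k :=
        (mul_le_mul_of_nonneg_left (S.lam_rpow_anti hη hkn.le) hA).trans (ha k hmk hkn)
      gcongr
  rw [avg_self] at h
  linarith

lemma eventually_le_avg (S : Schedule d η γ b lam) {ι : Type*} {s : Set ι} {a : ι → ℕ → ℝ}
    {A A' : ℝ} (hA : A' < A) (hbdd : ∀ n, ∃ C, ∀ i ∈ s, |avg γ S.N (a i) n| ≤ C)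
    (ha : ∀ᶠ n in atTop, ∀ i ∈ s, A ≤ a i n) :
    ∀ᶠ n in atTop, ∀ i ∈ s, A' ≤ avg γ S.N (a i) n := by
  obtain ⟨m, hm⟩ := eventually_atTop.1 (ha.and (eventually_ge_atTop S.N))
  have hNm := (hm m le_rfl).2
  obtain ⟨C, hC⟩ := hbdd m
  have hstart : Tendsto (fun n => decay γ m n * (-C - A)) atTop (𝓝 0) := by
    simpa using (S.tendsto_decay hNm).mul_const (-C - A)
  filter_upwards [hstart.eventually_const_le (sub_neg.2 hA), eventually_ge_atTop m]
    with n hn hmn i hi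
  have h := add_decay_mul_sub_le (u := avg γ S.N (a i)) (A := A)
    (fun j hj => (S.γ_lt_one_of_lt hNm j hj).le) hmn fun k hk _ => by
      rw [avg_succ (hNm.trans hk)]
      exact add_le_add_right (mul_le_mul_of_nonneg_left ((hm k hk).1 i hi) (S.γ_pos _).le) _
  have hdecay := mul_le_mul_of_nonneg_left (sub_le_sub_right (abs_le.1 (hC i hi)).1 A)
    (S.decay_pos hNm (n := n)).le
  linarith

lemma eventually_avg_le (S : Schedule d η γ b lam) {ι : Type*} {s : Set ι} {a : ι → ℕ → ℝ}
    {A A' : ℝ} (hA : A < A') (hbdd : ∀ n, ∃ C, ∀ i ∈ s, |avg γ S.N (a i) n| ≤ C)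
    (ha : ∀ᶠ n in atTop, ∀ i ∈ s, a i n ≤ A) :
    ∀ᶠ n in atTop, ∀ i ∈ s, avg γ S.N (a i) n ≤ A' := by
  have h := S.eventually_le_avg (s := s) (a := fun i n => -a i n) (neg_lt_neg hA)
    (by simpa only [avg_neg, abs_neg] using hbdd)
    (ha.mono fun n hn i hi => neg_le_neg (hn i hi))
  exact h.mono fun n hn i hi => by simpa only [avg_neg, neg_le_neg_iff] using hn i hi

end Schedule

/-! ### Truncated weights and their drift -/

section TruncatedWeight

variable {α : Type*} {f q : α → ℝ} {η T : ℝ} {y : α}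

/-- The importance weight `f / q`, truncated at level `T`. -/
noncomputable def truncWeight (f q : α → ℝ) (T : ℝ) (y : α) : ℝ := min (f y / q y) T

/-- The conditional expectation of `truncWeight ^ η * k` when the sample has density `q`. -/
noncomputable def drift [MeasureSpace α] (η : ℝ) (f q : α → ℝ) (T : ℝ) (k : α → ℝ) : ℝ :=
  ∫ y, truncWeight f q T y ^ η * k y * q y

lemma truncWeight_nonneg (hf : 0 ≤ f y) (hq : 0 ≤ q y) (hT : 0 ≤ T) : 0 ≤ truncWeight f q T y :=
  le_min (div_nonneg hf hq) hT

lemma truncWeight_rpow_nonneg (hf : 0 ≤ f y) (hq : 0 ≤ q y) (hT : 0 ≤ T) :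
    0 ≤ truncWeight f q T y ^ η :=
  Real.rpow_nonneg (truncWeight_nonneg hf hq hT) _

lemma truncWeight_rpow_le (hη : 0 ≤ η) (hf : 0 ≤ f y) (hq : 0 ≤ q y) (hT : 0 ≤ T) :
    truncWeight f q T y ^ η ≤ T ^ η :=
  Real.rpow_le_rpow (truncWeight_nonneg hf hq hT) (min_le_right _ _) hη

lemma truncWeight_rpow_le_div_rpow (hη : 0 ≤ η) (hf : 0 ≤ f y) (hq : 0 ≤ q y) (hT : 0 ≤ T) :
    truncWeight f q T y ^ η ≤ (f y / q y) ^ η :=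
  Real.rpow_le_rpow (truncWeight_nonneg hf hq hT) (min_le_left _ _) hη

lemma truncWeight_of_le (hq : 0 ≤ q y) (hT : 0 ≤ T) (h : f y ≤ T * q y) :
    truncWeight f q T y = f y / q y :=
  min_eq_left (div_le_of_le_mul₀ hq hT h)

lemma div_rpow_mul_self {s t : ℝ} (hη : η < 1) (hs : 0 ≤ s) (ht : 0 ≤ t) :
    (s / t) ^ η * t = s ^ η * t ^ (1 - η) := by
  rcases ht.eq_or_lt with rfl | ht
  · rw [Real.zero_rpow (by linarith), mul_zero, mul_zero]
  · rw [Real.div_rpow hs ht.le, Real.rpow_sub ht, Real.rpow_one]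
    field_simp

lemma truncWeight_rpow_mul_le (hη : 0 ≤ η) (hη1 : η < 1) (hf : 0 ≤ f y) (hq : 0 ≤ q y)
    (hT : 0 ≤ T) : truncWeight f q T y ^ η * q y ≤ f y ^ η * q y ^ (1 - η) := by
  rw [← div_rpow_mul_self hη1 hf hq]
  exact mul_le_mul_of_nonneg_right (truncWeight_rpow_le_div_rpow hη hf hq hT) hq

lemma truncWeight_rpow_mul_le_convex (hη : 0 ≤ η) (hη1 : η < 1) (hf : 0 ≤ f y) (hq : 0 ≤ q y)
    (hT : 0 ≤ T) : truncWeight f q T y ^ η * q y ≤ η * f y + (1 - η) * q y :=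
  (truncWeight_rpow_mul_le hη hη1 hf hq hT).trans
    (Real.geom_mean_le_arith_mean2_weighted hη (sub_nonneg.2 hη1.le) hf hq (by ring))

lemma rpow_mul_rpow_le_truncWeight_rpow_mul (hη : 0 ≤ η) (hη1 : η < 1) (hT : 0 ≤ T)
    (hfq : f y ≤ T * q y) {a l : ℝ} (ha : 0 ≤ a) (haf : a ≤ f y) (hl : 0 ≤ l) (hlq : l ≤ q y) :
    a ^ η * l ^ (1 - η) ≤ truncWeight f q T y ^ η * q y := by
  have hf := ha.trans haf
  have hq := hl.trans hlq
  rw [truncWeight_of_le hq hT hfq, div_rpow_mul_self hη1 hf hq]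
  exact mul_le_mul (Real.rpow_le_rpow ha haf hη) (Real.rpow_le_rpow hl hlq (by linarith))
    (by positivity) (by positivity)

end TruncatedWeight

/-- A nonnegative function `k` with the size and the second moment under `f` of a kernel of
bandwidth `β`, up to the constant `C`. -/
structure IsTestFunction {d : ℕ} (f : E d → ℝ) (C β : ℝ) (k : E d → ℝ) : Prop where
  measurable : Measurable k
  nonneg : ∀ y, 0 ≤ k y
  le : ∀ y, k y ≤ C / β ^ d
  integral_mul_sq_le : ∫ y, f y * k y ^ 2 ≤ C / β ^ d

section Drift

variable {d : ℕ} {η : ℝ} {f q0 K : E d → ℝ} {γ b lam : ℕ → ℝ} {q k : E d → ℝ} {T : ℝ}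

lemma aestronglyMeasurable_truncWeight_rpow_mul (hf : Continuous f) (hq : Integrable q)
    (hk : AEStronglyMeasurable k) : AEStronglyMeasurable fun y => truncWeight f q T y ^ η * k y :=
  ((((hf.measurable.aemeasurable.div hq.aestronglyMeasurable.aemeasurable).min
    aemeasurable_const).pow_const η).mul hk.aemeasurable).aestronglyMeasurable

namespace Setting

lemma integrable_truncWeight_rpow_mul_mul (P : Setting d η f q0 K γ b lam) (hq : IsDensity q)
    (hT : 0 ≤ T) {C : ℝ} (hk : AEStronglyMeasurable k) (hkC : ∀ y, |k y| ≤ C) :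
    Integrable fun y => truncWeight f q T y ^ η * k y * q y := by
  refine (hq.integrable.const_mul (T ^ η * C)).mono'
    ((aestronglyMeasurable_truncWeight_rpow_mul P.f_continuous hq.integrable hk).mul
      hq.integrable.aestronglyMeasurable)
    (.of_forall fun y => ?_)
  have hfy := P.f_density.nonneg y
  have hqy := hq.nonneg y
  rw [Real.norm_eq_abs, abs_mul, abs_mul, abs_of_nonneg hqy,
    abs_of_nonneg (truncWeight_rpow_nonneg hfy hqy hT)]
  exact mul_le_mul_of_nonneg_right (mul_le_mul (truncWeight_rpow_le P.η_pos.le hfy hqy hT) (hkC y)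
    (abs_nonneg _) (by positivity)) hqy

lemma integrable_truncWeight_rpow_mul_kb_mul (P : Setting d η f q0 K γ b lam) (hq : IsDensity q)
    (hT : 0 ≤ T) {β : ℝ} (hβ : 0 < β) (x : E d) :
    Integrable fun y => truncWeight f q T y ^ η * kb K β (x - y) * q y :=
  P.integrable_truncWeight_rpow_mul_mul hq hT (P.continuous_kb_sub β x).aestronglyMeasurable
    fun y => abs_kb_le P.K_density.nonneg P.K_le hβ.le (x - y)

lemma integrable_truncWeight_rpow_mul (P : Setting d η f q0 K γ b lam) (hq : IsDensity q)
    (hT : 0 ≤ T) : Integrable fun y => truncWeight f q T y ^ η * q y := by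
  simpa using P.integrable_truncWeight_rpow_mul_mul hq hT (k := 1) (C := 1)
    aestronglyMeasurable_const (by simp)

lemma drift_nonneg (P : Setting d η f q0 K γ b lam) (hq : ∀ y, 0 ≤ q y) (hT : 0 ≤ T)
    (hk : ∀ y, 0 ≤ k y) : 0 ≤ drift η f q T k :=
  integral_nonneg fun y => mul_nonneg
    (mul_nonneg (truncWeight_rpow_nonneg (P.f_density.nonneg y) (hq y) hT) (hk y)) (hq y)

lemma isDensity_convex (P : Setting d η f q0 K γ b lam) (hq : IsDensity q) :
    IsDensity fun y => η * f y + (1 - η) * q y where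
  nonneg y := add_nonneg (mul_nonneg P.η_pos.le (P.f_density.nonneg y))
    (mul_nonneg (sub_nonneg.2 P.η_lt_one.le) (hq.nonneg y))
  integral_eq_one := by
    rw [integral_add (P.f_density.integrable.const_mul _) (hq.integrable.const_mul _),
      integral_const_mul, integral_const_mul, P.f_density.integral_eq_one, hq.integral_eq_one]
    ring

lemma drift_one_le_one (P : Setting d η f q0 K γ b lam) (hq : IsDensity q) (hT : 0 ≤ T) :
    drift η f q T 1 ≤ 1 := by
  simp only [drift, Pi.one_apply, mul_one]
  exact (integral_mono (P.integrable_truncWeight_rpow_mul hq hT) (P.isDensity_convex hq).integrable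
    fun y => truncWeight_rpow_mul_le_convex P.η_pos.le P.η_lt_one (P.f_density.nonneg y)
      (hq.nonneg y) hT).trans_eq (P.isDensity_convex hq).integral_eq_one

-- Hölder bounds the part of the integral over the ball; away from it the kernel is uniformly small
-- and Young's inequality gives the weight total mass at most `1`.
lemma drift_kb_le (P : Setting d η f q0 K γ b lam) (hq : IsDensity q) (hT : 0 ≤ T) {β δ : ℝ}
    (hβ : 0 < β) (hδ : 0 < δ) (x : E d) {p φ : ℝ} (hp : ∀ y ∈ ball x δ, q y ≤ p)
    (hφ : ∀ y ∈ ball x δ, f y ≤ φ) :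
    drift η f q T (fun y => kb K β (x - y)) ≤
      φ ^ η * p ^ (1 - η) + P.CK * β ^ P.r / δ ^ ((d : ℝ) + P.r) := by
  set t := P.CK * β ^ P.r / δ ^ ((d : ℝ) + P.r)
  have ht : 0 ≤ t := div_nonneg (mul_nonneg P.CK_pos.le (by positivity)) (by positivity)
  have hη := P.η_pos
  have hη1 : 0 ≤ 1 - η := sub_nonneg.2 P.η_lt_one.le
  have hp0 : 0 ≤ p := (hq.nonneg x).trans (hp x (mem_ball_self hδ))
  have hφ0 : 0 ≤ φ := (P.f_density.nonneg x).trans (hφ x (mem_ball_self hδ))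
  have hkb := (P.isDensity_kb hβ).comp_sub_left x
  have hmix := P.isDensity_convex hq
  have hbound : ∀ y, truncWeight f q T y ^ η * kb K β (x - y) * q y
      ≤ φ ^ η * p ^ (1 - η) * kb K β (x - y) + t * (η * f y + (1 - η) * q y) := by
    intro y
    have hf := P.f_density.nonneg y
    have hqy := hq.nonneg y
    have hk := hkb.nonneg y
    rw [mul_right_comm]
    by_cases hy : y ∈ ball x δ
    · refine le_add_of_le_of_nonneg (mul_le_mul_of_nonneg_right ?_ hk)
        (mul_nonneg ht (hmix.nonneg y))
      refine (truncWeight_rpow_mul_le hη.le P.η_lt_one hf hqy hT).trans ?_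
      have := hp y hy
      have := hφ y hy
      gcongr
    · rw [mem_ball', not_lt, dist_eq_norm] at hy
      refine le_add_of_nonneg_of_le (by positivity) ((mul_le_mul
        (truncWeight_rpow_mul_le_convex hη.le P.η_lt_one hf hqy hT)
        (kb_le_of_le_norm P.r_pos.le P.K_density.nonneg P.K_tail hβ hδ hy)
        hk (hmix.nonneg y)).trans_eq (mul_comm _ _))
  refine (integral_mono (P.integrable_truncWeight_rpow_mul_kb_mul hq hT hβ x)
    ((hkb.integrable.const_mul _).add (hmix.integrable.const_mul _)) hbound).trans_eq ?_
  simp only [Pi.add_apply]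
  rw [integral_add (hkb.integrable.const_mul _) (hmix.integrable.const_mul _), integral_const_mul,
    integral_const_mul, hkb.integral_eq_one, hmix.integral_eq_one, mul_one, mul_one]

lemma mul_setIntegral_kb_le_drift (P : Setting d η f q0 K γ b lam) (hq : IsDensity q)
    (hT : 0 ≤ T) {β : ℝ} (hβ : 0 < β) (x : E d) {B : Set (E d)} (hB : MeasurableSet B) {A : ℝ}
    (hA : ∀ y ∈ B, A ≤ truncWeight f q T y ^ η * q y) :
    A * ∫ y in B, kb K β (x - y) ≤ drift η f q T fun y => kb K β (x - y) := by
  have hkb := (P.isDensity_kb hβ).comp_sub_left x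
  have h_integrable := P.integrable_truncWeight_rpow_mul_kb_mul hq hT hβ x
  calc A * ∫ y in B, kb K β (x - y) = ∫ y in B, A * kb K β (x - y) :=
        (integral_const_mul _ _).symm
    _ ≤ ∫ y in B, truncWeight f q T y ^ η * kb K β (x - y) * q y :=
        setIntegral_mono_on (hkb.integrable.const_mul A).integrableOn h_integrable.integrableOn hB
          fun y hy => by
            rw [mul_right_comm]
            exact mul_le_mul_of_nonneg_right (hA y hy) (hkb.nonneg y)
    _ ≤ drift η f q T fun y => kb K β (x - y) :=
        setIntegral_le_integral h_integrable (.of_forall fun y => mul_nonneg (mul_nonneg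
          (truncWeight_rpow_nonneg (P.f_density.nonneg y) (hq.nonneg y) hT) (hkb.nonneg y))
          (hq.nonneg y))

lemma rpow_le_drift_one (P : Setting d η f q0 K γ b lam) (hq : IsDensity q) (hT : 0 ≤ T) {l : ℝ}
    (hl : 0 ≤ l) (hlq : ∀ y, l * f y ≤ q y) (hlT : 1 ≤ T * l) :
    l ^ (1 - η) ≤ drift η f q T 1 := by
  simp only [drift, Pi.one_apply, mul_one]
  calc l ^ (1 - η) = ∫ y, l ^ (1 - η) * f y := by
        rw [integral_const_mul, P.f_density.integral_eq_one, mul_one]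
    _ ≤ ∫ y, truncWeight f q T y ^ η * q y :=
        integral_mono (P.f_density.integrable.const_mul _)
          (P.integrable_truncWeight_rpow_mul hq hT) fun y => ?_
  have hf := P.f_density.nonneg y
  have hfq : f y ≤ T * q y :=
    calc f y ≤ T * l * f y := le_mul_of_one_le_left hf hlT
      _ = T * (l * f y) := mul_assoc _ _ _
      _ ≤ T * q y := mul_le_mul_of_nonneg_left (hlq y) hT
  calc l ^ (1 - η) * f y = f y ^ η * (l * f y) ^ (1 - η) := by
        rw [Real.mul_rpow hl hf, mul_left_comm, ← Real.rpow_add' hf (by norm_num),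
          add_sub_cancel, Real.rpow_one]
    _ ≤ truncWeight f q T y ^ η * q y :=
        rpow_mul_rpow_le_truncWeight_rpow_mul P.η_pos.le P.η_lt_one hT hfq hf le_rfl
          (mul_nonneg hl hf) (hlq y)

section TestFunction

variable {C β : ℝ}

/-- A constant `C` for which the kernels are test functions. -/
noncomputable def kernelBound (P : Setting d η f q0 K γ b lam) : ℝ := P.Kmax * (1 + P.F)

lemma kernelBound_pos (P : Setting d η f q0 K γ b lam) : 0 < P.kernelBound :=
  mul_pos P.Kmax_pos (add_pos_of_pos_of_nonneg one_pos P.F_nonneg)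

lemma isTestFunction_one (P : Setting d η f q0 K γ b lam) (hβ : 0 < β) (hβ1 : β ≤ 1) :
    IsTestFunction f 1 β 1 := by
  have h : 1 ≤ 1 / β ^ d := one_le_one_div (by positivity) (pow_le_one₀ hβ.le hβ1)
  refine ⟨measurable_const, fun _ => zero_le_one, fun _ => h, ?_⟩
  simpa only [Pi.one_apply, one_pow, mul_one, P.f_density.integral_eq_one] using h

lemma isTestFunction_kb (P : Setting d η f q0 K γ b lam) (hβ : 0 < β) (x : E d) :
    IsTestFunction f P.kernelBound β fun y => kb K β (x - y) where
  measurable := (P.continuous_kb_sub β x).measurable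
  nonneg y := kb_nonneg P.K_density.nonneg hβ.le _
  le y := (kb_le P.K_le hβ.le _).trans (by
    gcongr
    exact le_mul_of_one_le_right P.Kmax_pos.le (le_add_of_nonneg_right P.F_nonneg))
  integral_mul_sq_le := by
    have hF := P.F_nonneg
    have hKmax := P.Kmax_pos
    have hkb := (P.isDensity_kb hβ).comp_sub_left x
    calc ∫ y, f y * kb K β (x - y) ^ 2
        ≤ ∫ y, P.F * (P.Kmax / β ^ d) * kb K β (x - y) := by
          refine integral_mono_of_nonneg (.of_forall fun y =>
            mul_nonneg (P.f_density.nonneg y) (sq_nonneg _)) (hkb.integrable.const_mul _)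
            (.of_forall fun y => ?_)
          have hk := hkb.nonneg y
          dsimp only
          rw [sq, ← mul_assoc]
          gcongr
          exacts [P.f_le y, kb_le P.K_le hβ.le _]
      _ = P.F * P.Kmax / β ^ d := by
          rw [integral_const_mul, hkb.integral_eq_one, mul_one, mul_div_assoc]
      _ ≤ P.kernelBound / β ^ d :=
          div_le_div_of_nonneg_right (by unfold kernelBound; linarith) (by positivity)

lemma truncWeight_rpow_mul_nonneg (P : Setting d η f q0 K γ b lam) (hq : IsDensity q)
    (hT : 0 ≤ T) (hk : IsTestFunction f C β k) (y : E d) : 0 ≤ truncWeight f q T y ^ η * k y :=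
  mul_nonneg (truncWeight_rpow_nonneg (P.f_density.nonneg y) (hq.nonneg y) hT) (hk.nonneg y)

lemma truncWeight_rpow_mul_le (P : Setting d η f q0 K γ b lam) (hq : IsDensity q)
    (hT : 0 ≤ T) (hk : IsTestFunction f C β k) (y : E d) :
    truncWeight f q T y ^ η * k y ≤ T ^ η * (C / β ^ d) :=
  mul_le_mul (truncWeight_rpow_le P.η_pos.le (P.f_density.nonneg y) (hq.nonneg y) hT) (hk.le y)
    (hk.nonneg y) (by positivity)

lemma integrable_truncWeight_rpow_mul_testFunction_mul (P : Setting d η f q0 K γ b lam)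
    (hq : IsDensity q) (hT : 0 ≤ T) (hk : IsTestFunction f C β k) :
    Integrable fun y => truncWeight f q T y ^ η * k y * q y :=
  P.integrable_truncWeight_rpow_mul_mul hq hT hk.measurable.aestronglyMeasurable fun y => by
    rw [abs_of_nonneg (hk.nonneg y)]
    exact hk.le y

lemma drift_le (P : Setting d η f q0 K γ b lam) (hq : IsDensity q) (hT : 0 ≤ T)
    (hk : IsTestFunction f C β k) : drift η f q T k ≤ T ^ η * (C / β ^ d) :=
  calc drift η f q T k ≤ ∫ y, T ^ η * (C / β ^ d) * q y :=
        integral_mono (P.integrable_truncWeight_rpow_mul_testFunction_mul hq hT hk)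
          (hq.integrable.const_mul _) fun y => mul_le_mul_of_nonneg_right
            (P.truncWeight_rpow_mul_le hq hT hk y) (hq.nonneg y)
    _ = T ^ η * (C / β ^ d) := by rw [integral_const_mul, hq.integral_eq_one, mul_one]

end TestFunction

end Setting

end Drift

/-! ### Trajectories -/

section Trajectory

variable {d : ℕ} {η : ℝ} {f q0 K : E d → ℝ} {γ b lam : ℕ → ℝ}

namespace Setting

/-- The level at which the weight `w_{n+1}` is truncated. The truncation is inactive wherever
`q_n ≥ lam n / 2 * q0`. -/
noncomputable def clip (P : Setting d η f q0 K γ b lam) (n : ℕ) : ℝ := 2 / (P.c * lam (n + 1))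

/-- A bound on the contribution of the samples up to time `n` to `g_n`, for truncated weights and
kernels of constant `C`. At `n + 1` it is `clip n ^ η * (C / b (n + 1) ^ d)`. -/
noncomputable def rangeBound (P : Setting d η f q0 K γ b lam) (C : ℝ) (n : ℕ) : ℝ :=
  (2 / (P.c * lam n)) ^ η * (C / b n ^ d)

/-- The predictable part of the contribution of the samples after time `N` to `g_n`, for truncated
weights. The test functions `k` are the translated kernels for `g_n x` and `1` for the mass. -/
noncomputable def avgDrift (P : Setting d η f q0 K γ b lam) (q k : ℕ → E d → ℝ) (n : ℕ) : ℝ :=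
  avg γ P.N (fun j => drift η f (q j) (P.clip j) (k j)) n

/-- The martingale part of the contribution of the samples after time `N` to `g_n`, for truncated
weights. -/
noncomputable def avgNoise (P : Setting d η f q0 K γ b lam) (q : ℕ → E d → ℝ) (X : ℕ → E d)
    (k : ℕ → E d → ℝ) (n : ℕ) : ℝ :=
  avg γ P.N (fun j => truncWeight f (q j) (P.clip j) (X (j + 1)) ^ η * k j (X (j + 1))
    - drift η f (q j) (P.clip j) (k j)) n

end Setting

/-- The kernels `y ↦ K_{b_{j+1}}(x - y)` through which the sample `X_{j+1}` enters `g_{j+1} x`. -/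
noncomputable def kernelAt (K : E d → ℝ) (b : ℕ → ℝ) (x : E d) (j : ℕ) (y : E d) : ℝ :=
  kb K (b (j + 1)) (x - y)

/-- The properties that almost every realisation of the algorithm has after time `N`: the recursions
for `g` and `q`, uniform smallness of the noise, and `nonneg_of_overlap`. The latter holds because
`γ 1` may exceed `1`, so that `g` can become negative; but then some later `q_n` would be negative
at a point, unless a sample with positive weight is drawn first. -/
structure Trajectory (P : Setting d η f q0 K γ b lam) (X : ℕ → E d) (g q : ℕ → E d → ℝ) :
    Prop where
  q_density : ∀ n, P.N ≤ n → IsDensity (q n)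
  g_succ : ∀ n, P.N ≤ n → ∀ x, g (n + 1) x = (1 - γ (n + 1)) * g n x
    + γ (n + 1) * (f (X (n + 1)) / q n (X (n + 1))) ^ η * kb K (b (n + 1)) (x - X (n + 1))
  q_eq : ∀ n, P.N ≤ n → ∀ x, q n x = (1 - lam n) * (g n x / ∫ y, g n y) + lam n * q0 x
  g_bounded : ∀ n, ∃ C, ∀ x, |g n x| ≤ C
  g_integrable : ∀ n, Integrable (g n)
  g_continuous : ∀ n, Continuous (g n)
  noise_kernelAt : ∀ τ > 0, ∀ᶠ n : ℕ in atTop, ∀ x : E d, ‖x‖ ≤ n →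
    |P.avgNoise q X (kernelAt K b x) n| ≤ τ * lam n ^ (1 - η)
  noise_one : ∀ τ > 0, ∀ᶠ n : ℕ in atTop, |P.avgNoise q X 1 n| ≤ τ * lam n ^ (1 - η)
  nonneg_of_overlap : ∀ n, P.N ≤ n → 0 < ∫ y, g n y → 0 < volume {x | 0 < g n x ∧ f x = 0} →
    ∀ x, 0 ≤ g n x

variable {P : Setting d η f q0 K γ b lam} {X : ℕ → E d} {g q : ℕ → E d → ℝ} {m n : ℕ}

namespace Setting

lemma clip_pos (P : Setting d η f q0 K γ b lam) (n : ℕ) : 0 < P.clip n :=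
  div_pos two_pos (mul_pos P.c_pos (P.lam_pos _))

lemma two_le_clip_mul (P : Setting d η f q0 K γ b lam) (n : ℕ) :
    2 ≤ P.clip n * (P.c * lam n) := by
  have hc := P.c_pos
  rw [clip, div_mul_eq_mul_div, le_div_iff₀ (mul_pos hc (P.lam_pos _))]
  gcongr
  exact P.lam_antitone n.le_succ

lemma f_le_clip_mul (P : Setting d η f q0 K γ b lam) {y : E d} {p : ℝ}
    (h : lam n / 2 * q0 y ≤ p) : f y ≤ P.clip n * p := by
  have hlam := P.lam_pos n
  have hcf : lam n / 2 * (P.c * f y) ≤ p :=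
    (mul_le_mul_of_nonneg_left (P.c_mul_f_le y) (by positivity)).trans h
  calc f y ≤ P.clip n * (P.c * lam n) / 2 * f y :=
        le_mul_of_one_le_left (P.f_density.nonneg y) (by linarith [P.two_le_clip_mul n])
    _ = P.clip n * (lam n / 2 * (P.c * f y)) := by ring
    _ ≤ P.clip n * p := mul_le_mul_of_nonneg_left hcf (P.clip_pos n).le

lemma kernelAt_nonneg (P : Setting d η f q0 K γ b lam) (x : E d) (j : ℕ) (y : E d) :
    0 ≤ kernelAt K b x j y :=
  kb_nonneg P.K_density.nonneg (P.b_pos _).le _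

lemma isTestFunction_kernelAt (P : Setting d η f q0 K γ b lam) (x : E d) (j : ℕ)
    (_ : P.N ≤ j) : IsTestFunction f P.kernelBound (b (j + 1)) (kernelAt K b x j) :=
  P.isTestFunction_kb (P.b_pos _) x

lemma rangeBound_nonneg (P : Setting d η f q0 K γ b lam) {C : ℝ} (hC : 0 ≤ C) (n : ℕ) :
    0 ≤ P.rangeBound C n := by
  have hc := P.c_pos
  have hlam := P.lam_pos n
  have hb := P.b_pos n
  unfold rangeBound
  positivity

lemma rangeBound_mono (P : Setting d η f q0 K γ b lam) {C : ℝ} (hC : 0 ≤ C) :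
    Monotone (P.rangeBound C) := by
  intro m n hmn
  have hc := P.c_pos
  have hlam := P.lam_pos n
  have hb := P.b_pos n
  have hlam_le := P.lam_antitone hmn
  have hb_le := P.b_antitone hmn
  have hη := P.η_pos.le
  have hlam₀ := P.lam_pos m
  have hb₀ := P.b_pos m
  unfold rangeBound
  gcongr

lemma avgDrift_add_avgNoise (P : Setting d η f q0 K γ b lam) (q : ℕ → E d → ℝ) (X : ℕ → E d)
    (k : ℕ → E d → ℝ) (n : ℕ) : P.avgDrift q k n + P.avgNoise q X k n =
      avg γ P.N (fun j => truncWeight f (q j) (P.clip j) (X (j + 1)) ^ η * k j (X (j + 1))) n := by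
  rw [avgDrift, avgNoise, ← avg_add]
  simp only [add_sub_cancel]

end Setting

namespace Trajectory

variable (H : Trajectory P X g q)
include H

lemma weight_nonneg (hn : P.N ≤ n) : 0 ≤ (f (X (n + 1)) / q n (X (n + 1))) ^ η :=
  Real.rpow_nonneg (div_nonneg (P.f_density.nonneg _) ((H.q_density n hn).nonneg _)) _

lemma truncWeight_rpow_le_weight (hn : P.N ≤ n) (y : E d) :
    truncWeight f (q n) (P.clip n) y ^ η ≤ (f y / q n y) ^ η :=
  truncWeight_rpow_le_div_rpow P.η_pos.le (P.f_density.nonneg y) ((H.q_density n hn).nonneg y)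
    (P.clip_pos n).le

lemma mass_succ (hn : P.N ≤ n) : ∫ y, g (n + 1) y =
    (1 - γ (n + 1)) * (∫ y, g n y) + γ (n + 1) * (f (X (n + 1)) / q n (X (n + 1))) ^ η := by
  have hkb := (P.isDensity_kb (P.b_pos (n + 1))).comp_sub_right (X (n + 1))
  rw [funext (H.g_succ n hn), integral_add ((H.g_integrable n).const_mul _)
    (hkb.integrable.const_mul _), integral_const_mul, integral_const_mul, hkb.integral_eq_one,
    mul_one]

lemma mass_ne_zero (hn : P.N ≤ n) : ∫ y, g n y ≠ 0 := by
  intro h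
  have hq := (H.q_density n hn).integral_eq_one
  simp only [H.q_eq n hn, h, div_zero, mul_zero, zero_add] at hq
  rw [integral_const_mul, P.q0_density.integral_eq_one] at hq
  linarith [P.lam_le_half n hn]

lemma decay_mul_g_le (hm : P.N ≤ m) (hmn : m ≤ n) (x : E d) : decay γ m n * g m x ≤ g n x := by
  have h := add_decay_mul_sub_le (u := fun k => g k x) (A := 0)
    (fun j hj => (P.γ_lt_one_of_lt hm j hj).le) hmn fun k hmk _ => by
      rw [H.g_succ k (hm.trans hmk) x, mul_zero]
      gcongr
      exact mul_nonneg (mul_nonneg (P.γ_pos _).le (H.weight_nonneg (hm.trans hmk)))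
        (kb_nonneg P.K_density.nonneg (P.b_pos _).le _)
  simpa using h

lemma decay_mul_mass_le (hm : P.N ≤ m) (hmn : m ≤ n) :
    decay γ m n * ∫ y, g m y ≤ ∫ y, g n y := by
  have h := add_decay_mul_sub_le (u := fun k => ∫ y, g k y) (A := 0)
    (fun j hj => (P.γ_lt_one_of_lt hm j hj).le) hmn fun k hmk _ => by
      rw [H.mass_succ (hm.trans hmk), mul_zero]
      gcongr
      exact mul_nonneg (P.γ_pos _).le (H.weight_nonneg (hm.trans hmk))
  simpa using h

lemma avgDrift_add_avgNoise_le_g (hn : P.N ≤ n) (x : E d) :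
    decay γ P.N n * g P.N x + (P.avgDrift q (kernelAt K b x) n
      + P.avgNoise q X (kernelAt K b x) n) ≤ g n x := by
  rw [P.avgDrift_add_avgNoise]
  refine decay_mul_add_avg_le (u := fun k => g k x)
    (fun j hj => (P.γ_lt_one_of_lt le_rfl j hj).le) hn fun k hk _ => ?_
  rw [H.g_succ k hk x, mul_assoc (γ (k + 1))]
  exact add_le_add_right (mul_le_mul_of_nonneg_left (mul_le_mul_of_nonneg_right
    (H.truncWeight_rpow_le_weight hk _) (P.kernelAt_nonneg x k _)) (P.γ_pos _).le) _

lemma avgDrift_add_avgNoise_le_mass (hn : P.N ≤ n) :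
    decay γ P.N n * (∫ y, g P.N y) + (P.avgDrift q 1 n + P.avgNoise q X 1 n) ≤ ∫ y, g n y := by
  rw [P.avgDrift_add_avgNoise]
  refine decay_mul_add_avg_le (u := fun k => ∫ y, g k y)
    (fun j hj => (P.γ_lt_one_of_lt le_rfl j hj).le) hn fun k hk _ => ?_
  rw [H.mass_succ hk, Pi.one_apply, Pi.one_apply, mul_one]
  exact add_le_add_right
    (mul_le_mul_of_nonneg_left (H.truncWeight_rpow_le_weight hk _) (P.γ_pos _).le) _

lemma avgDrift_kernelAt_nonneg (n : ℕ) (x : E d) : 0 ≤ P.avgDrift q (kernelAt K b x) n :=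
  avg_nonneg (fun j _ => (P.γ_pos j).le) (P.γ_lt_one_of_lt le_rfl) fun k hk =>
    P.drift_nonneg (H.q_density k hk).nonneg (P.clip_pos k).le (P.kernelAt_nonneg x k)

-- If the masses are negative forever, `q_k ≥ 0` forces `g_k ≤ lam k * q0 * |mass| / (1 - lam k)`,
-- while `g_k ≥ decay * g_n` and `|mass|` decays at least like `decay`.
lemma g_nonpos_of_mass_nonpos (hmass : ∀ n, P.N ≤ n → ∫ y, g n y ≤ 0) (hn : P.N ≤ n) (x : E d) :
    g n x ≤ 0 := by
  have hbound : ∀ k, n ≤ k → (1 - lam k) * g n x ≤ lam k * (q0 x * -∫ y, g n y) := by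
    intro k hk
    have hkN := hn.trans hk
    have hlam := P.lam_pos k
    have hlam' := P.lam_le_half k hkN
    have hneg : ∫ y, g k y < 0 := (hmass k hkN).lt_of_ne (H.mass_ne_zero hkN)
    have hq := (H.q_density k hkN).nonneg x
    rw [H.q_eq k hkN x, ← mul_div_assoc, ← neg_le_iff_add_nonneg, le_div_iff_of_neg hneg] at hq
    refine le_of_mul_le_mul_left ?_ (P.decay_pos hn (n := k))
    calc decay γ n k * ((1 - lam k) * g n x) = (1 - lam k) * (decay γ n k * g n x) := by ring
      _ ≤ (1 - lam k) * g k x :=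
          mul_le_mul_of_nonneg_left (H.decay_mul_g_le hn hk x) (by linarith)
      _ ≤ lam k * q0 x * -∫ y, g k y := by linarith
      _ ≤ lam k * q0 x * -(decay γ n k * ∫ y, g n y) :=
          mul_le_mul_of_nonneg_left (neg_le_neg (H.decay_mul_mass_le hn hk))
            (mul_nonneg hlam.le (P.q0_density.nonneg x))
      _ = decay γ n k * (lam k * (q0 x * -∫ y, g n y)) := by ring
  have hleft : Tendsto (fun k => (1 - lam k) * g n x) atTop (𝓝 (g n x)) := by
    simpa using (P.tendsto_lam.const_sub 1).mul_const (g n x)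
  have hright : Tendsto (fun k => lam k * (q0 x * -∫ y, g n y)) atTop (𝓝 0) := by
    simpa using P.tendsto_lam.mul_const (q0 x * -∫ y, g n y)
  exact le_of_tendsto_of_tendsto hleft hright ((eventually_ge_atTop n).mono hbound)

lemma mul_lam_rpow_le_drift_one (hn : P.N ≤ n) (hg : ∀ x, 0 ≤ g n x / ∫ y, g n y) :
    P.c ^ (1 - η) * lam n ^ (1 - η) ≤ drift η f (q n) (P.clip n) 1 := by
  have hlam := P.lam_pos n
  rw [← Real.mul_rpow P.c_pos.le hlam.le]
  refine P.rpow_le_drift_one (H.q_density n hn) (P.clip_pos n).le (mul_pos P.c_pos hlam).le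
    (fun y => ?_) (by linarith [P.two_le_clip_mul n])
  rw [H.q_eq n hn y, mul_comm P.c, mul_assoc]
  exact le_add_of_nonneg_of_le
    (mul_nonneg (by linarith [P.lam_le_half n hn]) (hg y))
    (mul_le_mul_of_nonneg_left (P.c_mul_f_le y) hlam.le)

lemma exists_mass_pos : ∃ n, P.N ≤ n ∧ 0 < ∫ y, g n y := by
  by_contra! hmass
  set c₁ := P.c ^ (1 - η)
  have hc₁ : 0 < c₁ := Real.rpow_pos_of_pos P.c_pos _
  have hdrift : ∀ n, P.N ≤ n → c₁ * lam n ^ (1 - η) ≤ drift η f (q n) (P.clip n) 1 :=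
    fun n hn => H.mul_lam_rpow_le_drift_one hn fun x =>
      div_nonneg_of_nonpos (H.g_nonpos_of_mass_nonpos hmass hn x) (hmass n hn)
  obtain ⟨n, hn, hdecay, hstart, hnoise⟩ := ((eventually_ge_atTop P.N).and
    (((P.tendsto_decay le_rfl).eventually (gt_mem_nhds one_half_pos)).and
    ((P.eventually_decay_mul_le P.η_pos le_rfl (-∫ y, g P.N y) (τ := c₁ / 8) (by positivity)).and
    (H.noise_one (c₁ / 8) (by positivity))))).exists
  have hlam := Real.rpow_pos_of_pos (P.lam_pos n) (1 - η)
  have havg : c₁ * lam n ^ (1 - η) * (1 - decay γ P.N n) ≤ P.avgDrift q 1 n :=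
    P.mul_lam_rpow_mul_le_avg P.η_lt_one le_rfl hn hc₁.le fun k hk _ => hdrift k hk
  have hhalf : c₁ * lam n ^ (1 - η) * (1 / 2) ≤ c₁ * lam n ^ (1 - η) * (1 - decay γ P.N n) := by
    gcongr
    linarith
  have := H.avgDrift_add_avgNoise_le_mass hn
  have := (abs_le.1 hnoise).1
  have := hmass n hn
  have : 0 < c₁ * lam n ^ (1 - η) := by positivity
  linarith

end Trajectory

end Trajectory

/-! ### Growth on a ball -/

section Growth

section PowerGrowth

variable {η κ l s t y : ℝ}

lemma one_add_half_mul_le_rpow (hη : 0 ≤ η) (ht : 0 ≤ t) (ht1 : t ≤ 1) :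
    1 + η * t / 2 ≤ (1 + t) ^ η := by
  have hexp : Real.exp (t / 2) ≤ 1 + t := by
    have h := Real.one_sub_le_exp_neg (t / 2)
    rw [Real.exp_neg, le_inv_comm₀ (by linarith) (Real.exp_pos _)] at h
    exact h.trans (inv_le_of_inv_le₀ (by linarith) ((inv_le_iff_one_le_mul₀ (by linarith)).2
      (by nlinarith)))
  calc 1 + η * t / 2 ≤ Real.exp (t / 2 * η) := by linarith [Real.add_one_le_exp (t / 2 * η)]
    _ = Real.exp (t / 2) ^ η := Real.exp_mul _ _
    _ ≤ (1 + t) ^ η := Real.rpow_le_rpow (Real.exp_pos _).le hexp hη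

lemma one_sub_half_mul_le_rpow (hη : 0 ≤ η) (ht : 0 ≤ t) (ht1 : t ≤ 1 / 2) :
    1 - η * t / 2 ≤ (1 - t) ^ (η / 4) := by
  have hexp : Real.exp (-(2 * t)) ≤ 1 - t := by
    rw [Real.exp_neg]
    refine inv_le_of_inv_le₀ (by linarith) (le_trans ?_ (Real.add_one_le_exp (2 * t)))
    rw [inv_le_iff_one_le_mul₀ (by linarith)]
    nlinarith
  calc 1 - η * t / 2 ≤ Real.exp (-(2 * t) * (η / 4)) := by
        linarith [Real.add_one_le_exp (-(2 * t) * (η / 4))]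
    _ = Real.exp (-(2 * t)) ^ (η / 4) := Real.exp_mul _ _
    _ ≤ (1 - t) ^ (η / 4) := Real.rpow_le_rpow (Real.exp_pos _).le hexp (by positivity)

-- With `s = l ^ η` the right-hand side is `s * (1 + γ * (κ / s - 1)) ^ η`, so that the gap
-- `κ - l ^ η` contracts at least by the factor `1 - η * γ / 2`.
lemma sub_mul_rpow_le_rpow {γ : ℝ} (hη : 0 ≤ η) (hη1 : η ≤ 1) (hl : 0 < l) (hκ : 0 < κ)
    (hγ : 0 ≤ γ) (hγ1 : γ ≤ 1 / 2) (hγl : γ * κ ≤ l ^ η) (hy : 0 ≤ y) (hly : κ - y ≤ l ^ η) :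
    κ - y * (1 - γ) ^ (η / 4) ≤ ((1 - γ) * l + γ * (κ * l ^ (1 - η))) ^ η := by
  set s := l ^ η with hs
  have hs0 : 0 < s := Real.rpow_pos_of_pos hl _
  set t := γ * (κ / s - 1) with ht
  have hst : s * t = γ * (κ - s) := by rw [ht]; field_simp
  have hrhs : (1 - γ) * l + γ * (κ * l ^ (1 - η)) = l * (1 + t) := by
    rw [Real.rpow_sub hl, Real.rpow_one, ← hs, ht]; field_simp; ring
  have ht1 : 0 < 1 + t := by
    rw [show 1 + t = 1 - γ + γ * (κ / s) by rw [ht]; ring]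
    have : 0 ≤ γ * (κ / s) := by positivity
    linarith
  rw [hrhs, Real.mul_rpow hl.le ht1.le, ← hs]
  have hpow : 0 ≤ y * (1 - γ) ^ (η / 4) :=
    mul_nonneg hy (Real.rpow_nonneg (by linarith) _)
  rcases le_total κ s with hκs | hsκ
  · have ht0 : t ≤ 0 := by nlinarith
    have hself : 1 + t ≤ (1 + t) ^ η :=
      Real.self_le_rpow_of_le_one ht1.le (by linarith) hη1
    nlinarith
  · have ht0 : 0 ≤ t := by nlinarith
    have htle : t ≤ 1 := by nlinarith
    have hup := mul_le_mul_of_nonneg_left (one_add_half_mul_le_rpow hη ht0 htle) hs0.le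
    have hdown := mul_le_mul_of_nonneg_left (one_sub_half_mul_le_rpow hη hγ hγ1) hy
    have hgap : (κ - s) * (1 - η * γ / 2) ≤ y * (1 - η * γ / 2) :=
      mul_le_mul_of_nonneg_right (by linarith) (by nlinarith)
    linear_combination hup + hdown + hgap - η / 2 * hst

lemma mul_one_sub_decay_rpow_le_rpow {γ : ℕ → ℝ} {m n : ℕ} {ι : Type*} {u : ℕ → ι → ℝ}
    {s : ℕ → ℝ} (hη : 0 < η) (hη1 : η ≤ 1) (hκ : 0 < κ) (hγ0 : ∀ j, m < j → 0 ≤ γ j)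
    (hγ1 : ∀ j, m < j → γ j ≤ 1 / 2) (hmn : m ≤ n) (hu0 : ∀ x, 0 ≤ u m x)
    (hs0 : ∀ k, m ≤ k → k < n → 0 < s k) (hs : ∀ k, m ≤ k → k < n → γ (k + 1) * κ ≤ s k ^ η)
    (hsu : ∀ k, m ≤ k → k < n → ∀ x, s k ≤ u k x)
    (hstep : ∀ k, m ≤ k → k < n → ∀ l, 0 < l → (∀ x, l ≤ u k x) → ∀ x,
      (1 - γ (k + 1)) * l + γ (k + 1) * (κ * l ^ (1 - η)) ≤ u (k + 1) x) (x : ι) :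
    κ - κ * decay γ m n ^ (η / 4) ≤ u n x ^ η := by
  induction n, hmn using Nat.le_induction generalizing x with
  | base => simpa using Real.rpow_nonneg (hu0 x) η
  | succ k hk ih =>
    specialize ih (fun j h₁ h₂ => hs0 j h₁ (by omega)) (fun j h₁ h₂ => hs j h₁ (by omega))
      (fun j h₁ h₂ => hsu j h₁ (by omega)) (fun j h₁ h₂ => hstep j h₁ (by omega))
    have hdecay0 : 0 < decay γ m k := decay_pos fun j hj => by linarith [hγ1 j hj]
    have hdecay1 : decay γ m k ^ (η / 4) ≤ 1 := Real.rpow_le_one hdecay0.le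
      (decay_le_one hγ0 fun j hj => by linarith [hγ1 j hj]) (by positivity)
    have hγk1 := hγ1 (k + 1) (by omega)
    have hsk := hs0 k hk k.lt_succ_self
    set y := κ * decay γ m k ^ (η / 4)
    have hy : y ≤ κ := mul_le_of_le_one_right hκ.le hdecay1
    set l := max ((κ - y) ^ η⁻¹) (s k)
    have hl : 0 < l := lt_max_of_lt_right hsk
    have hlu : ∀ z, l ≤ u k z := fun z => max_le
      ((Real.rpow_inv_le_iff_of_pos (sub_nonneg.2 hy) (hsk.le.trans (hsu k hk k.lt_succ_self z))
        hη).2 (ih z)) (hsu k hk k.lt_succ_self z)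
    have hlη : κ - y ≤ l ^ η :=
      (Real.rpow_inv_le_iff_of_pos (sub_nonneg.2 hy) hl.le hη).1 (le_max_left _ _)
    have hγl : γ (k + 1) * κ ≤ l ^ η := (hs k hk k.lt_succ_self).trans
      (Real.rpow_le_rpow hsk.le (le_max_right _ _) hη.le)
    have hγk0 := hγ0 (k + 1) (by omega)
    calc κ - κ * decay γ m (k + 1) ^ (η / 4) = κ - y * (1 - γ (k + 1)) ^ (η / 4) := by
          rw [decay_succ hk, Real.mul_rpow (by linarith) hdecay0.le]; ring
      _ ≤ ((1 - γ (k + 1)) * l + γ (k + 1) * (κ * l ^ (1 - η))) ^ η :=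
          sub_mul_rpow_le_rpow hη.le hη1 hl hκ hγk0 hγk1 hγl (by positivity) hlη
      _ ≤ u (k + 1) x ^ η := by
          have : 0 ≤ (1 - γ (k + 1)) * l := mul_nonneg (by linarith) hl.le
          exact Real.rpow_le_rpow (by positivity) (hstep k hk k.lt_succ_self l hl hlu x) hη.le

end PowerGrowth

variable {d : ℕ} {η : ℝ} {f q0 K : E d → ℝ} {γ b lam : ℕ → ℝ}

/-- From time `m` on, the mass of `g_n` is positive and `q_n ≥ lam n / 2 * q0` on `s`, so that the
truncation of the weights is inactive on `s`. -/
structure Explored (P : Setting d η f q0 K γ b lam) (g q : ℕ → E d → ℝ) (s : Set (E d)) (m : ℕ) :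
    Prop where
  N_le : P.N ≤ m
  mass_pos : ∀ n, m ≤ n → 0 < ∫ y, g n y
  le_q : ∀ n, m ≤ n → ∀ y ∈ s, lam n / 2 * q0 y ≤ q n y

variable {P : Setting d η f q0 K γ b lam} {X : ℕ → E d} {g q : ℕ → E d → ℝ} {m n : ℕ}

lemma Setting.eventually_kernel_radius_le (P : Setting d η f q0 K γ b lam) (ρ : ℝ) {r : ℝ}
    (hr : 0 < r) : ∀ᶠ n in atTop, b (n + 1) * ρ ≤ r := by
  have h : Tendsto (fun n => b (n + 1) * ρ) atTop (𝓝 0) := by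
    simpa using ((tendsto_add_atTop_iff_nat 1).2 P.tendsto_b).mul_const ρ
  exact h.eventually_le_const hr

lemma Setting.eventually_γ_mul_le_rpow (P : Setting d η f q0 K γ b lam) {κ κ' : ℝ}
    (hκ : 0 ≤ κ) (hκ' : 0 < κ') : ∀ᶠ n in atTop, γ (n + 1) * κ ≤ (κ' * lam n ^ (1 - η)) ^ η := by
  have hη := P.η_pos
  have hη1 := P.η_lt_one
  have hlim : Tendsto (fun n => γ n / lam n * κ) atTop (𝓝 0) := by
    simpa using P.tendsto_γ_div_lam.mul_const κ
  filter_upwards [hlim.eventually_le_const (Real.rpow_pos_of_pos hκ' η), eventually_ge_atTop P.N]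
    with n hn hN
  have hlam := P.lam_pos n
  rw [div_mul_eq_mul_div, div_le_iff₀ hlam] at hn
  have hlam' : lam n ≤ lam n ^ ((1 - η) * η) :=
    Real.self_le_rpow_of_le_one hlam.le (by linarith [P.lam_le_half n hN]) (by nlinarith)
  rw [Real.mul_rpow hκ'.le (by positivity), ← Real.rpow_mul hlam.le]
  calc γ (n + 1) * κ ≤ γ n * κ := mul_le_mul_of_nonneg_right (P.γ_antitone n.le_succ) hκ
    _ ≤ κ' ^ η * lam n := hn
    _ ≤ κ' ^ η * lam n ^ ((1 - η) * η) := by gcongr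

namespace Trajectory

variable (H : Trajectory P X g q)
include H

lemma mul_rpow_le_drift_kernelAt {s : Set (E d)} (hE : Explored P g q s m) (hs : MeasurableSet s)
    (hn : m ≤ n) {a l κ : ℝ} {x : E d} (ha : 0 ≤ a) (haf : ∀ y ∈ s, a ≤ f y) (hl : 0 ≤ l)
    (hlq : ∀ y ∈ s, l ≤ q n y) (hκ : κ ≤ ∫ y in s, kb K (b (n + 1)) (x - y)) :
    κ * (a ^ η * l ^ (1 - η)) ≤ drift η f (q n) (P.clip n) (kernelAt K b x n) :=
  calc κ * (a ^ η * l ^ (1 - η)) ≤ a ^ η * l ^ (1 - η) * ∫ y in s, kb K (b (n + 1)) (x - y) := by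
        rw [mul_comm]; gcongr
    _ ≤ _ := P.mul_setIntegral_kb_le_drift (H.q_density n (hE.N_le.trans hn)) (P.clip_pos n).le
      (P.b_pos _) x hs fun y hy => rpow_mul_rpow_le_truncWeight_rpow_mul P.η_pos.le P.η_lt_one
        (P.clip_pos n).le (P.f_le_clip_mul (hE.le_q n hn y hy)) ha (haf y hy) hl (hlq y hy)

section Ball

variable {x₀ : E d} {r a : ℝ} (hr : 0 < r) (ha : 0 < a) (haf : ∀ y ∈ ball x₀ r, a ≤ f y)
  (hE : Explored P g q (ball x₀ r) m)
include hr ha haf hE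

lemma exists_mul_rpow_le_drift_kernelAt : ∃ κ > 0, ∀ᶠ n in atTop, ∀ x ∈ ball x₀ r, ∀ l, 0 ≤ l →
    (∀ y ∈ ball x₀ r, l ≤ q n y) →
    κ * l ^ (1 - η) ≤ drift η f (q n) (P.clip n) (kernelAt K b x n) := by
  obtain ⟨κ, hκ, ρ, _, hkb⟩ := exists_forall_le_setIntegral_ball_kb_of_mem P.one_le_d
    P.K_density.nonneg P.K_continuous P.K_density.integrable P.K_zero_pos
  refine ⟨κ * a ^ η, by positivity, ?_⟩
  filter_upwards [eventually_ge_atTop m, P.eventually_kernel_radius_le ρ hr]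
    with n hn hρ x hx l hl hlq
  rw [mul_assoc]
  exact H.mul_rpow_le_drift_kernelAt hE measurableSet_ball hn ha.le haf hl hlq
    (hkb _ _ (P.b_pos _) hρ x₀ x hx)

lemma exists_mul_lam_rpow_le_avgDrift : ∃ κ > 0, ∀ᶠ n in atTop, ∀ x ∈ ball x₀ r,
    κ * lam n ^ (1 - η) ≤ P.avgDrift q (kernelAt K b x) n := by
  obtain ⟨κ, hκ, hdrift⟩ := H.exists_mul_rpow_le_drift_kernelAt hr ha haf hE
  have hc := P.c_pos
  obtain ⟨k, hk⟩ := eventually_atTop.1 (hdrift.and (eventually_ge_atTop m))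
  have hNk : P.N ≤ k := hE.N_le.trans (hk k le_rfl).2
  set κ' := κ * (P.c * a / 2) ^ (1 - η)
  have hκ' : 0 < κ' := by positivity
  refine ⟨κ' / 2, by positivity, ?_⟩
  filter_upwards [(P.tendsto_decay hNk).eventually_le_const one_half_pos, eventually_ge_atTop k]
    with n hdecay hkn x hx
  have hexplore : ∀ j, k ≤ j → j < n →
      κ' * lam j ^ (1 - η) ≤ drift η f (q j) (P.clip j) (kernelAt K b x j) := by
    intro j hj _
    have hlam := P.lam_pos j
    rw [mul_assoc, ← Real.mul_rpow (by positivity) hlam.le]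
    refine (hk j hj).1 x hx _ (by positivity) fun y hy => le_trans ?_ (hE.le_q j (hk j hj).2 y hy)
    have hca : P.c * a ≤ q0 y :=
      (mul_le_mul_of_nonneg_left (haf y hy) hc.le).trans (P.c_mul_f_le y)
    nlinarith
  have havg := P.mul_lam_rpow_mul_le_avg P.η_lt_one hNk hkn hκ'.le hexplore
  have hstart := H.avgDrift_kernelAt_nonneg k x
  have hlam := Real.rpow_nonneg (P.lam_pos n).le (1 - η)
  calc κ' / 2 * lam n ^ (1 - η) ≤ κ' * lam n ^ (1 - η) * (1 - decay γ k n) := by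
        rw [div_mul_eq_mul_div, div_eq_mul_one_div]; gcongr; linarith
    _ ≤ decay γ k n * P.avgDrift q (kernelAt K b x) k
        + avg γ k (fun j => drift η f (q j) (P.clip j) (kernelAt K b x j)) n :=
        le_add_of_nonneg_of_le (mul_nonneg (P.decay_pos hNk).le hstart) havg
    _ ≤ P.avgDrift q (kernelAt K b x) n :=
        decay_mul_add_avg_le (fun j hj => (P.γ_lt_one_of_lt hNk j hj).le) hkn
          fun j hj _ => (avg_succ (hNk.trans hj)).ge

lemma eventually_avgDrift_le_two_mul_g :
    ∀ᶠ n in atTop, ∀ x ∈ ball x₀ r, P.avgDrift q (kernelAt K b x) n ≤ 2 * g n x := by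
  obtain ⟨κ, hκ, hfloor⟩ := H.exists_mul_lam_rpow_le_avgDrift hr ha haf hE
  obtain ⟨C, hC⟩ := H.g_bounded P.N
  filter_upwards [hfloor, H.noise_kernelAt (κ / 4) (by positivity),
    P.eventually_decay_mul_le P.η_pos le_rfl C (τ := κ / 4) (by positivity),
    eventually_ge_atTop P.N, eventually_forall_mem_ball_norm_le x₀ r]
    with n hfloor hnoise hstart hn hnorm x hx
  have hz := (abs_le.1 (hnoise x (hnorm x hx))).1
  have hgN := mul_le_mul_of_nonneg_left (abs_le.1 (hC x)).1 (P.decay_pos le_rfl (n := n)).le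
  linarith [H.avgDrift_add_avgNoise_le_g hn x, hfloor x hx]

lemma exists_step_le_avgDrift_succ : ∃ κ > 0, ∀ᶠ n in atTop, ∫ y, g n y ≤ 2 → ∀ l, 0 < l →
    (∀ x ∈ ball x₀ r, l ≤ P.avgDrift q (kernelAt K b x) n) → ∀ x ∈ ball x₀ r,
    (1 - γ (n + 1)) * l + γ (n + 1) * (κ * l ^ (1 - η)) ≤
      P.avgDrift q (kernelAt K b x) (n + 1) := by
  obtain ⟨κ, hκ, hdrift⟩ := H.exists_mul_rpow_le_drift_kernelAt hr ha haf hE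
  refine ⟨κ * (1 / 8) ^ (1 - η), by positivity, ?_⟩
  filter_upwards [hdrift, H.eventually_avgDrift_le_two_mul_g hr ha haf hE, eventually_ge_atTop m]
    with n hdrift htwo hn hmass l hl hlx x hx
  have hN := hE.N_le.trans hn
  have hq : ∀ y ∈ ball x₀ r, l / 8 ≤ q n y := by
    intro y hy
    have hg : l / 4 ≤ g n y / ∫ z, g n z := by
      rw [le_div_iff₀ (hE.mass_pos n hn)]
      nlinarith [hlx y hy, htwo y hy]
    have hq0 := mul_nonneg (P.lam_pos n).le (P.q0_density.nonneg y)
    rw [H.q_eq n hN y]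
    nlinarith [P.lam_le_half n hN]
  have hstep := hdrift x hx (l / 8) (by positivity) hq
  rw [div_eq_mul_one_div, Real.mul_rpow hl.le (by norm_num), mul_comm (l ^ _), ← mul_assoc] at hstep
  rw [Setting.avgDrift, avg_succ hN]
  exact add_le_add (mul_le_mul_of_nonneg_left (hlx x hx)
    (by linarith [P.γ_le_half (n + 1) (by omega)])) (mul_le_mul_of_nonneg_left hstep (P.γ_pos _).le)

-- The exploration floor `κ * lam n ^ (1 - η)` starts the growth `l ↦ (1 - γ) l + γ κ l ^ (1 - η)`.
lemma exists_forall_le_g_of_decay_le : ∃ κ > 0, ∃ θ > 0, ∃ n₀, m ≤ n₀ ∧ ∀ k n, n₀ ≤ k → k ≤ n →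
    decay γ k n ≤ θ → (∀ j, k ≤ j → j < n → ∫ y, g j y ≤ 2) → ∀ x ∈ ball x₀ r, κ ≤ g n x := by
  obtain ⟨κ, hκ, hstep⟩ := H.exists_step_le_avgDrift_succ hr ha haf hE
  obtain ⟨κ', hκ', hfloor⟩ := H.exists_mul_lam_rpow_le_avgDrift hr ha haf hE
  obtain ⟨n₀, hn₀⟩ := eventually_atTop.1 (hstep.and (hfloor.and
    ((H.eventually_avgDrift_le_two_mul_g hr ha haf hE).and
    ((P.eventually_γ_mul_le_rpow hκ.le hκ').and (eventually_ge_atTop m)))))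
  have hη := P.η_pos
  refine ⟨(κ / 2) ^ η⁻¹ / 2, by positivity, (1 / 2) ^ (4 / η), by positivity, n₀,
    (hn₀ n₀ le_rfl).2.2.2.2, fun k n hk hkn hdecay hmass x hx => ?_⟩
  have hNk : P.N ≤ k := hE.N_le.trans (hn₀ k hk).2.2.2.2
  have hgrow := mul_one_sub_decay_rpow_le_rpow (ι := ball x₀ r)
    (u := fun j y => P.avgDrift q (kernelAt K b y) j) (s := fun j => κ' * lam j ^ (1 - η))
    hη P.η_lt_one.le hκ (fun j _ => (P.γ_pos j).le) (fun j hj => P.γ_le_half j (by omega)) hkn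
    (fun y => H.avgDrift_kernelAt_nonneg k y)
    (fun j _ _ => mul_pos hκ' (Real.rpow_pos_of_pos (P.lam_pos j) _))
    (fun j hj _ => (hn₀ j (hk.trans hj)).2.2.2.1)
    (fun j hj _ y => (hn₀ j (hk.trans hj)).2.1 y y.2)
    (fun j hj hjn l hl hlu y => (hn₀ j (hk.trans hj)).1 (hmass j hj hjn) l hl
      (fun z hz => hlu ⟨z, hz⟩) y y.2) ⟨x, hx⟩
  have hhalf : decay γ k n ^ (η / 4) ≤ 1 / 2 := by
    rw [← Real.le_rpow_inv_iff_of_pos (P.decay_pos hNk).le (by norm_num) (by positivity), inv_div]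
    exact hdecay
  have hroot : (κ / 2) ^ η⁻¹ ≤ P.avgDrift q (kernelAt K b x) n :=
    (Real.rpow_inv_le_iff_of_pos (by positivity) (H.avgDrift_kernelAt_nonneg n x) hη).2
      (le_trans (by nlinarith) hgrow)
  linarith [(hn₀ n (hk.trans hkn)).2.2.1 x hx]

end Ball

end Trajectory

end Growth

/-! ### Exploration -/

section Exploration

variable {d : ℕ} {η : ℝ} {f q0 K : E d → ℝ} {γ b lam : ℕ → ℝ}
  {P : Setting d η f q0 K γ b lam} {X : ℕ → E d} {g q : ℕ → E d → ℝ} {m n : ℕ}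

namespace Trajectory

variable (H : Trajectory P X g q)
include H

lemma mass_pos_of_le (hm : P.N ≤ m) (hmn : m ≤ n) (hmass : 0 < ∫ y, g m y) : 0 < ∫ y, g n y :=
  (mul_pos (P.decay_pos hm) hmass).trans_le (H.decay_mul_mass_le hm hmn)

lemma g_nonneg_of_le (hm : P.N ≤ m) (hmn : m ≤ n) {x : E d} (hg : 0 ≤ g m x) : 0 ≤ g n x :=
  (mul_nonneg (P.decay_pos hm).le hg).trans (H.decay_mul_g_le hm hmn x)

lemma explored_of_g_nonneg {s : Set (E d)} (hm : P.N ≤ m) (hmass : 0 < ∫ y, g m y)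
    (hg : ∀ y ∈ s, 0 ≤ g m y) : Explored P g q s m where
  N_le := hm
  mass_pos _ hn := H.mass_pos_of_le hm hn hmass
  le_q n hn y hy := by
    have hlam := P.lam_le_half n (hm.trans hn)
    have hq0 := mul_nonneg (P.lam_pos n).le (P.q0_density.nonneg y)
    have hmain : 0 ≤ (1 - lam n) * (g n y / ∫ z, g n z) := mul_nonneg (by linarith)
      (div_nonneg (H.g_nonneg_of_le hm hn (hg y hy)) (H.mass_pos_of_le hm hn hmass).le)
    rw [H.q_eq n (hm.trans hn) y]
    linarith

lemma mul_volume_sub_le_mass {s : Set (E d)} (hs : MeasurableSet s) (hs' : volume s ≠ ∞)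
    (hm : P.N ≤ m) (hmn : m ≤ n) {κ : ℝ} (hg : ∀ x ∈ s, κ ≤ g n x) :
    κ * volume.real s - decay γ m n * ∫ y, |g m y| ≤ ∫ y, g n y := by
  have hind : Integrable (s.indicator fun _ => κ) := (integrable_indicator_iff hs).2
    (integrableOn_const hs')
  have habs : Integrable fun y => decay γ m n * |g m y| := (H.g_integrable m).abs.const_mul _
  calc κ * volume.real s - decay γ m n * ∫ y, |g m y|
      = ∫ y, (s.indicator (fun _ => κ) y - decay γ m n * |g m y|) := by
        rw [integral_sub hind habs, integral_indicator hs, setIntegral_const, smul_eq_mul,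
          mul_comm κ, integral_const_mul]
    _ ≤ ∫ y, g n y := integral_mono (hind.sub habs) (H.g_integrable n) fun y => ?_
  have hgm := H.decay_mul_g_le hm hmn y
  have hdecay := (P.decay_pos hm (n := n)).le
  have hneg := mul_le_mul_of_nonneg_left (neg_abs_le (g m y)) hdecay
  have habs' := mul_nonneg hdecay (abs_nonneg (g m y))
  by_cases hy : y ∈ s
  · simp only [Set.indicator_of_mem hy]
    linarith [hg y hy]
  · simp only [Set.indicator_of_notMem hy]
    linarith

lemma mass_le_one_of_lam_mul_mass_lt {j : ℕ} {C : ℝ} (hm : P.N ≤ m) (hmj : m ≤ j) (hjn : j ≤ n)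
    (hC : C * decay γ m j ≤ lam n) (hmass : lam n * ∫ y, g n y < C * decay γ m n) :
    ∫ y, g j y ≤ 1 := by
  have hlam := P.lam_pos n
  have hdecay := P.decay_pos (hm.trans hmj) (n := n)
  have hlt : decay γ j n * (lam n * ∫ y, g j y) < decay γ j n * (lam n * 1) := by
    calc decay γ j n * (lam n * ∫ y, g j y) = lam n * (decay γ j n * ∫ y, g j y) := by ring
      _ ≤ lam n * ∫ y, g n y :=
          mul_le_mul_of_nonneg_left (H.decay_mul_mass_le (hm.trans hmj) hjn) hlam.le
      _ < C * decay γ m n := hmass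
      _ = decay γ j n * (C * decay γ m j) := by rw [← decay_mul_decay hmj hjn]; ring
      _ ≤ decay γ j n * (lam n * 1) := by rw [mul_one]; gcongr
  exact (lt_of_mul_lt_mul_left (lt_of_mul_lt_mul_left hlt hdecay.le) hlam.le).le

-- If the mass is small at time `n`, it has been at most `1` since a time `j` at which `decay γ m j`
-- was comparable to `lam n`. As `decay γ m n` is much smaller than `lam n`, this left the time for
-- `g` to grow on the ball.
lemma eventually_mul_decay_le_lam_mul_mass {x₀ : E d} {r a : ℝ} (hr : 0 < r) (ha : 0 < a)
    (haf : ∀ y ∈ ball x₀ r, a ≤ f y) (hm : P.N ≤ m) (hmass : 0 < ∫ y, g m y)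
    (hg : ∀ y ∈ ball x₀ r, 0 ≤ g m y) {C : ℝ} (hC : 0 < C) :
    ∀ᶠ n in atTop, C * decay γ m n ≤ lam n * ∫ y, g n y := by
  obtain ⟨κ, hκ, θ, hθ, n₀, hn₀, hball⟩ := H.exists_forall_le_g_of_decay_le hr ha haf
    (H.explored_of_g_nonneg hm hmass hg)
  have hvol : 0 < volume.real (ball x₀ r) := ENNReal.toReal_pos (measure_ball_pos _ _ hr).ne'
    measure_ball_lt_top.ne
  set I := ∫ y, |g m y|
  have hI : 0 ≤ I := integral_nonneg fun y => abs_nonneg _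
  have hdecay₀ := P.decay_pos hm (n := n₀)
  set τ := κ * volume.real (ball x₀ r) / (2 * (C + I)) with hτ
  have hτ0 : 0 < τ := by positivity
  filter_upwards [P.tendsto_lam.eventually_lt_const (mul_pos hC hdecay₀),
    P.eventually_decay_le_mul_lam hm hτ0, P.eventually_decay_le_mul_lam hm (C := C⁻¹)
      (by positivity), P.eventually_decay_le_mul_lam hm (C := θ / (2 * C)) (by positivity),
    eventually_ge_atTop n₀] with n hlt hnτ hnC hnθ hn
  by_contra! hsmall
  have hlam := P.lam_pos n
  obtain ⟨k, hk, hkn, hdk, hdk'⟩ := P.exists_decay_le_and_le_two_mul hm hn₀ hn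
    (t := C⁻¹ * lam n) (by rwa [inv_mul_lt_iff₀ hC]) hnC
  have hmk := hn₀.trans hk
  rw [inv_mul_eq_div] at hdk hdk'
  have hmass_le : ∀ j, k ≤ j → j < n → ∫ y, g j y ≤ 2 := fun j hkj hjn =>
    (H.mass_le_one_of_lam_mul_mass_lt hm (hmk.trans hkj) hjn.le
      ((le_div_iff₀' hC).1 ((P.decay_le_decay hm hmk hkj).trans hdk)) hsmall).trans one_le_two
  have hdkn : decay γ k n ≤ θ := by
    have hk0 := P.decay_pos hm (n := k)
    refine le_of_mul_le_mul_left ?_ hk0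
    calc decay γ m k * decay γ k n = decay γ m n := decay_mul_decay hmk hkn
      _ ≤ θ / (2 * C) * lam n := hnθ
      _ = θ / 2 * (lam n / C) := by ring
      _ ≤ θ / 2 * (2 * decay γ m k) := by gcongr
      _ = decay γ m k * θ := by ring
  have hlow := H.mul_volume_sub_le_mass measurableSet_ball measure_ball_lt_top.ne hm (hn₀.trans hn)
    (hball k n hk hkn hdkn hmass_le)
  have hup : ∫ y, g n y < C * τ := lt_of_mul_lt_mul_left (hsmall.trans_le (by nlinarith)) hlam.le
  have hdI : decay γ m n * I ≤ τ * I := mul_le_mul_of_nonneg_right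
    (hnτ.trans (mul_le_of_le_one_right hτ0.le
      (by linarith [P.lam_le_half n (hm.trans (hn₀.trans hn))]))) hI
  have hτeq : (C + I) * τ = κ * volume.real (ball x₀ r) / 2 := by rw [hτ]; field_simp
  nlinarith

lemma neg_le_g (hn : P.N ≤ n) (hmass : 0 < ∫ y, g n y) (y : E d) :
    -(2 * (lam n * ∫ y, g n y) * q0 y) ≤ g n y := by
  have hq := (H.q_density n hn).nonneg y
  have hlam := P.lam_pos n
  have hq0 := P.q0_density.nonneg y
  rw [H.q_eq n hn y, ← mul_div_assoc, ← neg_le_iff_add_nonneg, le_div_iff₀ hmass] at hq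
  rcases le_total 0 (g n y) with hg | hg
  · exact le_trans (neg_nonpos.2 (by positivity)) hg
  · nlinarith [P.lam_le_half n hn]

lemma exists_ball_g_pos (hn : P.N ≤ n) (hmass : 0 < ∫ y, g n y) (hneg : ¬ ∀ x, 0 ≤ g n x) :
    ∃ x₀ : E d, ∃ r > 0, ∃ a > 0, ∀ y ∈ ball x₀ r, 0 < g n y ∧ a < f y := by
  have hopen : IsOpen {x | 0 < g n x} := isOpen_lt continuous_const (H.g_continuous n)
  have hpos : ∃ x, 0 < g n x := by
    by_contra! h
    exact hmass.not_ge (integral_nonpos h)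
  have hnull : volume {x | 0 < g n x ∧ f x = 0} = 0 := by
    by_contra h
    exact hneg (H.nonneg_of_overlap n hn hmass (pos_iff_ne_zero.2 h))
  obtain ⟨x₀, hgx, hfx⟩ : ∃ x, 0 < g n x ∧ 0 < f x := by
    by_contra! h
    have hsub : {x | 0 < g n x} ⊆ {x | 0 < g n x ∧ f x = 0} := fun x hx =>
      ⟨hx, (h x hx).antisymm (P.f_density.nonneg x)⟩
    exact (hopen.measure_pos volume hpos).ne' (measure_mono_null hsub hnull)
  obtain ⟨r, hr, hball⟩ := Metric.isOpen_iff.1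
    (hopen.inter (isOpen_lt continuous_const P.f_continuous)) x₀ ⟨hgx, half_lt_self hfx⟩
  exact ⟨x₀, r, hr, f x₀ / 2, half_pos hfx, fun y hy => hball hy⟩

lemma exists_explored : ∃ m, Explored P g q Set.univ m := by
  obtain ⟨n₀, hn₀, hmass₀⟩ := H.exists_mass_pos
  by_cases hall : ∀ x, 0 ≤ g n₀ x
  · exact ⟨n₀, H.explored_of_g_nonneg hn₀ hmass₀ fun x _ => hall x⟩
  obtain ⟨x₀, r, hr, a, ha, hball⟩ := H.exists_ball_g_pos hn₀ hmass₀ hall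
  have hlam₀ := P.lam_pos n₀
  set C := 2 * (lam n₀ * ∫ y, g n₀ y)
  obtain ⟨m, hm⟩ := eventually_atTop.1
    ((H.eventually_mul_decay_le_lam_mul_mass hr ha (fun y hy => (hball y hy).2.le) hn₀ hmass₀
      (fun y hy => (hball y hy).1.le) (C := 2 * C) (by positivity)).and (eventually_ge_atTop n₀))
  refine ⟨m, hn₀.trans (hm m le_rfl).2, fun n hn => H.mass_pos_of_le hn₀ (hm n hn).2 hmass₀,
    fun n hn y _ => ?_⟩
  obtain ⟨hdecay, hn₀n⟩ := hm n hn
  have hq0 := P.q0_density.nonneg y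
  have hg : -(lam n / 2 * q0 y) ≤ g n y / ∫ z, g n z := by
    rw [le_div_iff₀ (H.mass_pos_of_le hn₀ hn₀n hmass₀)]
    calc -(lam n / 2 * q0 y) * ∫ z, g n z = -((lam n * ∫ z, g n z) / 2 * q0 y) := by ring
      _ ≤ -(2 * C * decay γ n₀ n / 2 * q0 y) := by gcongr
      _ = decay γ n₀ n * -(C * q0 y) := by ring
      _ ≤ decay γ n₀ n * g n₀ y :=
          mul_le_mul_of_nonneg_left (H.neg_le_g hn₀ hmass₀ y) (P.decay_pos hn₀).le
      _ ≤ g n y := H.decay_mul_g_le hn₀ hn₀n y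
  rw [H.q_eq n (hn₀.trans hn₀n) y]
  have := mul_nonneg (P.lam_pos n).le hq0
  nlinarith [P.lam_le_half n (hn₀.trans hn₀n), P.lam_pos n]

end Trajectory

end Exploration

/-! ### The lower bound -/

section LowerBound

lemma eventually_lt_integral_of_eventually_le {α : Type*} [MeasurableSpace α] {μ : Measure α}
    {f : α → ℝ} {u : ℕ → α → ℝ} (hf : Integrable f μ) (hf0 : ∀ x, 0 ≤ f x)
    (hu : ∀ n, Integrable (u n) μ) (hu0 : ∀ᶠ n in atTop, ∀ x, 0 ≤ u n x)
    (hfu : ∀ x l, 0 ≤ l → l < f x → ∀ᶠ n in atTop, l ≤ u n x) {t : ℝ} (ht : t < ∫ x, f x ∂μ) :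
    ∀ᶠ n in atTop, t < ∫ x, u n x ∂μ := by
  rcases lt_or_ge t 0 with ht0 | ht0
  · exact hu0.mono fun n hn => ht0.trans_le (integral_nonneg hn)
  have hlim : ∀ x, ENNReal.ofReal (f x) ≤ liminf (fun n => ENNReal.ofReal (u n x)) atTop := by
    refine fun x => le_of_forall_lt fun s hs => ?_
    obtain ⟨s', hss', hs'⟩ := exists_between hs
    have hs'_top := hs'.ne_top
    refine hss'.trans_le (le_liminf_of_le (by isBoundedDefault) ?_)
    filter_upwards [hfu x s'.toReal ENNReal.toReal_nonneg
      ((ENNReal.lt_ofReal_iff_toReal_lt hs'_top).1 hs')] with n hn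
    exact (ENNReal.le_ofReal_iff_toReal_le hs'_top (ENNReal.toReal_nonneg.trans hn)).2 hn
  have hfatou : ∫⁻ x, ENNReal.ofReal (f x) ∂μ ≤
      liminf (fun n => ∫⁻ x, ENNReal.ofReal (u n x) ∂μ) atTop :=
    (lintegral_mono hlim).trans
      (lintegral_liminf_le' fun n => (hu n).aestronglyMeasurable.aemeasurable.ennreal_ofReal)
  rw [← ofReal_integral_eq_lintegral_ofReal hf (.of_forall hf0)] at hfatou
  filter_upwards [eventually_lt_of_lt_liminf
    (((ENNReal.ofReal_lt_ofReal_iff (ht0.trans_lt ht)).2 ht).trans_le hfatou), hu0] with n hn hn0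
  rw [← ofReal_integral_eq_lintegral_ofReal (hu n) (.of_forall hn0)] at hn
  exact (ENNReal.ofReal_lt_ofReal_iff_of_nonneg ht0).1 hn

section PowerIteration

variable {A l η : ℝ}

lemma tendsto_mul_div_rpow_pow (hA : 0 < A) (hl : 0 < l) (hη : 0 < η) (hη1 : η < 1) :
    Tendsto (fun j : ℕ => A * (l / A) ^ ((1 - η) ^ j)) atTop (𝓝 A) := by
  have hpow : Tendsto (fun j : ℕ => (1 - η) ^ j) atTop (𝓝 0) :=
    tendsto_pow_atTop_nhds_zero_of_lt_one (by linarith) (by linarith)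
  simpa using (((Real.continuousAt_const_rpow (div_pos hl hA).ne').tendsto).comp hpow).const_mul A

lemma mul_div_rpow_pow_succ (hA : 0 < A) (hl : 0 < l) (j : ℕ) :
    A * (l / A) ^ ((1 - η) ^ (j + 1)) = A ^ η * (A * (l / A) ^ ((1 - η) ^ j)) ^ (1 - η) := by
  rw [Real.mul_rpow hA.le (by positivity), ← Real.rpow_mul (by positivity), ← mul_assoc,
    ← Real.rpow_add hA, pow_succ, add_sub_cancel, Real.rpow_one]

end PowerIteration

variable {d : ℕ} {η : ℝ} {f q0 K : E d → ℝ} {γ b lam : ℕ → ℝ}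
  {P : Setting d η f q0 K γ b lam} {X : ℕ → E d} {g q : ℕ → E d → ℝ} {m n : ℕ}

lemma Explored.mono {s t : Set (E d)} (hE : Explored P g q t m) (hst : s ⊆ t) :
    Explored P g q s m :=
  ⟨hE.N_le, hE.mass_pos, fun n hn y hy => hE.le_q n hn y (hst hy)⟩

namespace Trajectory

variable (H : Trajectory P X g q)
include H

lemma abs_avgDrift_le_rangeBound {C : ℝ} {k : ℕ → E d → ℝ} (hC : 0 ≤ C)
    (hk : ∀ j, P.N ≤ j → IsTestFunction f C (b (j + 1)) (k j)) (n : ℕ) :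
    |P.avgDrift q k n| ≤ P.rangeBound C n :=
  abs_avg_le (P.rangeBound_nonneg hC n) (fun j _ => (P.γ_pos j).le) (P.γ_lt_one_of_lt le_rfl)
    fun j hj hjn => by
      have hp := H.q_density j hj
      rw [abs_of_nonneg (P.drift_nonneg hp.nonneg (P.clip_pos j).le (hk j hj).nonneg)]
      exact (P.drift_le hp (P.clip_pos j).le (hk j hj)).trans (P.rangeBound_mono hC hjn)

lemma exists_abs_g_sub_le (hm : P.N ≤ m) : ∃ C, ∀ x, |g m x
    - (P.avgDrift q (kernelAt K b x) m + P.avgNoise q X (kernelAt K b x) m)| ≤ C := by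
  obtain ⟨C, hC⟩ := H.g_bounded m
  obtain ⟨C', hC'⟩ := H.g_bounded P.N
  refine ⟨C + C + C', fun x => ?_⟩
  have hge : 0 ≤ P.avgDrift q (kernelAt K b x) m + P.avgNoise q X (kernelAt K b x) m := by
    rw [P.avgDrift_add_avgNoise]
    exact avg_nonneg (fun j _ => (P.γ_pos j).le) (P.γ_lt_one_of_lt le_rfl) fun k hk =>
      mul_nonneg (truncWeight_rpow_nonneg (P.f_density.nonneg _) ((H.q_density k hk).nonneg _)
        (P.clip_pos k).le) (P.kernelAt_nonneg x k _)
  have hdecay : |decay γ P.N m * g P.N x| ≤ C' := by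
    rw [abs_mul, abs_of_pos (P.decay_pos le_rfl)]
    exact (mul_le_of_le_one_left (abs_nonneg _) (P.decay_le_one le_rfl)).trans (hC' x)
  have hle := H.avgDrift_add_avgNoise_le_g hm x
  have hgm := abs_le.1 (hC x)
  have := abs_le.1 hdecay
  exact abs_le.2 ⟨by linarith, by linarith⟩

variable (hE : Explored P g q Set.univ m)
include hE

lemma truncWeight_eq_weight (hn : m ≤ n) (y : E d) :
    truncWeight f (q n) (P.clip n) y = f y / q n y :=
  truncWeight_of_le ((H.q_density n (hE.N_le.trans hn)).nonneg y) (P.clip_pos n).le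
    (P.f_le_clip_mul (hE.le_q n hn y trivial))

lemma g_sub_eq_decay_mul (hn : m ≤ n) (x : E d) :
    g n x - (P.avgDrift q (kernelAt K b x) n + P.avgNoise q X (kernelAt K b x) n) =
      decay γ m n * (g m x
        - (P.avgDrift q (kernelAt K b x) m + P.avgNoise q X (kernelAt K b x) m)) := by
  refine eq_decay_mul (u := fun n => g n x
    - (P.avgDrift q (kernelAt K b x) n + P.avgNoise q X (kernelAt K b x) n)) hn fun k hk _ => ?_
  have hkN := hE.N_le.trans hk
  simp only [P.avgDrift_add_avgNoise, avg_succ hkN, H.g_succ k hkN, H.truncWeight_eq_weight hE hk,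
    kernelAt]
  ring

lemma mass_sub_eq_decay_mul (hn : m ≤ n) :
    (∫ y, g n y) - (P.avgDrift q 1 n + P.avgNoise q X 1 n) =
      decay γ m n * ((∫ y, g m y) - (P.avgDrift q 1 m + P.avgNoise q X 1 m)) := by
  refine eq_decay_mul (u := fun n => (∫ y, g n y) - (P.avgDrift q 1 n + P.avgNoise q X 1 n)) hn
    fun k hk _ => ?_
  have hkN := hE.N_le.trans hk
  simp only [P.avgDrift_add_avgNoise, avg_succ hkN, H.mass_succ hkN, H.truncWeight_eq_weight hE hk,
    Pi.one_apply]
  ring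

lemma eventually_abs_g_sub_le {δ : ℝ} (hδ : 0 < δ) : ∀ᶠ n in atTop, ∀ x, |g n x
    - (P.avgDrift q (kernelAt K b x) n + P.avgNoise q X (kernelAt K b x) n)| ≤ δ := by
  obtain ⟨C, hC⟩ := H.exists_abs_g_sub_le hE.N_le
  have hlim : Tendsto (fun n => decay γ m n * C) atTop (𝓝 0) := by
    simpa using (P.tendsto_decay hE.N_le).mul_const C
  filter_upwards [hlim.eventually_le_const hδ, eventually_ge_atTop m] with n hnδ hn x
  rw [H.g_sub_eq_decay_mul hE hn x, abs_mul, abs_of_pos (P.decay_pos hE.N_le)]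
  exact (mul_le_mul_of_nonneg_left (hC x) (P.decay_pos hE.N_le).le).trans hnδ

lemma eventually_abs_g_sub_avgDrift_le (x₀ : E d) (r : ℝ) {δ : ℝ} (hδ : 0 < δ) :
    ∀ᶠ n in atTop, ∀ x ∈ ball x₀ r, |g n x - P.avgDrift q (kernelAt K b x) n| ≤ δ := by
  filter_upwards [H.eventually_abs_g_sub_le hE (half_pos hδ),
    H.noise_kernelAt (δ / 2) (half_pos hδ), eventually_forall_mem_ball_norm_le x₀ r,
    eventually_ge_atTop P.N] with n hg hnoise hball hn x hx
  have hsub := abs_le.1 (hg x)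
  have hz := abs_le.1 ((hnoise x (hball x hx)).trans
    (mul_le_of_le_one_right (half_pos hδ).le (P.lam_rpow_le_one P.η_lt_one.le hn)))
  exact abs_le.2 ⟨by linarith, by linarith⟩

lemma eventually_mass_le {t : ℝ} (ht : 1 < t) : ∀ᶠ n in atTop, ∫ y, g n y ≤ t := by
  set C := (∫ y, g m y) - (P.avgDrift q 1 m + P.avgNoise q X 1 m)
  have hlim : Tendsto (fun n => decay γ m n * C) atTop (𝓝 0) := by
    simpa using (P.tendsto_decay hE.N_le).mul_const C
  have hδ : 0 < (t - 1) / 2 := by linarith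
  filter_upwards [hlim.eventually_le_const hδ, H.noise_one _ hδ, eventually_ge_atTop m]
    with n hdecay hnoise hn
  have hnN := hE.N_le.trans hn
  have hz := (le_abs_self _).trans (hnoise.trans
    (mul_le_of_le_one_right hδ.le (P.lam_rpow_le_one P.η_lt_one.le hnN)))
  have hdrift : P.avgDrift q 1 n ≤ 1 :=
    avg_le_of_le zero_le_one (fun j _ => (P.γ_pos j).le) (P.γ_lt_one_of_lt le_rfl)
      fun k hk _ => P.drift_one_le_one (H.q_density k hk) (P.clip_pos k).le
  linarith [H.mass_sub_eq_decay_mul hE hn]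

lemma exists_eventually_le_g {x₀ : E d} {r a : ℝ} (hr : 0 < r) (ha : 0 < a)
    (haf : ∀ y ∈ ball x₀ r, a ≤ f y) : ∃ κ > 0, ∀ᶠ n in atTop, ∀ y ∈ ball x₀ r, κ ≤ g n y := by
  obtain ⟨κ, hκ, θ, hθ, n₀, hn₀, hball⟩ :=
    H.exists_forall_le_g_of_decay_le hr ha haf (hE.mono (Set.subset_univ _))
  obtain ⟨k, hk⟩ := eventually_atTop.1 ((H.eventually_mass_le hE one_lt_two).and
    (eventually_ge_atTop n₀))
  have hn₀k := (hk k le_rfl).2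
  refine ⟨κ, hκ, ?_⟩
  filter_upwards [(P.tendsto_decay (hE.N_le.trans (hn₀.trans hn₀k))).eventually_le_const hθ,
    eventually_ge_atTop k] with n hdecay hkn
  exact hball k n hn₀k hkn hdecay fun j hj _ => (hk j hj).1

lemma eventually_mul_le_q {s : Set (E d)} {l σ : ℝ} (hl : 0 ≤ l) (hσ : 0 ≤ σ) (hσ1 : σ < 1)
    (hg : ∀ᶠ n in atTop, ∀ y ∈ s, l ≤ g n y) : ∀ᶠ n in atTop, ∀ y ∈ s, σ * l ≤ q n y := by
  set δ := (1 - σ) / 2 with hδ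
  have hδ0 : 0 < δ := by linarith
  filter_upwards [hg, H.eventually_mass_le hE (lt_add_of_pos_right 1 hδ0),
    P.tendsto_lam.eventually_le_const hδ0, eventually_ge_atTop m] with n hgn hmass hlam hn y hy
  rw [H.q_eq n (hE.N_le.trans hn) y]
  refine le_add_of_le_of_nonneg ?_ (mul_nonneg (P.lam_pos n).le (P.q0_density.nonneg y))
  rw [← mul_div_assoc, le_div_iff₀ (hE.mass_pos n hn)]
  calc σ * l * ∫ y, g n y ≤ σ * l * (1 + δ) := by gcongr
    _ = (σ * (1 + δ)) * l := by ring
    _ ≤ (1 - lam n) * l := by gcongr; nlinarith [sq_nonneg (1 - σ)]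
    _ ≤ (1 - lam n) * g n y := by
        gcongr
        · linarith
        · exact hgn y hy

lemma eventually_le_g_of_lt_rpow_mul_rpow {x₀ : E d} {ε ε' a l l' : ℝ} (ha : 0 ≤ a)
    (haf : ∀ y ∈ ball x₀ ε, a ≤ f y) (hl : 0 ≤ l) (hε : ε' < ε) (hl' : l' < a ^ η * l ^ (1 - η))
    (hg : ∀ᶠ n in atTop, ∀ y ∈ ball x₀ ε, l ≤ g n y) :
    ∀ᶠ n in atTop, ∀ y ∈ ball x₀ ε', l' ≤ g n y := by
  have hη1 := sub_pos.2 P.η_lt_one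
  obtain ⟨σ, ⟨hσA, hσ0⟩, hσ1⟩ :
      ∃ σ : ℝ, (l' < σ * (a ^ η * (σ * l) ^ (1 - η)) ∧ 0 < σ) ∧ σ < 1 := by
    have hcont : Continuous fun σ : ℝ => σ * (a ^ η * (σ * l) ^ (1 - η)) :=
      continuous_id.mul (continuous_const.mul
        ((continuous_id.mul continuous_const).rpow_const fun _ => Or.inr hη1.le))
    have hlim : ∀ᶠ σ : ℝ in 𝓝 1, l' < σ * (a ^ η * (σ * l) ^ (1 - η)) ∧ 0 < σ :=
      (hcont.continuousAt.eventually_const_lt (by simpa using hl')).and (lt_mem_nhds one_pos)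
    exact ((hlim.filter_mono nhdsWithin_le_nhds).and self_mem_nhdsWithin).exists (f := 𝓝[<] 1)
  obtain ⟨A, hl'A, hA⟩ := exists_between hσA
  obtain ⟨β₀, hβ₀, hkb⟩ := exists_forall_le_setIntegral_ball_kb P.K_density.nonneg
    P.K_density.integrable (sub_pos.2 hε) (hσ1.trans_eq P.K_density.integral_eq_one.symm)
  have hdrift : ∀ᶠ n in atTop, ∀ x ∈ ball x₀ ε', σ * (a ^ η * (σ * l) ^ (1 - η)) ≤
      drift η f (q n) (P.clip n) (kernelAt K b x n) := by
    filter_upwards [H.eventually_mul_le_q hE hl hσ0.le hσ1 hg,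
      ((tendsto_add_atTop_iff_nat 1).2 P.tendsto_b).eventually_lt_const hβ₀,
      eventually_ge_atTop m] with n hq hb hn x hx
    have hsub : ball x (ε - ε') ⊆ ball x₀ ε := ball_subset_ball' (by linarith [mem_ball.1 hx])
    exact H.mul_rpow_le_drift_kernelAt (hE.mono (Set.subset_univ _)) measurableSet_ball hn ha
      (fun y hy => haf y (hsub hy)) (mul_nonneg hσ0.le hl) (fun y hy => hq y (hsub hy))
      (hkb _ (P.b_pos _) hb x)
  filter_upwards [P.eventually_le_avg hA
    (fun n => ⟨_, fun x _ =>
      H.abs_avgDrift_le_rangeBound P.kernelBound_pos.le (P.isTestFunction_kernelAt x) n⟩) hdrift,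
    H.eventually_abs_g_sub_avgDrift_le hE x₀ ε' (sub_pos.2 hl'A)] with n havg hsub x hx
  have hdrift_le : A ≤ P.avgDrift q (kernelAt K b x) n := havg x hx
  linarith [(abs_le.1 (hsub x hx)).1]

-- Iterating `l ↦ a ^ η * l ^ (1 - η)`, whose attracting fixed point is `a`, on shrinking balls.
lemma eventually_le_g_of_lt (x₀ : E d) {l : ℝ} (hl0 : 0 ≤ l) (hl : l < f x₀) :
    ∀ᶠ n in atTop, l ≤ g n x₀ := by
  obtain ⟨a, hla, haf⟩ := exists_between hl
  obtain ⟨A, hlA, hAa⟩ := exists_between hla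
  have hA : 0 < A := hl0.trans_lt hlA
  have ha := hA.trans hAa
  obtain ⟨r, hr, hball⟩ := Metric.isOpen_iff.1 (isOpen_lt continuous_const P.f_continuous) x₀ haf
  have hfa : ∀ y ∈ ball x₀ r, a ≤ f y := fun y hy => (hball hy).le
  obtain ⟨κ, hκ, hfloor⟩ := H.exists_eventually_le_g hE hr ha hfa
  have hiter : ∀ (j : ℕ) (ε : ℝ), ε < r →
      ∀ᶠ n in atTop, ∀ y ∈ ball x₀ ε, A * (κ / A) ^ ((1 - η) ^ j) ≤ g n y := by
    intro j
    induction j with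
    | zero =>
      intro ε hε
      filter_upwards [hfloor] with n hn y hy
      rw [pow_zero, Real.rpow_one, mul_div_cancel₀ _ hA.ne']
      exact hn y (ball_subset_ball hε.le hy)
    | succ j ih =>
      intro ε hε
      obtain ⟨ε', hεε', hε'⟩ := exists_between hε
      refine H.eventually_le_g_of_lt_rpow_mul_rpow hE ha.le
        (fun y hy => hfa y (ball_subset_ball hε'.le hy)) (by positivity) hεε' ?_ (ih ε' hε')
      rw [mul_div_rpow_pow_succ hA hκ]
      exact mul_lt_mul_of_pos_right (Real.rpow_lt_rpow hA.le hAa P.η_pos) (by positivity)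
  obtain ⟨j, hj⟩ :=
    ((tendsto_mul_div_rpow_pow hA hκ P.η_pos P.η_lt_one).eventually_const_lt hlA).exists
  filter_upwards [hiter j (r / 2) (by linarith)] with n hn
  exact hj.le.trans (hn x₀ (mem_ball_self (half_pos hr)))

-- Fatou's lemma, applied to `g_n` plus the multiple of `q0` that makes it nonnegative.
lemma eventually_le_mass {t : ℝ} (ht : t < 1) : ∀ᶠ n in atTop, t ≤ ∫ y, g n y := by
  set u : ℕ → E d → ℝ := fun n x => g n x + 2 * (lam n * ∫ y, g n y) * q0 x
  have hcorr : ∀ᶠ n in atTop, ∀ x, 0 ≤ 2 * (lam n * ∫ y, g n y) * q0 x := by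
    filter_upwards [eventually_ge_atTop m] with n hn x
    exact mul_nonneg (mul_nonneg two_pos.le (mul_nonneg (P.lam_pos n).le (hE.mass_pos n hn).le))
      (P.q0_density.nonneg x)
  have hu : ∀ n, Integrable (u n) := fun n =>
    (H.g_integrable n).add (P.q0_density.integrable.const_mul _)
  have hu0 : ∀ᶠ n in atTop, ∀ x, 0 ≤ u n x := by
    filter_upwards [eventually_ge_atTop m] with n hn x
    exact neg_le_iff_add_nonneg.1 (H.neg_le_g (hE.N_le.trans hn) (hE.mass_pos n hn) x)
  obtain ⟨s, hts, hs⟩ := exists_between ht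
  filter_upwards [eventually_lt_integral_of_eventually_le P.f_density.integrable
      P.f_density.nonneg hu hu0 (fun x l hl hlf => ((H.eventually_le_g_of_lt hE x hl hlf).and
        hcorr).mono fun n hn => le_add_of_le_of_nonneg hn.1 (hn.2 x))
      (hs.trans_eq P.f_density.integral_eq_one.symm),
    H.eventually_mass_le hE one_lt_two, eventually_ge_atTop m,
    P.tendsto_lam.eventually_le_const (show 0 < (s - t) / 4 by linarith)] with n hlow hup hn hlam
  have hsplit : ∫ y, u n y = (∫ y, g n y) + 2 * (lam n * ∫ y, g n y) := by
    rw [integral_add (H.g_integrable n) (P.q0_density.integrable.const_mul _), integral_const_mul,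
      P.q0_density.integral_eq_one, mul_one]
  have hcorr_le : lam n * ∫ y, g n y ≤ (s - t) / 4 * 2 := by
    gcongr
    exact (hE.mass_pos n hn).le
  linarith

end Trajectory

end LowerBound

/-! ### The upper bound -/

section UpperBound

lemma eventually_mul_rpow_add_le {η A a c : ℝ} (hη : 0 < η) (hη1 : η ≤ 1) (hA : 0 ≤ A)
    (ha : 0 ≤ a) (hc : 0 ≤ c) (C : ℝ) : ∀ᶠ M in atTop, A * (a * M + c) ^ (1 - η) + C ≤ M := by
  have hη1' : 0 ≤ 1 - η := sub_nonneg.2 hη1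
  filter_upwards [(tendsto_rpow_atTop hη).eventually_ge_atTop (A * (a + 1) ^ (1 - η) + |C|),
    eventually_ge_atTop c, eventually_ge_atTop 1] with M hM hcM hM1
  have hM0 : 0 < M := one_pos.trans_le hM1
  have hle : a * M + c ≤ (a + 1) * M := by linarith
  calc A * (a * M + c) ^ (1 - η) + C
      ≤ A * ((a + 1) * M) ^ (1 - η) + |C| * M ^ (1 - η) := by
        refine add_le_add ?_ ((le_abs_self C).trans
          (le_mul_of_one_le_right (abs_nonneg C) (Real.one_le_rpow hM1 hη1')))
        gcongr
    _ = (A * (a + 1) ^ (1 - η) + |C|) * M ^ (1 - η) := by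
        rw [Real.mul_rpow (by positivity) hM0.le]
        ring
    _ ≤ M ^ η * M ^ (1 - η) := by gcongr
    _ = M := by rw [← Real.rpow_add hM0, add_sub_cancel, Real.rpow_one]

variable {d : ℕ} {η : ℝ} {f q0 K : E d → ℝ} {γ b lam : ℕ → ℝ}

namespace Schedule

lemma eventually_inv_mul_pow_le (S : Schedule d η γ b lam) {τ : ℝ} (hτ : 0 < τ) :
    ∀ᶠ n : ℕ in atTop, (lam n * b n ^ d)⁻¹ ≤ τ * n := by
  have hC := S.Cγ_pos
  filter_upwards [S.tendsto_range.eventually_le_const (div_pos hτ hC), eventually_ge_atTop 3]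
    with n hn h3
  have hb := pow_pos (S.b_pos n) d
  have hlam := S.lam_pos n
  have hγ := S.γ_pos n
  have hn0 : (0 : ℝ) < n := by positivity
  have hlog : 1 ≤ Real.log n :=
    (Real.le_log_iff_exp_le hn0).2 (Real.exp_one_lt_three.le.trans (by exact_mod_cast h3))
  calc (lam n * b n ^ d)⁻¹ = γ n * 1 / (lam n * b n ^ d) / γ n := by field_simp
    _ ≤ γ n * Real.log n / (lam n * b n ^ d) / γ n := by gcongr
    _ ≤ τ / S.Cγ / γ n := by gcongr
    _ = τ / (S.Cγ * γ n) := by rw [div_div]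
    _ ≤ τ / (n : ℝ)⁻¹ := by
        gcongr
        exact S.inv_le_Cγ_mul n (by lia)
    _ = τ * n := by rw [div_inv_eq_mul]

end Schedule

namespace Setting

lemma eventually_rangeBound_le (P : Setting d η f q0 K γ b lam) {C : ℝ} (hC : 0 < C) :
    ∀ᶠ n : ℕ in atTop, P.rangeBound C n ≤ n := by
  have hc := P.c_pos
  set A := (2 / P.c) ^ η * C with hA
  have hA0 : 0 < A := by positivity
  filter_upwards [P.eventually_inv_mul_pow_le (inv_pos.2 hA0), eventually_ge_atTop P.N]
    with n h hn
  have hlam := P.lam_pos n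
  have hb := P.b_pos n
  have hle : (lam n)⁻¹ ^ η ≤ (lam n)⁻¹ :=
    Real.rpow_le_self_of_one_le ((one_le_inv₀ hlam).2 (by linarith [P.lam_le_half n hn]))
      P.η_lt_one.le
  calc P.rangeBound C n = A * ((lam n)⁻¹ ^ η * (b n ^ d)⁻¹) := by
        rw [rangeBound, ← div_div, div_eq_mul_inv (2 / P.c),
          Real.mul_rpow (by positivity) (by positivity), hA]
        ring
    _ ≤ A * ((lam n)⁻¹ * (b n ^ d)⁻¹) := by gcongr
    _ = A * (lam n * b n ^ d)⁻¹ := by rw [mul_inv]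
    _ ≤ A * (A⁻¹ * n) := by gcongr
    _ = n := mul_inv_cancel_left₀ hA0.ne' _

lemma eventually_mul_rpow_div_le (P : Setting d η f q0 K γ b lam) (C : ℝ) {τ : ℝ} (hτ : 0 < τ) :
    ∀ᶠ n in atTop, P.CK * b (n + 1) ^ P.r / C ≤ τ := by
  have hlim := ((((tendsto_add_atTop_iff_nat 1).2 P.tendsto_b).rpow_const
    (Or.inr P.r_pos.le)).const_mul P.CK).div_const C
  rw [Real.zero_rpow P.r_pos.ne', mul_zero, zero_div] at hlim
  exact hlim.eventually_le_const hτ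

end Setting

namespace Trajectory

variable {P : Setting d η f q0 K γ b lam} {X : ℕ → E d} {g q : ℕ → E d → ℝ} {m n : ℕ}

lemma q_le (H : Trajectory P X g q) (hn : P.N ≤ n) {x : E d} {L t : ℝ} (hL : 0 ≤ L) (ht : 0 < t)
    (hg : g n x ≤ L) (hmass : t ≤ ∫ y, g n y) : q n x ≤ L / t + lam n * P.Q := by
  have hlam := P.lam_pos n
  rw [H.q_eq n hn x]
  refine add_le_add ?_ (mul_le_mul_of_nonneg_left (P.q0_le x) hlam.le)
  calc (1 - lam n) * (g n x / ∫ y, g n y) ≤ (1 - lam n) * (L / t) := by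
        gcongr
        linarith [P.lam_le_half n hn]
    _ ≤ L / t := mul_le_of_le_one_left (by positivity) (by linarith)

variable (H : Trajectory P X g q)
include H

lemma abs_avgNoise_le_rangeBound {C : ℝ} {k : ℕ → E d → ℝ} (hC : 0 ≤ C)
    (hk : ∀ j, P.N ≤ j → IsTestFunction f C (b (j + 1)) (k j)) (n : ℕ) :
    |P.avgNoise q X k n| ≤ P.rangeBound C n :=
  abs_avg_le (P.rangeBound_nonneg hC n) (fun j _ => (P.γ_pos j).le) (P.γ_lt_one_of_lt le_rfl)
    fun j hj hjn => by
      have hp := H.q_density j hj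
      have hmono := P.rangeBound_mono hC hjn
      exact abs_sub_le_of_nonneg_of_le
        (P.truncWeight_rpow_mul_nonneg hp (P.clip_pos j).le (hk j hj) _)
        ((P.truncWeight_rpow_mul_le hp (P.clip_pos j).le (hk j hj) _).trans hmono)
        (P.drift_nonneg hp.nonneg (P.clip_pos j).le (hk j hj).nonneg)
        ((P.drift_le hp (P.clip_pos j).le (hk j hj)).trans hmono)

lemma eventually_abs_avgNoise_kernelAt_le :
    ∀ᶠ n in atTop, ∀ x, |P.avgNoise q X (kernelAt K b x) n| ≤ 1 + ‖x‖ := by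
  filter_upwards [H.noise_kernelAt 1 one_pos, P.eventually_rangeBound_le P.kernelBound_pos,
    eventually_ge_atTop P.N] with n hnoise hrange hn x
  obtain hx | hx := le_or_gt ‖x‖ n
  · linarith [hnoise x hx, norm_nonneg x, P.lam_rpow_le_one P.η_lt_one.le hn]
  · linarith [H.abs_avgNoise_le_rangeBound P.kernelBound_pos.le (P.isTestFunction_kernelAt x) n]

lemma drift_kernelAt_le_mul {M : ℝ} (hn : P.N ≤ n)
    (hM : P.F ^ η * (8 * M + (16 + P.Q)) ^ (1 - η) + P.CK ≤ M) (hM0 : 0 ≤ M)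
    (hmass : 1 / 2 ≤ ∫ y, g n y) (hg : ∀ y, g n y ≤ (M + 2) * (1 + ‖y‖)) (x : E d) :
    drift η f (q n) (P.clip n) (kernelAt K b x n) ≤ M * (1 + ‖x‖) := by
  have hx := norm_nonneg x
  have hQ := P.Q_nonneg
  have hF := P.F_nonneg
  have hCK := P.CK_pos
  have hq : ∀ y ∈ ball x 1, q n y ≤ (8 * M + (16 + P.Q)) * (1 + ‖x‖) := by
    intro y hy
    have hy' : ‖y‖ ≤ 1 + ‖x‖ := (norm_le_norm_add_norm_sub x y).trans (by
      linarith [mem_ball_iff_norm'.1 hy])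
    have hgy : g n y ≤ (M + 2) * (2 * (1 + ‖x‖)) :=
      (hg y).trans (by gcongr; linarith)
    have hlamQ : lam n * P.Q ≤ P.Q :=
      mul_le_of_le_one_left hQ (by linarith [P.lam_le_half n hn])
    refine (H.q_le hn (by positivity) one_half_pos hgy hmass).trans ?_
    nlinarith [mul_nonneg hQ hx, mul_nonneg hM0 hx]
  have hdrift := P.drift_kb_le (H.q_density n hn) (P.clip_pos n).le (P.b_pos (n + 1)) one_pos x hq
    fun y _ => P.f_le y
  rw [Real.one_rpow, div_one, Real.mul_rpow (by positivity) (by positivity)] at hdrift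
  have hrpow : (1 + ‖x‖) ^ (1 - η) ≤ 1 + ‖x‖ :=
    Real.rpow_le_self_of_one_le (by linarith) (by linarith [P.η_pos])
  have hb : b (n + 1) ^ P.r ≤ 1 + ‖x‖ :=
    (Real.rpow_le_one (P.b_pos _).le (P.b_le_one _ (by lia)) P.r_pos.le).trans (by linarith)
  calc drift η f (q n) (P.clip n) (kernelAt K b x n)
      ≤ P.F ^ η * ((8 * M + (16 + P.Q)) ^ (1 - η) * (1 + ‖x‖) ^ (1 - η))
        + P.CK * b (n + 1) ^ P.r := hdrift
    _ ≤ P.F ^ η * ((8 * M + (16 + P.Q)) ^ (1 - η) * (1 + ‖x‖)) + P.CK * (1 + ‖x‖) := by gcongr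
    _ = (P.F ^ η * (8 * M + (16 + P.Q)) ^ (1 - η) + P.CK) * (1 + ‖x‖) := by ring
    _ ≤ M * (1 + ‖x‖) := by gcongr

lemma eventually_q_le_mul {s : Set (E d)} {M σ : ℝ} (hE : Explored P g q Set.univ m) (hM : 0 < M)
    (hσ : 1 < σ) (hg : ∀ᶠ n in atTop, ∀ y ∈ s, g n y ≤ M) :
    ∀ᶠ n in atTop, ∀ y ∈ s, q n y ≤ σ * M := by
  have hσ1 : 0 < σ + 1 := by linarith
  have hτ : 0 < (σ - 1) / 2 * M := by nlinarith
  have hlim : Tendsto (fun n => lam n * P.Q) atTop (𝓝 0) := by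
    simpa using P.tendsto_lam.mul_const P.Q
  filter_upwards [hg, H.eventually_le_mass hE (t := 2 / (σ + 1))
    ((div_lt_one hσ1).2 (by linarith)), hlim.eventually_le_const hτ, eventually_ge_atTop P.N]
    with n hgn hmass hlam hn y hy
  calc q n y ≤ M / (2 / (σ + 1)) + lam n * P.Q :=
        H.q_le hn hM.le (by positivity) (hgn y hy) hmass
    _ ≤ M / (2 / (σ + 1)) + (σ - 1) / 2 * M := by gcongr
    _ = σ * M := by
        field_simp
        ring

variable (hE : Explored P g q Set.univ m)
include hE

-- On the ball of radius `1` around `x` the proposal is at most linear in `M (1 + ‖x‖)`, and the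
-- drift is of order its power `1 - η < 1`: a linear bound on `g` is therefore self-improving.
lemma exists_eventually_g_le_mul : ∃ M > 0, ∀ᶠ n in atTop, ∀ x, g n x ≤ M * (1 + ‖x‖) := by
  obtain ⟨n₀, hn₀⟩ := eventually_atTop.1 (H.eventually_abs_avgNoise_kernelAt_le.and
    ((H.eventually_abs_g_sub_le hE one_pos).and ((H.eventually_le_mass hE one_half_lt_one).and
      (eventually_ge_atTop P.N))))
  have hN : P.N ≤ n₀ := (hn₀ n₀ le_rfl).2.2.2
  have hQ := P.Q_nonneg
  obtain ⟨M, hM, hrange, hM0⟩ := ((eventually_mul_rpow_add_le P.η_pos P.η_lt_one.le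
    (Real.rpow_nonneg P.F_nonneg η) (show (0 : ℝ) ≤ 8 by norm_num)
    (show 0 ≤ 16 + P.Q by linarith) P.CK).and
    ((eventually_ge_atTop (P.rangeBound P.kernelBound n₀)).and (eventually_gt_atTop 0))).exists
  have hg : ∀ n, n₀ ≤ n → ∀ x, P.avgDrift q (kernelAt K b x) n ≤ M * (1 + ‖x‖) →
      g n x ≤ (M + 2) * (1 + ‖x‖) := by
    intro n hn x hdrift
    obtain ⟨hnoise, happrox, -⟩ := hn₀ n hn
    linarith [(abs_le.1 (hnoise x)).2, (abs_le.1 (happrox x)).2, norm_nonneg x]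
  have hdrift : ∀ n, n₀ ≤ n → ∀ x, P.avgDrift q (kernelAt K b x) n ≤ M * (1 + ‖x‖) := by
    intro n hn
    induction n, hn using Nat.le_induction with
    | base =>
      intro x
      exact ((le_abs_self _).trans
        (H.abs_avgDrift_le_rangeBound P.kernelBound_pos.le (P.isTestFunction_kernelAt x) n₀)).trans
        (hrange.trans (le_mul_of_one_le_right hM0.le (by linarith [norm_nonneg x])))
    | succ n hn ih =>
      intro x
      have hnN := hN.trans hn
      have hstep := H.drift_kernelAt_le_mul hnN hM hM0.le (hn₀ n hn).2.2.1
        (fun y => hg n hn y (ih y)) x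
      have hγ := P.γ_pos (n + 1)
      have hγ1 := P.γ_lt_one (n := n + 1) (by lia)
      rw [Setting.avgDrift, avg_succ hnN]
      exact (add_le_add (mul_le_mul_of_nonneg_left (ih x) (sub_nonneg.2 hγ1.le))
        (mul_le_mul_of_nonneg_left hstep hγ.le)).trans_eq (by ring)
  refine ⟨M + 2, by linarith, ?_⟩
  filter_upwards [eventually_ge_atTop n₀] with n hn x
  exact hg n hn x (hdrift n hn x)

lemma eventually_g_le_of_rpow_mul_rpow_lt {x₀ : E d} {ε ε' A M L : ℝ}
    (hfA : ∀ y ∈ ball x₀ ε, f y ≤ A) (hM : 0 < M) (hε : ε' < ε) (hL : A ^ η * M ^ (1 - η) < L)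
    (hg : ∀ᶠ n in atTop, ∀ y ∈ ball x₀ ε, g n y ≤ M) :
    ∀ᶠ n in atTop, ∀ y ∈ ball x₀ ε', g n y ≤ L := by
  have hη1 := sub_pos.2 P.η_lt_one
  obtain ⟨σ, hσL, hσ⟩ : ∃ σ : ℝ, A ^ η * (σ * M) ^ (1 - η) < L ∧ 1 < σ := by
    have hcont : Continuous fun σ : ℝ => A ^ η * (σ * M) ^ (1 - η) :=
      continuous_const.mul ((continuous_id.mul continuous_const).rpow_const fun _ => Or.inr hη1.le)
    have hlim : ∀ᶠ σ : ℝ in 𝓝 1, A ^ η * (σ * M) ^ (1 - η) < L :=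
      hcont.continuousAt.eventually_lt_const (by simpa using hL)
    exact ((hlim.filter_mono nhdsWithin_le_nhds).and self_mem_nhdsWithin).exists (f := 𝓝[>] 1)
  obtain ⟨L₁, hσL₁, hL₁⟩ := exists_between hσL
  obtain ⟨L₂, hL₁₂, hL₂⟩ := exists_between hL₁
  have hdrift : ∀ᶠ n in atTop, ∀ x ∈ ball x₀ ε',
      drift η f (q n) (P.clip n) (kernelAt K b x n) ≤ L₁ := by
    filter_upwards [H.eventually_q_le_mul hE hM hσ hg, eventually_ge_atTop P.N,
      P.eventually_mul_rpow_div_le ((ε - ε') ^ ((d : ℝ) + P.r)) (sub_pos.2 hσL₁)]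
      with n hq hn htail x hx
    have hsub : ball x (ε - ε') ⊆ ball x₀ ε := ball_subset_ball' (by linarith [mem_ball.1 hx])
    exact (P.drift_kb_le (H.q_density n hn) (P.clip_pos n).le (P.b_pos (n + 1)) (sub_pos.2 hε) x
      (fun y hy => hq y (hsub hy)) fun y hy => hfA y (hsub hy)).trans (by linarith)
  filter_upwards [P.eventually_avg_le hL₁₂
    (fun n => ⟨_, fun x _ =>
      H.abs_avgDrift_le_rangeBound P.kernelBound_pos.le (P.isTestFunction_kernelAt x) n⟩) hdrift,
    H.eventually_abs_g_sub_avgDrift_le hE x₀ ε' (sub_pos.2 hL₂)] with n havg hsub x hx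
  have hdrift_le : P.avgDrift q (kernelAt K b x) n ≤ L₂ := havg x hx
  linarith [(abs_le.1 (hsub x hx)).2]

-- Iterating `M ↦ A ^ η * M ^ (1 - η)`, whose attracting fixed point is `A`, on shrinking balls.
lemma eventually_g_le_of_lt {x₀ : E d} {ε r A A₁ : ℝ} (hA : 0 < A)
    (hfA : ∀ y ∈ ball x₀ r, f y ≤ A) (hε : ε < r) (hA₁ : A < A₁) :
    ∀ᶠ n in atTop, ∀ y ∈ ball x₀ ε, g n y ≤ A₁ := by
  obtain ⟨A', hAA', hA'⟩ := exists_between hA₁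
  have hA'0 : 0 < A' := hA.trans hAA'
  obtain ⟨M₀, hM₀, hgM⟩ := H.exists_eventually_g_le_mul hE
  set M := M₀ * (1 + (‖x₀‖ + |r|)) with hMdef
  have hM : 0 < M := by positivity
  have hiter : ∀ (j : ℕ) (ε : ℝ), ε < r →
      ∀ᶠ n in atTop, ∀ y ∈ ball x₀ ε, g n y ≤ A' * (M / A') ^ ((1 - η) ^ j) := by
    intro j
    induction j with
    | zero =>
      intro ε hε
      filter_upwards [hgM] with n hn y hy
      rw [pow_zero, Real.rpow_one, mul_div_cancel₀ _ hA'0.ne', hMdef]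
      refine (hn y).trans ?_
      gcongr
      linarith [norm_le_norm_add_norm_sub x₀ y, mem_ball_iff_norm'.1 hy, le_abs_self r]
    | succ j ih =>
      intro ε hε
      obtain ⟨ε', hεε', hε'⟩ := exists_between hε
      refine H.eventually_g_le_of_rpow_mul_rpow_lt hE
        (fun y hy => hfA y (ball_subset_ball hε'.le hy)) (by positivity) hεε' ?_ (ih ε' hε')
      rw [mul_div_rpow_pow_succ hA'0 hM]
      exact mul_lt_mul_of_pos_right (Real.rpow_lt_rpow hA.le hAA' P.η_pos) (by positivity)
  obtain ⟨j, hj⟩ :=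
    ((tendsto_mul_div_rpow_pow hA'0 hM P.η_pos P.η_lt_one).eventually_lt_const hA').exists
  filter_upwards [hiter j ε hε] with n hn y hy
  exact (hn y hy).trans hj.le

end Trajectory

lemma exists_forall_mem_ball_add_le {α : Type*} [NormedAddCommGroup α] [NormedSpace ℝ α]
    [ProperSpace α] {u : α → ℝ} {x : α} {ε s δ : ℝ} (hu : Continuous u) (hε : 0 < ε) (hδ : 0 < δ)
    (hs : ∀ y ∈ ball x ε, u y ≤ s) : ∃ r > ε, ∀ y ∈ ball x r, u y ≤ s + δ := by
  have hclosed : closedBall x ε ⊆ {y | u y < s + δ} := by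
    rw [← closure_ball x hε.ne']
    exact (closure_minimal hs (isClosed_le hu continuous_const)).trans
      fun y hy => lt_of_le_of_lt hy (lt_add_of_pos_right s hδ)
  obtain ⟨ρ, hρ, hsub⟩ := (isCompact_closedBall x ε).exists_thickening_subset_open
    (isOpen_lt hu continuous_const) hclosed
  rw [thickening_closedBall hρ hε.le] at hsub
  exact ⟨ρ + ε, lt_add_of_pos_left ε hρ, fun y hy => (hsub hy).le⟩

-- The inner supremum over `y ∈ s` is the supremum of the empty set, hence `0`, when `y ∉ s`.
lemma biSup_nonneg_of_notMem {α : Type*} {u : α → ℝ} {s : Set α} {C : ℝ} (hu : ∀ y, u y ≤ C)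
    {z : α} (hz : z ∉ s) (hC : 0 ≤ C) : 0 ≤ ⨆ y ∈ s, u y := by
  have h := le_ciSup (f := fun y => ⨆ _ : y ∈ s, u y)
    ⟨C, Set.forall_mem_range.2 fun y => Real.iSup_le (fun _ => hu y) hC⟩ z
  simpa [hz] using h

lemma le_biSup_of_mem {α : Type*} {u : α → ℝ} {s : Set α} {C : ℝ} (hu : ∀ y, u y ≤ C) (hC : 0 ≤ C)
    {y : α} (hy : y ∈ s) : u y ≤ ⨆ y ∈ s, u y := by
  have h := le_ciSup (f := fun y => ⨆ _ : y ∈ s, u y)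
    ⟨C, Set.forall_mem_range.2 fun y => Real.iSup_le (fun _ => hu y) hC⟩ y
  simpa [hy] using h

theorem Trajectory.limsup_biSup_ball_le {P : Setting d η f q0 K γ b lam} {X : ℕ → E d}
    {g q : ℕ → E d → ℝ} (H : Trajectory P X g q) {ε : ℝ} (hε : 0 < ε) (x : E d) :
    limsup (fun n : ℕ => ⨆ y ∈ ball x ε, g n y) atTop ≤ ⨆ y ∈ ball x ε, f y := by
  obtain ⟨m, hE⟩ := H.exists_explored
  set s := ⨆ y ∈ ball x ε, f y
  have hfs : ∀ y ∈ ball x ε, f y ≤ s := fun y hy => le_biSup_of_mem P.f_le P.F_nonneg hy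
  have hs : 0 ≤ s := (P.f_density.nonneg x).trans (hfs x (mem_ball_self hε))
  refine le_of_forall_pos_le_add fun δ hδ => ?_
  obtain ⟨r, hr, hfr⟩ := exists_forall_mem_ball_add_le P.f_continuous hε (half_pos hδ) hfs
  have hg : ∀ᶠ n in atTop, ⨆ y ∈ ball x ε, g n y ≤ s + δ := by
    filter_upwards [H.eventually_g_le_of_lt hE (by linarith) hfr hr
      (add_lt_add_right (half_lt_self hδ) s)] with n hn
    exact Real.iSup_le (fun y => Real.iSup_le (hn y) (by linarith)) (by linarith)
  have hbelow : ∀ n, 0 ≤ ⨆ y ∈ ball x ε, g n y := by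
    intro n
    have : Nonempty (Fin d) := ⟨⟨0, P.one_le_d⟩⟩
    obtain ⟨v, hv⟩ := exists_norm_eq (E d) hε.le
    obtain ⟨C, hC⟩ := H.g_bounded n
    exact biSup_nonneg_of_notMem (fun y => (le_abs_self _).trans (hC y))
      (show x + v ∉ ball x ε by simp [hv]) ((abs_nonneg _).trans (hC x))
  exact limsup_le_of_le (isCoboundedUnder_le_of_le atTop hbelow) hg

end UpperBound

/-! ### Constants from the assumptions -/

lemma tendsto_mul_log_div {γ u v : ℕ → ℝ} {C : ℝ} (hγ : ∀ n, 0 < γ n)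
    (hC : ∀ n : ℕ, 1 ≤ n → (n : ℝ)⁻¹ ≤ C * γ n) (hv : ∀ᶠ n in atTop, 0 < v n ∧ v n ≤ u n)
    (h : Tendsto (fun n : ℕ => (n : ℝ) * γ n ^ 2 * Real.log n / v n) atTop (𝓝 0)) :
    Tendsto (fun n : ℕ => γ n * Real.log n / u n) atTop (𝓝 0) := by
  have hlim := h.const_mul C
  rw [mul_zero] at hlim
  refine squeeze_zero' ?_ ?_ hlim
  · filter_upwards [hv] with n hn
    exact div_nonneg (mul_nonneg (hγ n).le (Real.log_natCast_nonneg n)) (hn.1.le.trans hn.2)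
  · filter_upwards [hv, eventually_ge_atTop 1] with n hn h1
    have hn0 : (0 : ℝ) < n := by exact_mod_cast h1
    have hγn := hγ n
    obtain ⟨hvpos, hvu⟩ := hn
    have hγle : γ n ≤ C * (n * γ n ^ 2) :=
      calc γ n = (n : ℝ)⁻¹ * (n * γ n) := (inv_mul_cancel_left₀ hn0.ne' _).symm
        _ ≤ C * γ n * (n * γ n) := by gcongr; exact hC n h1
        _ = C * (n * γ n ^ 2) := by ring
    calc γ n * Real.log n / u n ≤ γ n * Real.log n / v n := by gcongr
      _ ≤ C * (n * γ n ^ 2) * Real.log n / v n := by gcongr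
      _ = C * (n * γ n ^ 2 * Real.log n / v n) := by ring

lemma rpow_mul_rpow_le_mul_pow {d : ℕ} {η l β : ℝ} (hη : η ≤ 1 / 2) (hl : 0 < l) (hl1 : l ≤ 1)
    (hβ : 0 < β) (hβ1 : β ≤ 1) : l ^ (2 * (1 - η)) * β ^ (2 * (d : ℝ) * (1 - η)) ≤ l * β ^ d := by
  have hle : l ^ (2 * (1 - η)) ≤ l := Real.rpow_le_self_of_le_one hl.le hl1 (by linarith)
  have hβle : β ^ (2 * (d : ℝ) * (1 - η)) ≤ β ^ d := by
    rw [← Real.rpow_natCast]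
    exact Real.rpow_le_rpow_of_exponent_ge hβ hβ1 (by nlinarith)
  gcongr

lemma mul_varFactor_div_of_half_le {d n : ℕ} {η : ℝ} {lam b : ℕ → ℝ} (hη : 1 / 2 ≤ η)
    (hlam : 0 < lam n) (a : ℝ) :
    a * varFactor η d lam b n / lam n ^ (2 * (1 - η)) = a / (lam n * b n ^ d) := by
  rw [varFactor, if_pos hη, show -(2 * η - 1) = 2 * (1 - η) - 1 by ring,
    Real.rpow_sub_one hlam.ne']
  field_simp

lemma mul_varFactor_div_of_lt_half {d n : ℕ} {η : ℝ} {lam b : ℕ → ℝ} (hη : η < 1 / 2)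
    (hb : 0 < b n) (a : ℝ) : a * varFactor η d lam b n / lam n ^ (2 * (1 - η)) =
      a / (lam n ^ (2 * (1 - η)) * b n ^ (2 * (d : ℝ) * (1 - η))) := by
  rw [varFactor, if_neg hη.not_ge, Real.rpow_neg hb.le, div_mul_eq_div_div_swap, div_eq_mul_inv a]

lemma nonempty_schedule {d : ℕ} {η : ℝ} {γ b lam : ℕ → ℝ} (hγpos : ∀ n, 0 < γ n)
    (hbpos : ∀ n, 0 < b n) (hlampos : ∀ n, 0 < lam n) (hγanti : Antitone γ)
    (hγ0 : Tendsto γ atTop (𝓝 0)) (hbanti : Antitone b) (hb0 : Tendsto b atTop (𝓝 0))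
    (hlamanti : Antitone lam) (hlam0 : Tendsto lam atTop (𝓝 0))
    (hγrate : ∃ Cγ > (0 : ℝ), ∃ nγ : ℕ, 1 ≤ nγ ∧
      (∀ n : ℕ, 1 ≤ n → ((n : ℝ))⁻¹ ≤ Cγ * γ n) ∧
      (∀ n : ℕ, nγ ≤ n → γ n - γ (n + 1) ≤ γ n * γ (n + 1)))
    (hrate_ge : 1 / 2 ≤ η → Tendsto
      (fun n : ℕ => (n : ℝ) * γ n ^ 2 * Real.log n / (lam n * b n ^ d)) atTop (𝓝 0))
    (hrate_lt : η < 1 / 2 → Tendsto (fun n : ℕ => (n : ℝ) * γ n ^ 2 * Real.log n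
      / (lam n ^ (2 * (1 - η)) * b n ^ (2 * (d : ℝ) * (1 - η)))) atTop (𝓝 0)) :
    Nonempty (Schedule d η γ b lam) := by
  obtain ⟨C, hC, nγ, hnγ, hCγ, hγstep⟩ := hγrate
  obtain ⟨N, hN⟩ := eventually_atTop.1 ((hγ0.eventually_le_const one_half_pos).and
    ((hlam0.eventually_le_const one_half_pos).and ((hb0.eventually_le_const one_pos).and
      (eventually_ge_atTop nγ))))
  have hrange : Tendsto (fun n : ℕ => γ n * Real.log n / (lam n * b n ^ d)) atTop (𝓝 0) := by
    obtain hη | hη := le_or_gt (1 / 2) η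
    · exact tendsto_mul_log_div hγpos hCγ
        (.of_forall fun n => ⟨mul_pos (hlampos n) (pow_pos (hbpos n) d), le_rfl⟩) (hrate_ge hη)
    · refine tendsto_mul_log_div hγpos hCγ ?_ (hrate_lt hη)
      filter_upwards [eventually_ge_atTop N] with n hn
      exact ⟨mul_pos (Real.rpow_pos_of_pos (hlampos n) _) (Real.rpow_pos_of_pos (hbpos n) _),
        rpow_mul_rpow_le_mul_pow hη.le (hlampos n) ((hN n hn).2.1.trans one_half_lt_one.le)
          (hbpos n) (hN n hn).2.2.1⟩
  have hvariance : Tendsto (fun n : ℕ => (n : ℝ) * γ n ^ 2 * Real.log n * varFactor η d lam b n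
      / lam n ^ (2 * (1 - η))) atTop (𝓝 0) := by
    obtain hη | hη := le_or_gt (1 / 2) η
    · simpa only [mul_varFactor_div_of_half_le hη (hlampos _)] using hrate_ge hη
    · simpa only [mul_varFactor_div_of_lt_half hη (hbpos _)] using hrate_lt hη
  exact ⟨N, C, hγpos, hbpos, hlampos, hγanti, hbanti, hlamanti, hγ0, hb0, hlam0,
    hnγ.trans (hN N le_rfl).2.2.2, fun n hn => (hN n hn).1, fun n hn => (hN n hn).2.1,
    fun n hn => (hN n hn).2.2.1, fun n hn => by linarith [hγstep n (hN n hn).2.2.2], hC, hCγ,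
    hrange, hvariance⟩

lemma nonempty_target {d : ℕ} {f q0 : E d → ℝ} (hf : IsDensity f) (hfbdd : ∃ C, ∀ x, f x ≤ C)
    (hfcont : Continuous f) (hq0 : IsDensity q0) (hq0bdd : ∃ C, ∀ x, q0 x ≤ C)
    (hq0cont : Continuous q0) (hfq0 : ∃ c > (0 : ℝ), ∀ x, c * f x ≤ q0 x) :
    Nonempty (Target f q0) := by
  obtain ⟨F, hF⟩ := hfbdd
  obtain ⟨Q, hQ⟩ := hq0bdd
  obtain ⟨c, hc, hcf⟩ := hfq0
  exact ⟨F, Q, c, hf, hF, hfcont, hq0, hQ, hq0cont, hc, hcf⟩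

lemma nonempty_smoothingKernel {d : ℕ} {K : E d → ℝ} (hK : IsDensity K)
    (hKbdd : ∃ C, ∀ x, K x ≤ C) (hKlip : ∃ L : ℝ≥0, LipschitzWith L K) (hKpos : 0 < K 0)
    (hKtail : ∃ rK > (0 : ℝ), ∃ CK > (0 : ℝ), ∀ x, (1 + ‖x‖ ^ ((d : ℝ) + rK)) * K x ≤ CK) :
    Nonempty (SmoothingKernel K) := by
  obtain ⟨Kmax, hKmax⟩ := hKbdd
  obtain ⟨L, hL⟩ := hKlip
  obtain ⟨r, hr, CK, hCK, htail⟩ := hKtail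
  exact ⟨Kmax, L, r, CK, hK, hKmax, hL, hKpos, hr, hCK, htail⟩

/-! ### Disintegration -/

lemma IsDensity.ofReal_integral_mul_eq_lintegral {α : Type*} [MeasureSpace α] {q : α → ℝ}
    (hq : IsDensity q) {φ : α → ℝ≥0} (hφ : AEStronglyMeasurable (fun y => (φ y : ℝ))) {C : ℝ}
    (hφC : ∀ y, |(φ y : ℝ)| ≤ C) :
    ENNReal.ofReal (∫ y, (φ y : ℝ) * q y) = ∫⁻ y, φ y * ENNReal.ofReal (q y) := by
  rw [ofReal_integral_eq_lintegral_ofReal (hq.integrable.bdd_mul hφ (.of_forall hφC))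
    (.of_forall fun y => mul_nonneg (φ y).coe_nonneg (hq.nonneg y))]
  simp_rw [ENNReal.ofReal_mul (φ _).coe_nonneg, ENNReal.ofReal_coe_nnreal]

section Disintegration

variable {Ω S α : Type*} {mΩ : MeasurableSpace Ω} {mS : MeasurableSpace S}
  [MeasureSpace α] [TopologicalSpace α] [BorelSpace α] {μ : Measure Ω} [IsFiniteMeasure μ]
  {π : Ω → S} {Y : Ω → α} {p : S → α → ℝ}

lemma map_restrict_eq_withDensity [HasOuterApproxClosed α] [SFinite (volume : Measure α)]
    (hπ : Measurable π) (hY : Measurable Y)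
    (hp : Measurable (Function.uncurry p)) (hpd : ∀ᵐ ω ∂μ, IsDensity (p (π ω)))
    (hcond : ∀ φ : α → ℝ, Continuous φ → (∃ C, ∀ y, |φ y| ≤ C) →
      μ[fun ω => φ (Y ω) | mS.comap π] =ᵐ[μ] fun ω => ∫ y, φ y * p (π ω) y)
    {C : Set S} (hC : MeasurableSet C) :
    (μ.restrict (π ⁻¹' C)).map Y =
      volume.withDensity fun y => ∫⁻ ω in π ⁻¹' C, ENNReal.ofReal (p (π ω) y) ∂μ := by
  have hpπ : Measurable fun z : α × Ω => ENNReal.ofReal (p (π z.2) z.1) :=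
    (hp.comp ((hπ.comp measurable_snd).prodMk measurable_fst)).ennreal_ofReal
  refine ext_of_forall_lintegral_eq_of_IsFiniteMeasure fun φ => ?_
  have hφ : Continuous fun y => (φ y : ℝ) := NNReal.continuous_coe.comp φ.continuous
  have hφm : Measurable fun y => (φ y : ℝ≥0∞) := φ.continuous.measurable.coe_nnreal_ennreal
  have hφle (y : α) : |(φ y : ℝ)| ≤ nndist φ 0 := by
    rw [NNReal.abs_eq]
    exact_mod_cast BoundedContinuousFunction.NNReal.upper_bound φ y
  have hφY : Integrable (fun ω => (φ (Y ω) : ℝ)) μ :=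
    .of_bound (hφ.measurable.comp hY).aestronglyMeasurable _ (.of_forall fun ω => hφle _)
  have hφp := hcond _ hφ ⟨_, hφle⟩
  have hφp_nonneg : ∀ᵐ ω ∂μ, 0 ≤ ∫ y, (φ y : ℝ) * p (π ω) y := by
    filter_upwards [hpd] with ω hω
    exact integral_nonneg fun y => mul_nonneg (φ y).coe_nonneg (hω.nonneg y)
  calc ∫⁻ y, φ y ∂(μ.restrict (π ⁻¹' C)).map Y
      = ∫⁻ ω in π ⁻¹' C, φ (Y ω) ∂μ := lintegral_map hφm hY
    _ = ENNReal.ofReal (∫ ω in π ⁻¹' C, (φ (Y ω) : ℝ) ∂μ) :=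
        lintegral_coe_eq_integral _ hφY.restrict
    _ = ENNReal.ofReal (∫ ω in π ⁻¹' C, ∫ y, (φ y : ℝ) * p (π ω) y ∂volume ∂μ) := by
        rw [← setIntegral_condExp hπ.comap_le hφY ⟨C, hC, rfl⟩,
          setIntegral_congr_ae (hπ hC) (hφp.mono fun ω hω _ => hω)]
    _ = ∫⁻ ω in π ⁻¹' C, ENNReal.ofReal (∫ y, (φ y : ℝ) * p (π ω) y) ∂μ :=
        ofReal_integral_eq_lintegral_ofReal (integrable_condExp.congr hφp).restrict
          (ae_restrict_of_ae hφp_nonneg)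
    _ = ∫⁻ ω in π ⁻¹' C, ∫⁻ y, φ y * ENNReal.ofReal (p (π ω) y) ∂volume ∂μ :=
        lintegral_congr_ae (ae_restrict_of_ae (hpd.mono fun ω hω =>
          hω.ofReal_integral_mul_eq_lintegral hφ.aestronglyMeasurable hφle))
    _ = ∫⁻ y, ∫⁻ ω in π ⁻¹' C, φ y * ENNReal.ofReal (p (π ω) y) ∂μ ∂volume :=
        lintegral_lintegral_swap (((hφm.comp measurable_snd).mul
          (hpπ.comp measurable_swap)).aemeasurable)
    _ = ∫⁻ y, φ y ∂volume.withDensity fun y => ∫⁻ ω in π ⁻¹' C, ENNReal.ofReal (p (π ω) y) ∂μ := by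
        rw [lintegral_withDensity_eq_lintegral_mul _ hpπ.lintegral_prod_right' hφm]
        refine lintegral_congr fun y => ?_
        rw [lintegral_const_mul' _ _ ENNReal.coe_ne_top, Pi.mul_apply, mul_comm]

theorem lintegral_eq_lintegral_lintegral_mul_density [HasOuterApproxClosed α]
    [SFinite (volume : Measure α)] (hπ : Measurable π) (hY : Measurable Y)
    (hp : Measurable (Function.uncurry p)) (hpd : ∀ᵐ ω ∂μ, IsDensity (p (π ω)))
    (hcond : ∀ φ : α → ℝ, Continuous φ → (∃ C, ∀ y, |φ y| ≤ C) →
      μ[fun ω => φ (Y ω) | mS.comap π] =ᵐ[μ] fun ω => ∫ y, φ y * p (π ω) y)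
    {Φ : S → α → ℝ≥0∞} (hΦ : Measurable (Function.uncurry Φ)) :
    ∫⁻ ω, Φ (π ω) (Y ω) ∂μ
      = ∫⁻ ω, ∫⁻ y, ENNReal.ofReal (p (π ω) y) * Φ (π ω) y ∂volume ∂μ := by
  have hp' : Measurable fun z : S × α => ENNReal.ofReal (p z.1 z.2) := hp.ennreal_ofReal
  have hlaw : μ.map (fun ω => (π ω, Y ω))
      = ((μ.map π).prod volume).withDensity fun z => ENNReal.ofReal (p z.1 z.2) := by
    refine Measure.ext_prod fun {C B} hC hB => ?_
    calc μ.map (fun ω => (π ω, Y ω)) (C ×ˢ B) = (μ.restrict (π ⁻¹' C)).map Y B := by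
          rw [Measure.map_apply (hπ.prodMk hY) (hC.prod hB), Measure.map_apply hY hB,
            Measure.restrict_apply (hY hB), Set.mk_preimage_prod, Set.inter_comm]
      _ = ∫⁻ y in B, ∫⁻ ω in π ⁻¹' C, ENNReal.ofReal (p (π ω) y) ∂μ := by
          rw [map_restrict_eq_withDensity hπ hY hp hpd hcond hC, withDensity_apply _ hB]
      _ = ∫⁻ y in B, ∫⁻ s in C, ENNReal.ofReal (p s y) ∂μ.map π := by
          refine lintegral_congr fun y =>
            (setLIntegral_map (f := fun s => ENNReal.ofReal (p s y)) hC ?_ hπ).symm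
          exact hp'.comp measurable_prodMk_right
      _ = _ := by
          rw [withDensity_apply _ (hC.prod hB), ← Measure.prod_restrict,
            lintegral_prod_symm' _ hp']
  calc ∫⁻ ω, Φ (π ω) (Y ω) ∂μ
      = ∫⁻ z, Function.uncurry Φ z ∂μ.map (fun ω => (π ω, Y ω)) :=
        (lintegral_map hΦ (hπ.prodMk hY)).symm
    _ = ∫⁻ s, ∫⁻ y, ENNReal.ofReal (p s y) * Φ s y ∂volume ∂μ.map π := by
        rw [hlaw, lintegral_withDensity_eq_lintegral_mul _ hp' hΦ,
          lintegral_prod _ (hp'.mul hΦ).aemeasurable]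
        rfl
    _ = ∫⁻ ω, ∫⁻ y, ENNReal.ofReal (p (π ω) y) * Φ (π ω) y ∂volume ∂μ :=
        lintegral_map (hp'.mul hΦ).lintegral_prod_right' hπ

end Disintegration

section Tent

variable {α : Type*} [PseudoMetricSpace α]

/-- The tent function of height `1` and radius `1 / j` around `z`. Countably many of these detect
the sign of a continuous function. -/
noncomputable def tent (j : ℕ) (z y : α) : ℝ := max 0 (1 - j * dist y z)

lemma tent_nonneg (j : ℕ) (z y : α) : 0 ≤ tent j z y := le_max_left _ _

lemma abs_tent_le_one (j : ℕ) (z y : α) : |tent j z y| ≤ 1 := by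
  rw [abs_of_nonneg (tent_nonneg j z y)]
  exact max_le zero_le_one (sub_le_self _ (by positivity))

@[fun_prop]
lemma continuous_tent (j : ℕ) (z : α) : Continuous (tent j z) := by
  unfold tent
  fun_prop

lemma tent_self (j : ℕ) (z : α) : tent j z z = 1 := by simp [tent]

lemma tent_eq_zero {j : ℕ} {z y : α} (h : 1 ≤ j * dist y z) : tent j z y = 0 :=
  max_eq_left (sub_nonpos.2 h)

lemma nonneg_of_integral_tent_mul_nonneg [ProperSpace α] [Nonempty α] [MeasureSpace α]
    [BorelSpace α] [(volume : Measure α).IsOpenPosMeasure]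
    [IsFiniteMeasureOnCompacts (volume : Measure α)] {p : α → ℝ} (hp : Continuous p)
    (h : ∀ i j, 0 ≤ ∫ y, tent j (TopologicalSpace.denseSeq α i) y * p y) (x : α) : 0 ≤ p x := by
  by_contra! hx
  obtain ⟨r, hr, hneg⟩ := Metric.isOpen_iff.1 (isOpen_lt hp continuous_const) x hx
  obtain ⟨j, hj⟩ := exists_nat_gt (2 / r)
  obtain ⟨i, hi⟩ := (TopologicalSpace.denseRange_denseSeq α).exists_dist_lt x (half_pos hr)
  set z := TopologicalSpace.denseSeq α i
  rw [div_lt_iff₀ hr] at hj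
  have hzero {y : α} (hy : r / 2 ≤ dist y z) : tent j z y = 0 :=
    tent_eq_zero ((by linarith : 1 ≤ j * (r / 2)).trans (by gcongr))
  have hpneg {y : α} (hy : dist y z < r / 2) : p y < 0 :=
    hneg (mem_ball.2 (by linarith [dist_triangle_right y x z]))
  have hsupp : HasCompactSupport fun y => -(tent j z y * p y) :=
    .of_support_subset_isCompact (isCompact_closedBall z (r / 2)) fun y hy => by
      by_contra hyz
      exact hy (by simp [hzero (not_le.1 (mem_closedBall.not.1 hyz)).le])
  have hnonneg : 0 ≤ fun y => -(tent j z y * p y) := fun y => by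
    rcases le_or_gt (r / 2) (dist y z) with hy | hy
    · simp [hzero hy]
    · exact neg_nonneg.2 (mul_nonpos_of_nonneg_of_nonpos (tent_nonneg j z y) (hpneg hy).le)
  have hpos := Continuous.integral_pos_of_hasCompactSupport_nonneg_nonzero (x := z)
    (μ := volume) ((continuous_tent j z).mul hp).neg hsupp hnonneg (by
      simp [tent_self, (hpneg (y := z) (by simpa using half_pos hr)).ne])
  simp only [Pi.neg_apply, Pi.mul_apply, integral_neg] at hpos
  linarith [h i j]

end Tent

/-! ### The algorithm -/

section Algorithm

section NatFilt

variable {Ω : Type*} {d : ℕ} {X : ℕ → Ω → E d} {m n : ℕ}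

lemma natFilt_zero : natFilt X 0 = ⊥ := by simp [natFilt]

lemma comap_le_natFilt (hm : 1 ≤ m) (hmn : m ≤ n) :
    MeasurableSpace.comap (X m) inferInstance ≤ natFilt X n :=
  le_iSup₂_of_le (f := fun i _ => MeasurableSpace.comap (X i) inferInstance) m
    (Finset.mem_Icc.2 ⟨hm, hmn⟩) le_rfl

lemma natFilt_mono (hmn : m ≤ n) : natFilt X m ≤ natFilt X n :=
  iSup₂_le fun _ hi => comap_le_natFilt (Finset.mem_Icc.1 hi).1 ((Finset.mem_Icc.1 hi).2.trans hmn)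

lemma measurable_natFilt (hn : 1 ≤ n) : Measurable[natFilt X n] (X n) :=
  measurable_iff_comap_le.2 (comap_le_natFilt hn le_rfl)

lemma natFilt_le [mΩ : MeasurableSpace Ω] (hX : ∀ n, Measurable (X n)) (n : ℕ) :
    natFilt X n ≤ mΩ :=
  iSup₂_le fun i _ => (hX i).comap_le

end NatFilt

section Measurability

variable {S : Type*} {mS : MeasurableSpace S} {d : ℕ} {g : S → E d → ℝ}

lemma measurable_uncurry_mixture (hg : Measurable (Function.uncurry g)) {q0 : E d → ℝ}
    (hq0 : Measurable q0) (l : ℝ) :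
    Measurable (Function.uncurry fun s x => (1 - l) * (g s x / ∫ y, g s y) + l * q0 x) := by
  have h_mass : Measurable fun s => ∫ y, g s y :=
    (StronglyMeasurable.integral_prod_right (f := g) hg.stronglyMeasurable).measurable
  exact ((hg.div (h_mass.comp measurable_fst)).const_mul _).add
    ((hq0.comp measurable_snd).const_mul _)

lemma measurable_uncurry_add_kernel (hg : Measurable (Function.uncurry g)) {w : S → ℝ}
    (hw : Measurable w) {Y : S → E d} (hY : Measurable Y) {k : E d → ℝ} (hk : Measurable k)
    (a c : ℝ) : Measurable (Function.uncurry fun s x => a * g s x + c * w s * k (x - Y s)) :=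
  (hg.const_mul a).add (((hw.comp measurable_fst).const_mul c).mul
    (hk.comp (measurable_snd.sub (hY.comp measurable_fst))))

lemma measurable_apply_of_uncurry {T : Type*} {_ : MeasurableSpace T} {π : T → S}
    (hg : Measurable (Function.uncurry g)) (hπ : Measurable π) {Y : T → E d} (hY : Measurable Y) :
    Measurable fun t => g (π t) (Y t) :=
  hg.comp (hπ.prodMk hY)

lemma measurable_div_rpow {u v : S → ℝ} (hu : Measurable u) (hv : Measurable v) (η : ℝ) :
    Measurable fun s => (u s / v s) ^ η :=
  (hu.div hv).pow_const η

lemma measurable_uncurry_of_le {S α : Type*} {m m' : MeasurableSpace S} [MeasurableSpace α]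
    {F : S → α → ℝ}
    (hm : m ≤ m') (hF : Measurable[m.prod inferInstance] (Function.uncurry F)) :
    Measurable[m'.prod inferInstance] (Function.uncurry F) :=
  hF.mono (sup_le_sup (MeasurableSpace.comap_mono hm) le_rfl) le_rfl

end Measurability

variable {Ω : Type*} {mΩ : MeasurableSpace Ω} {μ : Measure Ω} {d : ℕ} {η : ℝ}
  {f q0 K : E d → ℝ} {γ b lam : ℕ → ℝ}

/-- The algorithm: samples `X`, smoothed weighted averages `g` and proposals `q`. The first
proposal is deterministic, as `F_0` is trivial, and need not be a mixture with `q0`. -/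
structure Algorithm (P : Setting d η f q0 K γ b lam) (μ : Measure Ω) (X : ℕ → Ω → E d)
    (g q : ℕ → Ω → E d → ℝ) : Prop where
  measurable_X : ∀ n, Measurable (X n)
  q_zero : ∃ p : E d → ℝ, Measurable p ∧ ∀ ω, q 0 ω = p
  g_zero : ∀ ω x, g 0 ω x = 0
  g_succ : ∀ n ω x, g (n + 1) ω x = (1 - γ (n + 1)) * g n ω x
    + γ (n + 1) * (f (X (n + 1) ω) / q n ω (X (n + 1) ω)) ^ η
      * kb K (b (n + 1)) (x - X (n + 1) ω)
  q_succ : ∀ n ω x, q (n + 1) ω x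
    = (1 - lam (n + 1)) * (g (n + 1) ω x / ∫ y, g (n + 1) ω y) + lam (n + 1) * q0 x
  condExp_eq : ∀ n (φ : E d → ℝ), Continuous φ → (∃ C, ∀ x, |φ x| ≤ C) →
    μ[fun ω => φ (X (n + 1) ω) | natFilt X n] =ᵐ[μ] fun ω => ∫ y, φ y * q n ω y

variable {P : Setting d η f q0 K γ b lam} {X : ℕ → Ω → E d} {g q : ℕ → Ω → E d → ℝ} {n : ℕ}

namespace Algorithm

lemma natFilt_le (A : Algorithm P μ X g q) (n : ℕ) : natFilt X n ≤ mΩ :=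
  Midas.natFilt_le A.measurable_X n

lemma measurable_uncurry_g_succ (A : Algorithm P μ X g q)
    (hg : Measurable[(natFilt X n).prod inferInstance] (Function.uncurry (g n)))
    (hq : Measurable[(natFilt X n).prod inferInstance] (Function.uncurry (q n))) :
    Measurable[(natFilt X (n + 1)).prod inferInstance] (Function.uncurry (g (n + 1))) := by
  have hmono : natFilt X n ≤ natFilt X (n + 1) := natFilt_mono n.le_succ
  have hX := measurable_natFilt (X := X) n.succ_pos
  have hqX := measurable_apply_of_uncurry hq (measurable_id'' hmono) hX
  rw [funext fun ω => funext (A.g_succ n ω)]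
  exact measurable_uncurry_add_kernel (measurable_uncurry_of_le hmono hg)
    (measurable_div_rpow (P.f_continuous.measurable.comp hX) hqX η) hX
    (continuous_kb P.K_continuous _).measurable _ _

lemma measurable_uncurry_q_succ (A : Algorithm P μ X g q)
    (hg : Measurable[(natFilt X (n + 1)).prod inferInstance] (Function.uncurry (g (n + 1)))) :
    Measurable[(natFilt X (n + 1)).prod inferInstance] (Function.uncurry (q (n + 1))) := by
  rw [funext fun ω => funext (A.q_succ n ω)]
  exact measurable_uncurry_mixture hg P.q0_continuous.measurable _

lemma measurable_uncurry (A : Algorithm P μ X g q) (n : ℕ) :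
    Measurable[(natFilt X n).prod inferInstance] (Function.uncurry (g n)) ∧
      Measurable[(natFilt X n).prod inferInstance] (Function.uncurry (q n)) := by
  induction n with
  | zero =>
    obtain ⟨p, hp, hq⟩ := A.q_zero
    rw [funext fun ω => funext (A.g_zero ω), funext hq]
    exact ⟨measurable_const, hp.comp (@measurable_snd Ω (E d) (natFilt X 0) _)⟩
  | succ n ih =>
    have hg := A.measurable_uncurry_g_succ ih.1 ih.2
    exact ⟨hg, A.measurable_uncurry_q_succ hg⟩

lemma g_continuous (A : Algorithm P μ X g q) (n : ℕ) (ω : Ω) : Continuous (g n ω) := by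
  induction n with
  | zero => exact funext (A.g_zero ω) ▸ continuous_const
  | succ n ih =>
    rw [funext (A.g_succ n ω)]
    have := continuous_kb P.K_continuous (b (n + 1))
    fun_prop

lemma g_integrable (A : Algorithm P μ X g q) (n : ℕ) (ω : Ω) : Integrable (g n ω) := by
  induction n with
  | zero => exact funext (A.g_zero ω) ▸ integrable_zero _ _ _
  | succ n ih =>
    rw [funext (A.g_succ n ω)]
    exact (ih.const_mul _).add
      (((P.isDensity_kb (P.b_pos _)).comp_sub_right _).integrable.const_mul _)

lemma g_bounded (A : Algorithm P μ X g q) (n : ℕ) (ω : Ω) : ∃ C, ∀ x, |g n ω x| ≤ C := by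
  induction n with
  | zero => exact ⟨0, fun x => by simp [A.g_zero]⟩
  | succ n ih =>
    obtain ⟨C, hC⟩ := ih
    refine ⟨|1 - γ (n + 1)| * C + |γ (n + 1) * (f (X (n + 1) ω) / q n ω (X (n + 1) ω)) ^ η|
      * (P.Kmax / b (n + 1) ^ d), fun x => ?_⟩
    rw [A.g_succ]
    refine (abs_add_le _ _).trans ?_
    simp only [abs_mul _ (g n ω x), abs_mul _ (kb K _ _)]
    have := hC x
    have := abs_kb_le P.K_density.nonneg P.K_le (P.b_pos (n + 1)).le (x - X (n + 1) ω)
    gcongr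

lemma q_eq (A : Algorithm P μ X g q) (hn : 1 ≤ n) (ω : Ω) (x : E d) :
    q n ω x = (1 - lam n) * (g n ω x / ∫ y, g n ω y) + lam n * q0 x := by
  obtain ⟨n, rfl⟩ := Nat.exists_eq_add_of_le' hn
  exact A.q_succ n ω x

lemma q_continuous (A : Algorithm P μ X g q) (hn : 1 ≤ n) (ω : Ω) : Continuous (q n ω) := by
  rw [funext (A.q_eq hn ω)]
  have := A.g_continuous n ω
  have := P.q0_continuous
  fun_prop

variable [IsProbabilityMeasure μ]

lemma ae_isDensity (A : Algorithm P μ X g q) (hn : 1 ≤ n) : ∀ᵐ ω ∂μ, IsDensity (q n ω) := by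
  have hmass : ∀ᵐ ω ∂μ, ∫ x, q n ω x = 1 := by
    have h := A.condExp_eq n (fun _ => 1) continuous_const ⟨1, by simp⟩
    rw [condExp_const (A.natFilt_le n)] at h
    filter_upwards [h] with ω hω
    simpa using hω.symm
  have htent : ∀ᵐ ω ∂μ, ∀ i j,
      0 ≤ ∫ y, tent j (TopologicalSpace.denseSeq (E d) i) y * q n ω y := by
    refine ae_all_iff.2 fun i => ae_all_iff.2 fun j => ?_
    filter_upwards [A.condExp_eq n _ (continuous_tent j _) ⟨1, abs_tent_le_one j _⟩,
      condExp_nonneg (m := natFilt X n) (.of_forall fun ω => tent_nonneg j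
        (TopologicalSpace.denseSeq (E d) i) (X (n + 1) ω))] with ω heq hle
    exact hle.trans_eq heq
  filter_upwards [hmass, htent] with ω hmass htent
  exact ⟨nonneg_of_integral_tent_mul_nonneg (A.q_continuous hn ω) htent, hmass⟩

theorem lintegral_apply_X_succ (A : Algorithm P μ X g q) (hn : 1 ≤ n) {Φ : Ω → E d → ℝ≥0∞}
    (hΦ : Measurable[(natFilt X n).prod inferInstance] (Function.uncurry Φ)) :
    ∫⁻ ω, Φ ω (X (n + 1) ω) ∂μ
      = ∫⁻ ω, ∫⁻ y, ENNReal.ofReal (q n ω y) * Φ ω y ∂volume ∂μ :=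
  lintegral_eq_lintegral_lintegral_mul_density (mS := natFilt X n) (π := id)
    (measurable_id'' (A.natFilt_le n)) (A.measurable_X _) (A.measurable_uncurry n).2
    (A.ae_isDensity hn) (by simpa only [MeasurableSpace.comap_id, id] using A.condExp_eq n) hΦ

end Algorithm

end Algorithm

/-! ### Conditional variance of the noise -/

section TruncatedWeight

variable {α : Type*} {f q : α → ℝ} {T p : ℝ} {y : α}

lemma truncWeight_mul_le (hf : 0 ≤ f y) (hq : 0 ≤ q y) : truncWeight f q T y * q y ≤ f y :=
  (mul_le_mul_of_nonneg_right (min_le_left _ _) hq).trans (by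
    rw [div_mul_comm]
    exact mul_le_of_le_one_left hf (div_self_le_one _))

lemma truncWeight_rpow_mul_le_rpow_sub_one_mul (hp : 1 ≤ p) (hf : 0 ≤ f y) (hq : 0 ≤ q y)
    (hT : 0 ≤ T) : truncWeight f q T y ^ p * q y ≤ T ^ (p - 1) * f y := by
  have hw := truncWeight_nonneg hf hq hT
  calc truncWeight f q T y ^ p * q y
      = truncWeight f q T y ^ (p - 1) * (truncWeight f q T y * q y) := by
        rw [← mul_assoc, ← Real.rpow_add_one' hw (by linarith), sub_add_cancel]
    _ ≤ T ^ (p - 1) * f y :=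
        mul_le_mul (truncWeight_rpow_le (sub_nonneg.2 hp) hf hq hT) (truncWeight_mul_le hf hq)
          (mul_nonneg hw hq) (by positivity)

end TruncatedWeight

lemma rpow_mul_rpow_le_rpow_mul_add {p β a c : ℝ} (hp : 0 ≤ p) (hp1 : p ≤ 1) (hβ : 0 < β)
    (ha : 0 ≤ a) (hc : 0 ≤ c) (e : ℝ) :
    a ^ p * c ^ (1 - p) ≤ β ^ (-((1 - p) * e)) * a + β ^ (p * e) * c := by
  have ht : 0 < β ^ (-((1 - p) * e)) := by positivity
  have hs : 0 < β ^ (p * e) := by positivity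
  have hts : (β ^ (-((1 - p) * e))) ^ p * (β ^ (p * e)) ^ (1 - p) = 1 := by
    rw [← Real.rpow_mul hβ.le, ← Real.rpow_mul hβ.le, ← Real.rpow_add hβ,
      show -((1 - p) * e) * p + p * e * (1 - p) = 0 by ring, Real.rpow_zero]
  set t := β ^ (-((1 - p) * e))
  set s := β ^ (p * e)
  calc a ^ p * c ^ (1 - p) = (t * a) ^ p * (s * c) ^ (1 - p) := by
        rw [Real.mul_rpow ht.le ha, Real.mul_rpow hs.le hc, mul_mul_mul_comm, hts, one_mul]
    _ ≤ p * (t * a) + (1 - p) * (s * c) :=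
        Real.geom_mean_le_arith_mean2_weighted hp (by linarith) (by positivity) (by positivity)
          (by ring)
    _ ≤ t * a + s * c := add_le_add (mul_le_of_le_one_left (by positivity) hp1)
        (mul_le_of_le_one_left (by positivity) (by linarith))

-- Since `|u| ≤ 1`, `exp u ≤ 1 + u + u ^ 2`, and the linear term has mean zero.
lemma lintegral_ofReal_exp_add_le {α : Type*} {mα : MeasurableSpace α} {ν : Measure α}
    [IsProbabilityMeasure ν] {u : α → ℝ} (hu : AEStronglyMeasurable u ν) (hu1 : ∀ y, |u y| ≤ 1)
    (hu0 : ∫ y, u y ∂ν = 0) (a : ℝ) :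
    ∫⁻ y, ENNReal.ofReal (Real.exp (a + u y)) ∂ν ≤
      ENNReal.ofReal (Real.exp a * Real.exp (∫ y, u y ^ 2 ∂ν)) := by
  have hexp : ∀ y, Real.exp (u y) ≤ 1 + u y + u y ^ 2 := fun y => by
    linarith [(abs_le.1 (Real.abs_exp_sub_one_sub_id_le (hu1 y))).2]
  have huint : Integrable u ν := .of_bound hu 1 (.of_forall hu1)
  have h1uint : Integrable (fun y => 1 + u y) ν := (integrable_const 1).add huint
  have husq : Integrable (fun y => u y ^ 2) ν :=
    .of_bound (hu.pow 2) 1 (.of_forall fun y => by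
      rw [Real.norm_of_nonneg (sq_nonneg _)]
      exact (sq_le_one_iff_abs_le_one _).2 (hu1 y))
  have hquad : Integrable (fun y => 1 + u y + u y ^ 2) ν := h1uint.add husq
  calc ∫⁻ y, ENNReal.ofReal (Real.exp (a + u y)) ∂ν
      ≤ ∫⁻ y, ENNReal.ofReal (Real.exp a * (1 + u y + u y ^ 2)) ∂ν :=
        lintegral_mono fun y => ENNReal.ofReal_le_ofReal (by
          rw [Real.exp_add]
          exact mul_le_mul_of_nonneg_left (hexp y) (Real.exp_pos a).le)
    _ = ENNReal.ofReal (Real.exp a * (1 + ∫ y, u y ^ 2 ∂ν)) := by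
        rw [← ofReal_integral_eq_lintegral_ofReal (hquad.const_mul _)
          (.of_forall fun y => mul_nonneg (Real.exp_pos a).le ((Real.exp_pos _).le.trans (hexp y))),
          integral_const_mul, integral_add h1uint husq, integral_add (integrable_const 1) huint,
          hu0]
        simp
    _ ≤ ENNReal.ofReal (Real.exp a * Real.exp (∫ y, u y ^ 2 ∂ν)) :=
        ENNReal.ofReal_le_ofReal (mul_le_mul_of_nonneg_left
          (by linarith [Real.add_one_le_exp (∫ y, u y ^ 2 ∂ν)]) (Real.exp_pos a).le)

lemma lintegral_ofReal_exp_add_mul_sub_integral_le {α : Type*} {mα : MeasurableSpace α}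
    {ν : Measure α} [IsProbabilityMeasure ν] {c : α → ℝ} {B s : ℝ} (hc : AEStronglyMeasurable c ν)
    (hc0 : ∀ y, 0 ≤ c y) (hcB : ∀ y, c y ≤ B) (hs : |s| * B ≤ 1) (a : ℝ) :
    ∫⁻ y, ENNReal.ofReal (Real.exp (a + s * (c y - ∫ z, c z ∂ν))) ∂ν ≤
      ENNReal.ofReal (Real.exp a * Real.exp (s ^ 2 * ∫ y, c y ^ 2 ∂ν)) := by
  have hcint : Integrable c ν :=
    .of_bound hc B (.of_forall fun y => (Real.norm_of_nonneg (hc0 y)).trans_le (hcB y))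
  set D := ∫ z, c z ∂ν
  have hD0 : 0 ≤ D := integral_nonneg hc0
  have hDB : D ≤ B := (integral_mono hcint (integrable_const B) hcB).trans_eq (by simp)
  have hle : ∀ y, |s * (c y - D)| ≤ 1 := fun y => by
    rw [abs_mul]
    exact (mul_le_mul_of_nonneg_left
      (abs_sub_le_of_nonneg_of_le (hc0 y) (hcB y) hD0 hDB) (abs_nonneg s)).trans hs
  have hmean : ∫ y, s * (c y - D) ∂ν = 0 := by
    rw [integral_const_mul, integral_sub hcint (integrable_const D)]
    simp [D]
  have hsq : ∫ y, (s * (c y - D)) ^ 2 ∂ν ≤ s ^ 2 * ∫ y, c y ^ 2 ∂ν := by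
    simp only [mul_pow]
    rw [integral_const_mul, ← ProbabilityTheory.variance_eq_integral hc.aemeasurable]
    exact mul_le_mul_of_nonneg_left (ProbabilityTheory.variance_le_expectation_sq hc) (sq_nonneg s)
  refine (lintegral_ofReal_exp_add_le (u := fun y => s * (c y - D))
    ((hc.sub aestronglyMeasurable_const).const_mul s) hle hmean a).trans ?_
  gcongr

namespace IsDensity

variable {α : Type*} [MeasureSpace α] {q : α → ℝ}

lemma aemeasurable_ofReal (hq : IsDensity q) : AEMeasurable fun y => ENNReal.ofReal (q y) :=
  hq.integrable.aestronglyMeasurable.aemeasurable.ennreal_ofReal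

lemma isProbabilityMeasure_withDensity (hq : IsDensity q) :
    IsProbabilityMeasure (volume.withDensity fun y => ENNReal.ofReal (q y)) :=
  ⟨by rw [withDensity_apply _ .univ, Measure.restrict_univ,
    ← ofReal_integral_eq_lintegral_ofReal hq.integrable (.of_forall hq.nonneg),
    hq.integral_eq_one, ENNReal.ofReal_one]⟩

lemma integral_withDensity (hq : IsDensity q) (φ : α → ℝ) :
    ∫ y, φ y ∂(volume.withDensity fun y => ENNReal.ofReal (q y)) = ∫ y, φ y * q y := by
  rw [integral_withDensity_eq_integral_toReal_smul₀ hq.aemeasurable_ofReal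
    (.of_forall fun _ => ENNReal.ofReal_lt_top)]
  simp only [ENNReal.toReal_ofReal (hq.nonneg _), smul_eq_mul, mul_comm]

lemma lintegral_ofReal_mul_exp_le {c : α → ℝ} {B V s : ℝ} (hq : IsDensity q)
    (hc : AEStronglyMeasurable c) (hc0 : ∀ y, 0 ≤ c y) (hcB : ∀ y, c y ≤ B)
    (hV : ∫ y, c y ^ 2 * q y ≤ V) (hs : |s| * B ≤ 1) (a : ℝ) :
    ∫⁻ y, ENNReal.ofReal (q y) *
        ENNReal.ofReal (Real.exp (a + s * (c y - ∫ z, c z * q z))) ≤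
      ENNReal.ofReal (Real.exp a) * ENNReal.ofReal (Real.exp (s ^ 2 * V)) := by
  have := hq.isProbabilityMeasure_withDensity
  have h := lintegral_ofReal_exp_add_mul_sub_integral_le
    (hc.mono_ac (withDensity_absolutelyContinuous _ _)) hc0 hcB hs a
    (ν := volume.withDensity fun y => ENNReal.ofReal (q y))
  rw [lintegral_withDensity_eq_lintegral_mul_non_measurable₀ _ hq.aemeasurable_ofReal
    (.of_forall fun _ => ENNReal.ofReal_lt_top), hq.integral_withDensity,
    hq.integral_withDensity] at h
  refine h.trans ?_
  rw [← ENNReal.ofReal_mul (Real.exp_pos a).le]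
  gcongr

end IsDensity

namespace Setting

variable {d : ℕ} {η : ℝ} {f q0 K : E d → ℝ} {γ b lam : ℕ → ℝ} {q k : E d → ℝ} {T C β : ℝ}

lemma integrable_mul_sq (P : Setting d η f q0 K γ b lam) (hk : IsTestFunction f C β k) :
    Integrable fun y => f y * k y ^ 2 := by
  refine P.f_density.integrable.mul_bdd (c := (C / β ^ d) ^ 2)
    (hk.measurable.pow_const 2).aestronglyMeasurable (.of_forall fun y => ?_)
  rw [Real.norm_of_nonneg (sq_nonneg _)]
  exact pow_le_pow_left₀ (hk.nonneg y) (hk.le y) 2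

lemma truncWeight_rpow_mul_sq_mul (P : Setting d η f q0 K γ b lam) (hq : IsDensity q)
    (hT : 0 ≤ T) (y : E d) : (truncWeight f q T y ^ η * k y) ^ 2 * q y =
      truncWeight f q T y ^ (2 * η) * q y * k y ^ 2 := by
  rw [mul_pow, mul_comm 2 η,
    ← Real.rpow_mul_natCast (truncWeight_nonneg (P.f_density.nonneg y) (hq.nonneg y) hT) η 2,
    Nat.cast_ofNat, mul_right_comm]

lemma integral_sq_mul_le_of_half_le (P : Setting d η f q0 K γ b lam) (hq : IsDensity q)
    (hT : 0 ≤ T) (hη : 1 / 2 ≤ η) (hk : IsTestFunction f C β k) :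
    ∫ y, (truncWeight f q T y ^ η * k y) ^ 2 * q y ≤ T ^ (2 * η - 1) * (C / β ^ d) := by
  calc ∫ y, (truncWeight f q T y ^ η * k y) ^ 2 * q y
      ≤ ∫ y, T ^ (2 * η - 1) * (f y * k y ^ 2) :=
        integral_mono_of_nonneg (.of_forall fun y => mul_nonneg (sq_nonneg _) (hq.nonneg y))
          ((P.integrable_mul_sq hk).const_mul _) (.of_forall fun y => by
            dsimp only
            rw [P.truncWeight_rpow_mul_sq_mul hq hT, ← mul_assoc]
            exact mul_le_mul_of_nonneg_right (truncWeight_rpow_mul_le_rpow_sub_one_mul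
              (by linarith) (P.f_density.nonneg y) (hq.nonneg y) hT) (sq_nonneg _))
    _ ≤ T ^ (2 * η - 1) * (C / β ^ d) := by
        rw [integral_const_mul]
        exact mul_le_mul_of_nonneg_left hk.integral_mul_sq_le (Real.rpow_nonneg hT _)

lemma integral_sq_mul_le_of_lt_half (P : Setting d η f q0 K γ b lam) (hq : IsDensity q)
    (hT : 0 ≤ T) (hη : η < 1 / 2) (hβ : 0 < β) (hk : IsTestFunction f C β k) :
    ∫ y, (truncWeight f q T y ^ η * k y) ^ 2 * q y ≤
      (C + C ^ 2) * β ^ (-(2 * (d : ℝ) * (1 - η))) := by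
  have hη0 := P.η_pos
  set t := β ^ (-((1 - 2 * η) * d))
  set s := β ^ (2 * η * d)
  have hbound : ∀ y, (truncWeight f q T y ^ η * k y) ^ 2 * q y ≤
      t * (f y * k y ^ 2) + s * (C / β ^ d) ^ 2 * q y := fun y => by
    have hf := P.f_density.nonneg y
    have hqy := hq.nonneg y
    have hkC := pow_le_pow_left₀ (hk.nonneg y) (hk.le y) 2
    calc (truncWeight f q T y ^ η * k y) ^ 2 * q y
        = truncWeight f q T y ^ (2 * η) * q y * k y ^ 2 := P.truncWeight_rpow_mul_sq_mul hq hT y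
      _ ≤ (t * f y + s * q y) * k y ^ 2 := by
          gcongr
          exact (Midas.truncWeight_rpow_mul_le (by linarith) (by linarith) hf hqy hT).trans
            (rpow_mul_rpow_le_rpow_mul_add (by linarith) (by linarith) hβ hf hqy d)
      _ = t * (f y * k y ^ 2) + s * k y ^ 2 * q y := by ring
      _ ≤ t * (f y * k y ^ 2) + s * (C / β ^ d) ^ 2 * q y := by gcongr
  have hfk := (P.integrable_mul_sq hk).const_mul t
  have hsq := hq.integrable.const_mul (s * (C / β ^ d) ^ 2)
  have ht : t * (C / β ^ d) = C * β ^ (-(2 * (d : ℝ) * (1 - η))) := by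
    rw [← Real.rpow_natCast β d, mul_div_left_comm, ← Real.rpow_sub hβ]
    ring_nf
  have hs : s * (C / β ^ d) ^ 2 = C ^ 2 * β ^ (-(2 * (d : ℝ) * (1 - η))) := by
    rw [div_pow, ← Real.rpow_natCast β d, ← Real.rpow_mul_natCast hβ.le, mul_div_left_comm,
      ← Real.rpow_sub hβ, Nat.cast_ofNat]
    ring_nf
  calc ∫ y, (truncWeight f q T y ^ η * k y) ^ 2 * q y
      ≤ ∫ y, (t * (f y * k y ^ 2) + s * (C / β ^ d) ^ 2 * q y) :=
        integral_mono_of_nonneg (.of_forall fun y => mul_nonneg (sq_nonneg _) (hq.nonneg y))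
          (hfk.add hsq) (.of_forall hbound)
    _ = t * (∫ y, f y * k y ^ 2) + s * (C / β ^ d) ^ 2 := by
        rw [integral_add hfk hsq, integral_const_mul, integral_const_mul, hq.integral_eq_one,
          mul_one]
    _ ≤ t * (C / β ^ d) + s * (C / β ^ d) ^ 2 := by gcongr; exact hk.integral_mul_sq_le
    _ = (C + C ^ 2) * β ^ (-(2 * (d : ℝ) * (1 - η))) := by rw [ht, hs]; ring

lemma varFactor_pos (P : Setting d η f q0 K γ b lam) (n : ℕ) : 0 < varFactor η d lam b n := by
  have := P.lam_pos n
  have := P.b_pos n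
  unfold varFactor
  split_ifs <;> positivity

lemma varFactor_mono (P : Setting d η f q0 K γ b lam) : Monotone (varFactor η d lam b) := by
  intro m n hmn
  have hlam := P.lam_pos n
  have hb := P.b_pos n
  have hlam_le := P.lam_antitone hmn
  have hb_le := P.b_antitone hmn
  have hη := P.η_lt_one.le
  unfold varFactor
  split_ifs
  · have := Real.rpow_le_rpow_of_nonpos hlam hlam_le (z := -(2 * η - 1)) (by linarith)
    have := P.b_pos m
    gcongr
  · exact Real.rpow_le_rpow_of_nonpos hb hb_le
      (neg_nonpos.2 (mul_nonneg (by positivity) (sub_nonneg.2 hη)))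

/-- A bound on the conditional second moment of the noise increments, for truncated weights and
kernels of constant `C`. -/
noncomputable def varBound (P : Setting d η f q0 K γ b lam) (C : ℝ) (n : ℕ) : ℝ :=
  (C + C ^ 2) * (1 + 2 / P.c) * varFactor η d lam b n

lemma varBound_nonneg (P : Setting d η f q0 K γ b lam) (hC : 0 ≤ C) (n : ℕ) :
    0 ≤ P.varBound C n := by
  have := P.c_pos
  have := P.varFactor_pos n
  unfold varBound
  positivity

lemma varBound_mono (P : Setting d η f q0 K γ b lam) (hC : 0 ≤ C) : Monotone (P.varBound C) := by
  have := P.c_pos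
  exact P.varFactor_mono.const_mul (by positivity)

lemma integral_sq_mul_le_varBound (P : Setting d η f q0 K γ b lam) (hq : IsDensity q)
    (hC : 0 ≤ C) {n : ℕ} (hk : IsTestFunction f C (b (n + 1)) k) :
    ∫ y, (truncWeight f q (P.clip n) y ^ η * k y) ^ 2 * q y ≤ P.varBound C (n + 1) := by
  have hV := P.varFactor_pos (n + 1)
  have hc : 0 < 2 / P.c := div_pos two_pos P.c_pos
  have hlam := P.lam_pos (n + 1)
  have hb := P.b_pos (n + 1)
  by_cases hη : 1 / 2 ≤ η
  · have hconst : (2 / P.c) ^ (2 * η - 1) ≤ 1 + 2 / P.c := by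
      rcases le_total (2 / P.c) 1 with h | h
      · exact (Real.rpow_le_one hc.le h (by linarith)).trans (by linarith)
      · exact (Real.rpow_le_self_of_one_le h (by linarith [P.η_lt_one])).trans (by linarith)
    refine (P.integral_sq_mul_le_of_half_le hq (P.clip_pos n).le hη hk).trans ?_
    calc P.clip n ^ (2 * η - 1) * (C / b (n + 1) ^ d)
        = C * (2 / P.c) ^ (2 * η - 1) * varFactor η d lam b (n + 1) := by
          rw [clip, ← div_div, Real.div_rpow hc.le hlam.le, varFactor, if_pos hη,
            Real.rpow_neg hlam.le]
          ring
      _ ≤ P.varBound C (n + 1) := by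
          unfold varBound
          gcongr
          exact le_add_of_nonneg_right (sq_nonneg C)
  · refine (P.integral_sq_mul_le_of_lt_half hq (P.clip_pos n).le (not_le.1 hη) hb hk).trans ?_
    rw [varBound, varFactor, if_neg hη]
    gcongr
    exact le_mul_of_one_le_right (by positivity) (by linarith)

lemma lintegral_ofReal_mul_exp_le (P : Setting d η f q0 K γ b lam) (hq : IsDensity q)
    (hC : 0 ≤ C) {n : ℕ} (hk : IsTestFunction f C (b (n + 1)) k) {s : ℝ}
    (hs : |s| * P.rangeBound C (n + 1) ≤ 1) (a : ℝ) :
    ∫⁻ y, ENNReal.ofReal (q y) * ENNReal.ofReal (Real.exp (a + s *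
        (truncWeight f q (P.clip n) y ^ η * k y - drift η f q (P.clip n) k))) ≤
      ENNReal.ofReal (Real.exp a) * ENNReal.ofReal (Real.exp (s ^ 2 * P.varBound C (n + 1))) :=
  hq.lintegral_ofReal_mul_exp_le (aestronglyMeasurable_truncWeight_rpow_mul P.f_continuous
      hq.integrable hk.measurable.aestronglyMeasurable)
    (P.truncWeight_rpow_mul_nonneg hq (P.clip_pos n).le hk)
    (P.truncWeight_rpow_mul_le hq (P.clip_pos n).le hk)
    (P.integral_sq_mul_le_varBound hq hC hk) hs a

end Setting

/-! ### Concentration of the noise -/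

section Concentration

section Measurability

variable {S : Type*} {mS : MeasurableSpace S} {d : ℕ} {η : ℝ} {f k : E d → ℝ}
  {p : S → E d → ℝ} {γ : ℕ → ℝ} {a : ℕ → S → ℝ} {m n : ℕ}

lemma measurable_uncurry_truncWeight_rpow_mul (hf : Measurable f) (hk : Measurable k)
    (hp : Measurable (Function.uncurry p)) (T η : ℝ) :
    Measurable (Function.uncurry fun s y => truncWeight f (p s) T y ^ η * k y) :=
  ((((hf.comp measurable_snd).div hp).min measurable_const).pow_const η).mul
    (hk.comp measurable_snd)

lemma measurable_uncurry_truncWeight_rpow_mul_sub_drift (hf : Measurable f) (hk : Measurable k)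
    (hp : Measurable (Function.uncurry p)) (T η : ℝ) :
    Measurable (Function.uncurry fun s y =>
      truncWeight f (p s) T y ^ η * k y - drift η f (p s) T k) := by
  have h := measurable_uncurry_truncWeight_rpow_mul hf hk hp T η
  have hdrift : Measurable fun s => drift η f (p s) T k :=
    (StronglyMeasurable.integral_prod_right
      (f := fun s y => truncWeight f (p s) T y ^ η * k y * p s y)
      (h.mul hp).stronglyMeasurable).measurable
  exact h.sub (hdrift.comp measurable_fst)

lemma measurable_uncurry_ofReal_exp_add_mul {u : S → ℝ} {v : S → E d → ℝ} (hu : Measurable u)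
    (hv : Measurable (Function.uncurry v)) (t c : ℝ) :
    Measurable (Function.uncurry fun s y =>
      ENNReal.ofReal (Real.exp (t * u s + c * v s y))) :=
  (((hu.comp measurable_fst).const_mul t).add (hv.const_mul c)).exp.ennreal_ofReal

lemma measurable_avg (h : ∀ j, m ≤ j → j < n → Measurable (a j)) :
    Measurable fun s => avg γ m (fun j => a j s) n :=
  Finset.measurable_sum _ fun j hj =>
    ((h j (Finset.mem_Ico.1 hj).1 (Finset.mem_Ico.1 hj).2).const_mul _).const_mul _

end Measurability

section Chernoff

variable {Ω : Type*} {mΩ : MeasurableSpace Ω} {μ : Measure Ω} {Y : Ω → ℝ} {s V : ℝ}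

lemma measure_lt_le_ofReal_exp (hY : AEMeasurable Y μ) (hs : 0 < s)
    (h : ∫⁻ ω, ENNReal.ofReal (Real.exp (s * Y ω)) ∂μ ≤ ENNReal.ofReal (Real.exp V)) (a : ℝ) :
    μ {ω | a < Y ω} ≤ ENNReal.ofReal (Real.exp (V - s * a)) := by
  have hpos : 0 < Real.exp (s * a) := Real.exp_pos _
  calc μ {ω | a < Y ω}
      ≤ μ {ω | ENNReal.ofReal (Real.exp (s * a)) ≤ ENNReal.ofReal (Real.exp (s * Y ω))} := by
        refine measure_mono fun ω hω => ENNReal.ofReal_le_ofReal (Real.exp_le_exp.2 ?_)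
        exact mul_le_mul_of_nonneg_left hω.le hs.le
    _ ≤ (∫⁻ ω, ENNReal.ofReal (Real.exp (s * Y ω)) ∂μ) / ENNReal.ofReal (Real.exp (s * a)) :=
        meas_ge_le_lintegral_div (hY.const_mul s).exp.ennreal_ofReal
          (ENNReal.ofReal_pos.2 hpos).ne' ENNReal.ofReal_ne_top
    _ ≤ ENNReal.ofReal (Real.exp (V - s * a)) := by
        rw [Real.exp_sub, ENNReal.ofReal_div_of_pos hpos]
        exact ENNReal.div_le_div_right h _

lemma measure_lt_abs_le_ofReal_exp (hY : AEMeasurable Y μ) (hs : 0 < s)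
    (h : ∫⁻ ω, ENNReal.ofReal (Real.exp (s * Y ω)) ∂μ ≤ ENNReal.ofReal (Real.exp V))
    (h' : ∫⁻ ω, ENNReal.ofReal (Real.exp (-s * Y ω)) ∂μ ≤ ENNReal.ofReal (Real.exp V)) (a : ℝ) :
    μ {ω | a < |Y ω|} ≤ ENNReal.ofReal (2 * Real.exp (V - s * a)) := by
  have hneg := measure_lt_le_ofReal_exp hY.neg hs (by simpa using h') a
  calc μ {ω | a < |Y ω|} = μ ({ω | a < Y ω} ∪ {ω | a < -Y ω}) := by
        simp only [lt_abs, Set.ofPred_or]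
    _ ≤ ENNReal.ofReal (Real.exp (V - s * a)) + ENNReal.ofReal (Real.exp (V - s * a)) :=
        (measure_union_le _ _).trans (add_le_add (measure_lt_le_ofReal_exp hY hs h a) hneg)
    _ = ENNReal.ofReal (2 * Real.exp (V - s * a)) := by
        rw [two_mul, ENNReal.ofReal_add (Real.exp_pos _).le (Real.exp_pos _).le]

end Chernoff

variable {Ω : Type*} {mΩ : MeasurableSpace Ω} {μ : Measure Ω} {d : ℕ} {η : ℝ}
  {f q0 K : E d → ℝ} {γ b lam : ℕ → ℝ} {P : Setting d η f q0 K γ b lam}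
  {X : ℕ → Ω → E d} {g q : ℕ → Ω → E d → ℝ} {k : ℕ → E d → ℝ} {C : ℝ} {n : ℕ}

namespace Setting

lemma varianceProxy_succ_le (P : Setting d η f q0 K γ b lam) (hC : 0 ≤ C) (hn : P.N ≤ n) (s : ℝ) :
    (s * (1 - γ (n + 1))) ^ 2 * (n * γ n ^ 2 * P.varBound C n)
        + (s * γ (n + 1)) ^ 2 * P.varBound C (n + 1) ≤
      s ^ 2 * ((n + 1 : ℕ) * γ (n + 1) ^ 2 * P.varBound C (n + 1)) := by
  have hγ1 : 0 ≤ 1 - γ (n + 1) := sub_nonneg.2 (P.γ_lt_one (hn.trans n.le_succ)).le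
  have hγ : (γ n * (1 - γ (n + 1))) ^ 2 ≤ γ (n + 1) ^ 2 :=
    pow_le_pow_left₀ (mul_nonneg (P.γ_pos n).le hγ1) (P.γ_mul_one_sub_le n hn) 2
  have hV : P.varBound C n ≤ P.varBound C (n + 1) := P.varBound_mono hC n.le_succ
  have hV0 := P.varBound_nonneg hC n
  calc (s * (1 - γ (n + 1))) ^ 2 * (n * γ n ^ 2 * P.varBound C n)
        + (s * γ (n + 1)) ^ 2 * P.varBound C (n + 1)
      = s ^ 2 * (n * ((γ n * (1 - γ (n + 1))) ^ 2 * P.varBound C n)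
          + γ (n + 1) ^ 2 * P.varBound C (n + 1)) := by ring
    _ ≤ s ^ 2 * (n * (γ (n + 1) ^ 2 * P.varBound C (n + 1))
          + γ (n + 1) ^ 2 * P.varBound C (n + 1)) := by gcongr
    _ = s ^ 2 * ((n + 1 : ℕ) * γ (n + 1) ^ 2 * P.varBound C (n + 1)) := by push_cast; ring

lemma eventually_mul_rangeBound_le_one (P : Setting d η f q0 K γ b lam) (hC : 0 < C) {M : ℝ}
    (hM : 0 < M) :
    ∀ᶠ n : ℕ in atTop, M * Real.log n / lam n ^ (1 - η) * γ n * P.rangeBound C n ≤ 1 := by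
  have hc := P.c_pos
  have hR : 0 < M * (2 / P.c) ^ η * C := by positivity
  filter_upwards [P.tendsto_range.eventually_le_const (one_div_pos.2 hR)] with n h
  have hlam := P.lam_pos n
  have hsplit : lam n ^ (1 - η) * lam n ^ η = lam n := by
    rw [← Real.rpow_add hlam, sub_add_cancel, Real.rpow_one]
  calc M * Real.log n / lam n ^ (1 - η) * γ n * P.rangeBound C n
      = M * (2 / P.c) ^ η * C * (γ n * Real.log n / (lam n ^ (1 - η) * lam n ^ η * b n ^ d)) := by
        rw [rangeBound, ← div_div 2, Real.div_rpow (by positivity) hlam.le]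
        ring
    _ ≤ 1 := by
        rw [hsplit, mul_comm]
        exact (le_div_iff₀ hR).1 h

lemma eventually_varianceProxy_le_log (P : Setting d η f q0 K γ b lam) (hC : 0 < C) {M : ℝ}
    (hM : 0 < M) :
    ∀ᶠ n : ℕ in atTop, (M * Real.log n / lam n ^ (1 - η)) ^ 2 * (n * γ n ^ 2 * P.varBound C n) ≤
      Real.log n := by
  have hc := P.c_pos
  have hV : 0 < M ^ 2 * ((C + C ^ 2) * (1 + 2 / P.c)) := by positivity
  filter_upwards [P.tendsto_variance.eventually_le_const (one_div_pos.2 hV)] with n h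
  have hsq : lam n ^ (2 * (1 - η)) = (lam n ^ (1 - η)) ^ 2 := by
    rw [mul_comm, ← Real.rpow_mul_natCast (P.lam_pos n).le, Nat.cast_ofNat]
  rw [hsq, le_div_iff₀ hV] at h
  calc (M * Real.log n / lam n ^ (1 - η)) ^ 2 * (n * γ n ^ 2 * P.varBound C n)
      = n * γ n ^ 2 * Real.log n * varFactor η d lam b n / (lam n ^ (1 - η)) ^ 2
          * (M ^ 2 * ((C + C ^ 2) * (1 + 2 / P.c))) * Real.log n := by
        rw [varBound]
        ring
    _ ≤ Real.log n := mul_le_of_le_one_left (Real.log_natCast_nonneg n) h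

end Setting

namespace Algorithm

lemma measurable_uncurry_increment (A : Algorithm P μ X g q) (hk : Measurable (k n)) :
    Measurable[(natFilt X n).prod inferInstance] (Function.uncurry fun ω y =>
      truncWeight f (q n ω) (P.clip n) y ^ η * k n y - drift η f (q n ω) (P.clip n) (k n)) :=
  measurable_uncurry_truncWeight_rpow_mul_sub_drift P.f_continuous.measurable hk
    (A.measurable_uncurry n).2 _ _

lemma measurable_avgNoise (A : Algorithm P μ X g q) (hk : ∀ j, P.N ≤ j → Measurable (k j))
    (n : ℕ) :
    Measurable[natFilt X n] fun ω => P.avgNoise (fun j => q j ω) (fun j => X j ω) k n := by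
  refine measurable_avg fun j hNj hjn => ?_
  have hX : Measurable[natFilt X n] (X (j + 1)) :=
    measurable_iff_comap_le.2 (comap_le_natFilt j.succ_pos hjn)
  exact measurable_apply_of_uncurry (A.measurable_uncurry_increment (hk j hNj))
    (measurable_id'' (natFilt_mono hjn.le)) hX

variable [IsProbabilityMeasure μ]

lemma lintegral_exp_avgNoise_succ_le (A : Algorithm P μ X g q) (hC : 0 ≤ C)
    (hk : ∀ j, P.N ≤ j → IsTestFunction f C (b (j + 1)) (k j)) (hn : P.N ≤ n) {s : ℝ}
    (hs : |s * γ (n + 1)| * P.rangeBound C (n + 1) ≤ 1) :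
    ∫⁻ ω, ENNReal.ofReal
        (Real.exp (s * P.avgNoise (fun j => q j ω) (fun j => X j ω) k (n + 1))) ∂μ ≤
      (∫⁻ ω, ENNReal.ofReal
        (Real.exp (s * (1 - γ (n + 1)) * P.avgNoise (fun j => q j ω) (fun j => X j ω) k n)) ∂μ) *
      ENNReal.ofReal (Real.exp ((s * γ (n + 1)) ^ 2 * P.varBound C (n + 1))) := by
  let Φ : Ω → E d → ℝ≥0∞ := fun ω y => ENNReal.ofReal (Real.exp
    (s * (1 - γ (n + 1)) * P.avgNoise (fun j => q j ω) (fun j => X j ω) k n + s * γ (n + 1) *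
      (truncWeight f (q n ω) (P.clip n) y ^ η * k n y - drift η f (q n ω) (P.clip n) (k n))))
  have hΦ : Measurable[(natFilt X n).prod inferInstance] (Function.uncurry Φ) :=
    measurable_uncurry_ofReal_exp_add_mul
      (A.measurable_avgNoise (fun j hj => (hk j hj).measurable) n)
      (A.measurable_uncurry_increment (hk n hn).measurable) _ _
  calc ∫⁻ ω, ENNReal.ofReal
        (Real.exp (s * P.avgNoise (fun j => q j ω) (fun j => X j ω) k (n + 1))) ∂μ
      = ∫⁻ ω, Φ ω (X (n + 1) ω) ∂μ := by
        refine lintegral_congr fun ω => ?_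
        rw [Setting.avgNoise, avg_succ hn, mul_add, ← mul_assoc, ← mul_assoc]
        rfl
    _ = ∫⁻ ω, ∫⁻ y, ENNReal.ofReal (q n ω y) * Φ ω y ∂volume ∂μ :=
        A.lintegral_apply_X_succ (P.one_le_N.trans hn) hΦ
    _ ≤ ∫⁻ ω, ENNReal.ofReal
          (Real.exp (s * (1 - γ (n + 1)) * P.avgNoise (fun j => q j ω) (fun j => X j ω) k n)) *
        ENNReal.ofReal (Real.exp ((s * γ (n + 1)) ^ 2 * P.varBound C (n + 1))) ∂μ :=
        lintegral_mono_ae ((A.ae_isDensity (P.one_le_N.trans hn)).mono fun ω hq =>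
          P.lintegral_ofReal_mul_exp_le hq hC (hk n hn) hs _)
    _ = _ := lintegral_mul_const' _ _ ENNReal.ofReal_ne_top

/-- The sub-Gaussian bound for the averaged noise, valid up to the inverse of its range: the
recursion keeps the variance proxy below `n γ_n²` times the one-step bound. -/
theorem lintegral_exp_avgNoise_le (A : Algorithm P μ X g q) (hC : 0 ≤ C)
    (hk : ∀ j, P.N ≤ j → IsTestFunction f C (b (j + 1)) (k j)) (hn : P.N ≤ n) :
    ∀ s : ℝ, |s| * γ n * P.rangeBound C n ≤ 1 →
      ∫⁻ ω, ENNReal.ofReal (Real.exp (s * P.avgNoise (fun j => q j ω) (fun j => X j ω) k n)) ∂μ ≤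
        ENNReal.ofReal (Real.exp (s ^ 2 * (n * γ n ^ 2 * P.varBound C n))) := by
  induction n, hn using Nat.le_induction with
  | base =>
    intro s _
    have hV := P.varBound_nonneg hC P.N
    simpa [Setting.avgNoise] using by positivity
  | succ n hn ih =>
    intro s hs
    have hγ1 : 0 ≤ 1 - γ (n + 1) := sub_nonneg.2 (P.γ_lt_one (hn.trans n.le_succ)).le
    have hs_incr : |s * γ (n + 1)| * P.rangeBound C (n + 1) ≤ 1 := by
      rwa [abs_mul, abs_of_pos (P.γ_pos _)]
    have hs_prev : |s * (1 - γ (n + 1))| * γ n * P.rangeBound C n ≤ 1 := by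
      rw [abs_mul, abs_of_nonneg hγ1, mul_assoc |s|, mul_comm (1 - _)]
      have := P.rangeBound_nonneg hC n
      have := P.rangeBound_mono hC n.le_succ
      have := P.γ_mul_one_sub_le n hn
      have := P.γ_pos (n + 1)
      exact le_trans (by gcongr) hs
    refine (A.lintegral_exp_avgNoise_succ_le hC hk hn hs_incr).trans ?_
    refine (mul_le_mul_left (ih _ hs_prev) _).trans ?_
    rw [← ENNReal.ofReal_mul (Real.exp_pos _).le, ← Real.exp_add]
    exact ENNReal.ofReal_le_ofReal (Real.exp_le_exp.2 (P.varianceProxy_succ_le hC hn s))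

theorem eventually_measure_lt_abs_avgNoise_le (A : Algorithm P μ X g q) (hC : 0 < C) (p : ℕ) {τ : ℝ}
    (hτ : 0 < τ) :
    ∀ᶠ n : ℕ in atTop, ∀ k : ℕ → E d → ℝ,
      (∀ j, P.N ≤ j → IsTestFunction f C (b (j + 1)) (k j)) →
      μ {ω | τ * lam n ^ (1 - η) < |P.avgNoise (fun j => q j ω) (fun j => X j ω) k n|} ≤
        ENNReal.ofReal (2 / n ^ p) := by
  have hM : 0 < (p + 1) / τ := by positivity
  filter_upwards [P.eventually_mul_rangeBound_le_one hC hM, P.eventually_varianceProxy_le_log hC hM,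
    eventually_ge_atTop P.N, eventually_gt_atTop 1] with n hrange hvar hn hn1 k hk
  have hlam : 0 < lam n ^ (1 - η) := Real.rpow_pos_of_pos (P.lam_pos n) _
  have hlog : 0 < Real.log n := Real.log_pos (Nat.one_lt_cast.2 hn1)
  set s := (p + 1) / τ * Real.log n / lam n ^ (1 - η) with hs
  have hs0 : 0 < s := by positivity
  have hY := (A.measurable_avgNoise (fun j hj => (hk j hj).measurable) n).mono
    (A.natFilt_le n) le_rfl
  have hmgf := A.lintegral_exp_avgNoise_le hC.le hk hn
  have hneg := hmgf (-s) (by rwa [abs_neg, abs_of_pos hs0])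
  rw [neg_sq] at hneg
  refine (measure_lt_abs_le_ofReal_exp hY.aemeasurable hs0 (hmgf s (by rwa [abs_of_pos hs0])) hneg
    _).trans (ENNReal.ofReal_le_ofReal ?_)
  have hst : s * (τ * lam n ^ (1 - η)) = (p + 1) * Real.log n := by
    rw [hs]
    field_simp
  calc 2 * Real.exp (s ^ 2 * (n * γ n ^ 2 * P.varBound C n) - s * (τ * lam n ^ (1 - η)))
      ≤ 2 * Real.exp (-(p * Real.log n)) := by
        gcongr
        linarith
    _ = 2 / n ^ p := by
        rw [Real.exp_neg, ← Real.log_pow, Real.exp_log (by positivity), div_eq_mul_inv]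

end Algorithm

end Concentration

/-! ### Uniform control of the noise -/

section BorelCantelli

variable {Ω : Type*} {mΩ : MeasurableSpace Ω} {μ : Measure Ω}

lemma ae_eventually_notMem_of_eventually_measure_le {s : ℕ → Set Ω} {u : ℕ → ℝ} (hu : Summable u)
    (h : ∀ᶠ n in atTop, μ (s n) ≤ ENNReal.ofReal (u n)) : ∀ᵐ ω ∂μ, ∀ᶠ n in atTop, ω ∉ s n := by
  obtain ⟨m, hm⟩ := eventually_atTop.1 h
  have hsum : ∑' n, μ (s (n + m)) ≠ ∞ :=
    ne_top_of_le_ne_top ((summable_nat_add_iff m).2 hu).tsum_ofReal_ne_top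
      (ENNReal.tsum_le_tsum fun n => hm _ (Nat.le_add_left m n))
  filter_upwards [ae_eventually_notMem hsum] with ω hω
  rw [← map_add_atTop_eq_nat m]
  exact eventually_map.2 hω

lemma ae_forall_pos_of_monotone {p : ℝ → Ω → Prop} (hp : ∀ ω, Monotone fun τ => p τ ω)
    (h : ∀ τ > 0, ∀ᵐ ω ∂μ, p τ ω) : ∀ᵐ ω ∂μ, ∀ τ > 0, p τ ω := by
  have hseq : ∀ᵐ ω ∂μ, ∀ m : ℕ, p (1 / ((m : ℝ) + 1)) ω :=
    ae_all_iff.2 fun m => h _ Nat.one_div_pos_of_nat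
  filter_upwards [hseq] with ω hω τ hτ
  obtain ⟨m, hm⟩ := exists_nat_one_div_lt hτ
  exact hp ω hm.le (hω m)

end BorelCantelli

lemma exists_finset_card_le_forall_norm_sub_le (d R : ℕ) {m : ℕ} (hm : 0 < m) :
    ∃ t : Finset (E d), t.card ≤ (2 * (R * m) + 1) ^ d ∧
      ∀ x : E d, ‖x‖ ≤ R → ∃ y ∈ t, ‖x - y‖ ≤ d / m := by
  have hm0 : (0 : ℝ) < m := Nat.cast_pos.2 hm
  let box : Finset (Fin d → ℤ) := Fintype.piFinset fun _ => Finset.Icc (-(R * m : ℕ)) (R * m : ℕ)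
  refine ⟨box.image fun z => WithLp.toLp 2 fun i => (z i : ℝ) / m, ?_, fun x hx => ?_⟩
  · refine Finset.card_image_le.trans_eq ?_
    rw [Fintype.card_piFinset, Finset.prod_const, Finset.card_fin, Int.card_Icc]
    congr 1
    omega
  refine ⟨_, Finset.mem_image_of_mem _ (Fintype.mem_piFinset.2 fun i => ?_ :
    (fun i => ⌊x i * m⌋) ∈ box), ?_⟩
  · have hxi := abs_le.1 ((PiLp.norm_apply_le x i).trans hx)
    rw [Finset.mem_Icc, Int.le_floor, Int.floor_le_iff]
    push_cast
    constructor <;> nlinarith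
  · have hcoord (i : Fin d) : |x i - ⌊x i * m⌋ / m| ≤ 1 / m := by
      rw [sub_div' hm0.ne', abs_div, abs_of_pos hm0, Int.self_sub_floor,
        abs_of_nonneg (Int.fract_nonneg _)]
      exact div_le_div_of_nonneg_right (Int.fract_lt_one _).le hm0.le
    refine abs_le_of_sq_le_sq' ?_ (by positivity) |>.2
    calc ‖x - WithLp.toLp 2 fun i => (⌊x i * m⌋ : ℝ) / m‖ ^ 2
        = ∑ i, |x i - ⌊x i * m⌋ / m| ^ 2 := by simp [EuclideanSpace.norm_sq_eq]
      _ ≤ ∑ _i : Fin d, (1 / (m : ℝ)) ^ 2 := by gcongr with i; exact hcoord i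
      _ = d * (1 / (m : ℝ)) ^ 2 := by simp
      _ ≤ (d : ℝ) ^ 2 * (1 / (m : ℝ)) ^ 2 := by
        gcongr
        exact_mod_cast Nat.le_self_pow two_ne_zero d
      _ = (d / m) ^ 2 := by ring

namespace Setting

variable {d : ℕ} {η : ℝ} {f q0 K : E d → ℝ} {γ b lam : ℕ → ℝ}

lemma abs_increment_sub_le (P : Setting d η f q0 K γ b lam) {q k k' : E d → ℝ} (hq : IsDensity q)
    {T C β D : ℝ} (hT : 0 ≤ T) (hk : IsTestFunction f C β k) (hk' : IsTestFunction f C β k')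
    (hD : ∀ y, |k y - k' y| ≤ D) (x : E d) :
    |(truncWeight f q T x ^ η * k x - drift η f q T k) -
      (truncWeight f q T x ^ η * k' x - drift η f q T k')| ≤ 2 * (T ^ η * D) := by
  have hpt (y : E d) : |truncWeight f q T y ^ η * k y - truncWeight f q T y ^ η * k' y|
      ≤ T ^ η * D := by
    rw [← mul_sub, abs_mul, abs_of_nonneg
      (truncWeight_rpow_nonneg (P.f_density.nonneg y) (hq.nonneg y) hT)]
    exact mul_le_mul (truncWeight_rpow_le P.η_pos.le (P.f_density.nonneg y) (hq.nonneg y) hT)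
      (hD y) (abs_nonneg _) (Real.rpow_nonneg hT _)
  have hdrift : |drift η f q T k - drift η f q T k'| ≤ T ^ η * D := by
    rw [drift, drift, ← integral_sub
      (P.integrable_truncWeight_rpow_mul_testFunction_mul hq hT hk)
      (P.integrable_truncWeight_rpow_mul_testFunction_mul hq hT hk'), ← Real.norm_eq_abs]
    refine (norm_integral_le_of_norm_le (hq.integrable.const_mul (T ^ η * D))
      (.of_forall fun y => ?_)).trans_eq ?_
    · rw [← sub_mul, norm_mul, Real.norm_of_nonneg (hq.nonneg y), Real.norm_eq_abs]
      exact mul_le_mul_of_nonneg_right (hpt y) (hq.nonneg y)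
    · rw [integral_const_mul, hq.integral_eq_one, mul_one]
  rw [sub_sub_sub_comm, two_mul]
  exact (abs_sub _ _).trans (add_le_add (hpt x) hdrift)

lemma abs_avgNoise_kernelAt_sub_le (P : Setting d η f q0 K γ b lam) {q : ℕ → E d → ℝ}
    (hq : ∀ n, P.N ≤ n → IsDensity (q n)) (X : ℕ → E d) (x y : E d) (n : ℕ) :
    |P.avgNoise q X (kernelAt K b x) n - P.avgNoise q X (kernelAt K b y) n| ≤
      2 * ((2 / (P.c * lam n)) ^ η * (P.L / b n ^ (d + 1) * ‖x - y‖)) := by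
  have hc := P.c_pos
  have hb := P.b_pos n
  have hlam := P.lam_pos n
  have hη := P.η_pos.le
  rw [avgNoise, avgNoise, ← avg_sub]
  refine abs_avg_le (by positivity) (fun j _ => (P.γ_pos j).le) (P.γ_lt_one_of_lt le_rfl)
    fun k hk hkn => ?_
  have hbk := P.b_antitone (Nat.succ_le_of_lt hkn)
  have hlamk := P.lam_antitone (Nat.succ_le_of_lt hkn)
  refine (P.abs_increment_sub_le (hq k hk) (P.clip_pos k).le (P.isTestFunction_kernelAt x k hk)
    (P.isTestFunction_kernelAt y k hk) (D := P.L / b n ^ (d + 1) * ‖x - y‖) (fun z => ?_) _).trans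
    ?_
  · refine (abs_kb_sub_kb_le P.K_lipschitz (P.b_pos _) _ _).trans ?_
    rw [sub_sub_sub_cancel_right]
    gcongr
  · have := (P.clip_pos k).le
    unfold clip at this ⊢
    gcongr

lemma eventually_oscillation_le (P : Setting d η f q0 K γ b lam) {τ : ℝ} (hτ : 0 < τ) :
    ∀ᶠ n : ℕ in atTop, 2 * ((2 / (P.c * lam n)) ^ η * (P.L / b n ^ (d + 1) * (d / n ^ 3)))
      ≤ τ * lam n ^ (1 - η) := by
  set M := 2 * (2 / P.c) ^ η * P.L * d with hM_def
  have hc := P.c_pos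
  have hsmall : ∀ᶠ n : ℕ in atTop, M / n ≤ τ :=
    (tendsto_const_div_atTop_nhds_zero_nat M).eventually_le_const hτ
  filter_upwards [hsmall, P.eventually_inv_mul_pow_le one_pos, eventually_ge_atTop P.N,
    eventually_gt_atTop 0] with n hsmall hinv hn hn0
  have hb := P.b_pos n
  have hlam := P.lam_pos n
  have hn0 : (0 : ℝ) < n := Nat.cast_pos.2 hn0
  rw [one_mul] at hinv
  have hb_inv : (b n)⁻¹ ≤ n := by
    refine (inv_anti₀ (by positivity) ?_).trans hinv
    calc lam n * b n ^ d ≤ 1 * b n := mul_le_mul (by linarith [P.lam_le_half n hn])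
          (pow_le_of_le_one hb.le (P.b_le_one n hn) (Nat.one_le_iff_ne_zero.1 P.one_le_d))
          (by positivity) zero_le_one
      _ = b n := one_mul _
  calc 2 * ((2 / (P.c * lam n)) ^ η * (P.L / b n ^ (d + 1) * (d / n ^ 3)))
      = M * ((lam n * b n ^ d)⁻¹ * (b n)⁻¹ / n ^ 3) * lam n ^ (1 - η) := by
        rw [← div_div, Real.div_rpow (by positivity) hlam.le, Real.rpow_sub hlam, Real.rpow_one]
        have := (Real.rpow_pos_of_pos hlam η).ne'
        field_simp
        rw [hM_def]
        ring
    _ ≤ M * (n * n / n ^ 3) * lam n ^ (1 - η) := by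
        have : 0 ≤ M := by positivity
        gcongr
    _ = M / n * lam n ^ (1 - η) := by field_simp
    _ ≤ τ * lam n ^ (1 - η) := by gcongr

end Setting

namespace Algorithm

variable {Ω : Type*} {mΩ : MeasurableSpace Ω} {μ : Measure Ω} [IsProbabilityMeasure μ]
  {d : ℕ} {η : ℝ} {f q0 K : E d → ℝ} {γ b lam : ℕ → ℝ} {P : Setting d η f q0 K γ b lam}
  {X : ℕ → Ω → E d} {g q : ℕ → Ω → E d → ℝ} {τ : ℝ}

lemma ae_forall_isDensity (A : Algorithm P μ X g q) :
    ∀ᵐ ω ∂μ, ∀ n, P.N ≤ n → IsDensity (q n ω) :=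
  ae_all_iff.2 fun _ => ae_all_iff.2 fun hn => A.ae_isDensity (P.one_le_N.trans hn)

theorem ae_eventually_abs_avgNoise_one_le (A : Algorithm P μ X g q) :
    ∀ᵐ ω ∂μ, ∀ τ > 0, ∀ᶠ n : ℕ in atTop,
      |P.avgNoise (fun j => q j ω) (fun j => X j ω) 1 n| ≤ τ * lam n ^ (1 - η) := by
  refine ae_forall_pos_of_monotone (fun ω τ τ' hττ' h => h.mono fun n hn => hn.trans ?_)
    fun τ hτ => ?_
  · have := (P.lam_pos n).le
    gcongr
  · have hk (j : ℕ) (hj : P.N ≤ j) : IsTestFunction f 1 (b (j + 1)) ((1 : ℕ → E d → ℝ) j) :=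
      P.isTestFunction_one (P.b_pos _) (P.b_le_one _ (hj.trans j.le_succ))
    have hbad := ae_eventually_notMem_of_eventually_measure_le
      (Real.summable_one_div_nat_pow.2 one_lt_two |>.mul_left 2)
      ((A.eventually_measure_lt_abs_avgNoise_le one_pos 2 hτ).mono fun n hn =>
        (hn 1 hk).trans_eq (by rw [mul_one_div]))
    filter_upwards [hbad] with ω hω
    filter_upwards [hω] with n hn using not_lt.1 hn

lemma eventually_measure_exists_mem_lt_abs_avgNoise_kernelAt_le (A : Algorithm P μ X g q)
    (hτ : 0 < τ) :
    ∀ᶠ n : ℕ in atTop, ∀ t : Finset (E d), t.card ≤ (2 * (n * n ^ 3) + 1) ^ d →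
      μ {ω | ∃ y ∈ t, τ * lam n ^ (1 - η) <
        |P.avgNoise (fun j => q j ω) (fun j => X j ω) (kernelAt K b y) n|} ≤
      ENNReal.ofReal (2 * 3 ^ d * (1 / n ^ 2)) := by
  filter_upwards [A.eventually_measure_lt_abs_avgNoise_le P.kernelBound_pos (4 * d + 2) hτ,
    eventually_gt_atTop 0] with n hn hn0 t ht
  have hn1 : (1 : ℝ) ≤ n := Nat.one_le_cast.2 hn0
  have hcard : (t.card : ℝ) ≤ (3 * n ^ 4) ^ d := by
    calc (t.card : ℝ) ≤ (2 * (n * n ^ 3) + 1) ^ d := mod_cast ht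
      _ ≤ (3 * n ^ 4) ^ d := by
        gcongr
        linarith [one_le_pow₀ hn1 (n := 4), pow_succ' (n : ℝ) 3]
  calc μ {ω | ∃ y ∈ t, τ * lam n ^ (1 - η) <
        |P.avgNoise (fun j => q j ω) (fun j => X j ω) (kernelAt K b y) n|}
      ≤ ∑ y ∈ t, μ {ω | τ * lam n ^ (1 - η) <
        |P.avgNoise (fun j => q j ω) (fun j => X j ω) (kernelAt K b y) n|} := by
        refine le_of_eq_of_le (congrArg μ ?_) (measure_biUnion_finset_le t _)
        ext ω
        simp
    _ ≤ ∑ _y ∈ t, ENNReal.ofReal (2 / n ^ (4 * d + 2)) :=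
        Finset.sum_le_sum fun y _ => hn _ (P.isTestFunction_kernelAt y)
    _ = ENNReal.ofReal (t.card * (2 / n ^ (4 * d + 2))) := by
        rw [Finset.sum_const, nsmul_eq_mul, ENNReal.ofReal_mul (Nat.cast_nonneg _),
          ENNReal.ofReal_natCast]
    _ ≤ ENNReal.ofReal ((3 * n ^ 4) ^ d * (2 / n ^ (4 * d + 2))) := by gcongr
    _ = ENNReal.ofReal (2 * 3 ^ d * (1 / n ^ 2)) := by
        congr 1
        rw [mul_pow, ← pow_mul, pow_add]
        field_simp

lemma eventually_measure_exists_norm_le_lt_abs_avgNoise_kernelAt_le (A : Algorithm P μ X g q)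
    (hτ : 0 < τ) :
    ∀ᶠ n : ℕ in atTop, μ {ω | ∃ x : E d, ‖x‖ ≤ n ∧ τ * lam n ^ (1 - η) <
        |P.avgNoise (fun j => q j ω) (fun j => X j ω) (kernelAt K b x) n|} ≤
      ENNReal.ofReal (2 * 3 ^ d * (1 / n ^ 2)) := by
  filter_upwards [A.eventually_measure_exists_mem_lt_abs_avgNoise_kernelAt_le (half_pos hτ),
    P.eventually_oscillation_le (half_pos hτ), eventually_gt_atTop 0] with n hgrid hosc hn0
  obtain ⟨t, ht, hcover⟩ := exists_finset_card_le_forall_norm_sub_le d n (pow_pos hn0 3)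
  refine (measure_mono_ae ?_).trans (hgrid t ht)
  filter_upwards [A.ae_forall_isDensity] with ω hq hω
  obtain ⟨x, hx, hlt⟩ := hω
  obtain ⟨y, hy, hxy⟩ := hcover x hx
  refine ⟨y, hy, ?_⟩
  have hc := P.c_pos
  have hb := P.b_pos n
  have hlam := P.lam_pos n
  have hdiff := P.abs_avgNoise_kernelAt_sub_le hq (fun j => X j ω) x y n
  have hle : 2 * ((2 / (P.c * lam n)) ^ η * (P.L / b n ^ (d + 1) * ‖x - y‖)) ≤
      2 * ((2 / (P.c * lam n)) ^ η * (P.L / b n ^ (d + 1) * (d / n ^ 3))) := by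
    push_cast at hxy
    have : 0 ≤ (2 / (P.c * lam n)) ^ η := by positivity
    gcongr
  have := abs_sub_abs_le_abs_sub
    (P.avgNoise (fun j => q j ω) (fun j => X j ω) (kernelAt K b x) n)
    (P.avgNoise (fun j => q j ω) (fun j => X j ω) (kernelAt K b y) n)
  linarith

theorem ae_eventually_abs_avgNoise_kernelAt_le (A : Algorithm P μ X g q) :
    ∀ᵐ ω ∂μ, ∀ τ > 0, ∀ᶠ n : ℕ in atTop, ∀ x : E d, ‖x‖ ≤ n →
      |P.avgNoise (fun j => q j ω) (fun j => X j ω) (kernelAt K b x) n|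
        ≤ τ * lam n ^ (1 - η) := by
  refine ae_forall_pos_of_monotone (fun ω τ τ' hττ' h => h.mono fun n hn x hx =>
    (hn x hx).trans ?_) fun τ hτ => ?_
  · have := (P.lam_pos n).le
    gcongr
  · have hbad := ae_eventually_notMem_of_eventually_measure_le
      (Real.summable_one_div_nat_pow.2 one_lt_two |>.mul_left (2 * 3 ^ d))
      (A.eventually_measure_exists_norm_le_lt_abs_avgNoise_kernelAt_le hτ)
    filter_upwards [hbad] with ω hω
    filter_upwards [hω] with n hn x hx using not_lt.1 fun h => hn ⟨x, hx, h⟩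

end Algorithm

/-! ### Sign of the averages -/

section Overlap

variable {Ω : Type*} {mΩ : MeasurableSpace Ω} {μ : Measure Ω} {d : ℕ} {η : ℝ}
  {f q0 K : E d → ℝ} {γ b lam : ℕ → ℝ}

/-- The event that no sample drawn at the times `n + 1, …, k` has positive weight. On it `g_k` is a
multiple of `g_n`, so that `q_k` is a known mixture of `g_n` and `q0`. -/
def unweighted (f : E d → ℝ) (X : ℕ → Ω → E d) (n k : ℕ) : Set Ω :=
  {ω | ∀ j, n < j → j ≤ k → f (X j ω) = 0}

/-- The event that `g` has positive mass, charges `{f = 0}` where it is positive, and that its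
mixture with `q0` at level `l` is negative at `x`. -/
def overlapNeg {S : Type*} (f q0 : E d → ℝ) (g : S → E d → ℝ) (l : ℝ) (x : E d) : Set S :=
  {s | 0 < ∫ y, g s y} ∩ {s | 0 < volume {y | 0 < g s y ∧ f y = 0}} ∩
    {s | (1 - l) * (g s x / ∫ y, g s y) + l * q0 x < 0}

section

variable {X : ℕ → Ω → E d} {n k : ℕ}

lemma unweighted_self (f : E d → ℝ) (X : ℕ → Ω → E d) (n : ℕ) : unweighted f X n n = Set.univ :=
  Set.eq_univ_of_forall fun _ _ hj hj' => absurd hj' hj.not_ge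

lemma unweighted_succ (f : E d → ℝ) (X : ℕ → Ω → E d) (hnk : n ≤ k) :
    unweighted f X n (k + 1) = unweighted f X n k ∩ X (k + 1) ⁻¹' (f ⁻¹' {0}) := by
  ext ω
  refine ⟨fun h => ⟨fun j hj hjk => h j hj (hjk.trans k.le_succ), h _ (by omega) le_rfl⟩,
    fun h j hj hjk => ?_⟩
  rcases hjk.lt_or_eq with hjk | rfl
  · exact h.1 j hj (Nat.le_of_lt_succ hjk)
  · exact h.2

lemma measurableSet_unweighted (hf : Measurable f) (hnk : n ≤ k) :
    MeasurableSet[natFilt X k] (unweighted f X n k) := by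
  induction k, hnk using Nat.le_induction with
  | base => exact unweighted_self f X n ▸ MeasurableSet.univ
  | succ k hk ih =>
    rw [unweighted_succ f X hk]
    exact MeasurableSet.inter (natFilt_mono k.le_succ _ ih)
      (measurable_natFilt k.succ_pos (hf (measurableSet_singleton 0)))

end

lemma measurableSet_overlapNeg {S : Type*} {mS : MeasurableSpace S} (hf : Measurable f)
    {g : S → E d → ℝ} (hg : Measurable (Function.uncurry g)) (l : ℝ) (x : E d) :
    MeasurableSet (overlapNeg f q0 g l x) := by
  have hmass : Measurable fun s => ∫ y, g s y :=
    (StronglyMeasurable.integral_prod_right (f := g) hg.stronglyMeasurable).measurable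
  have hvol : Measurable fun s => volume {y | 0 < g s y ∧ f y = 0} :=
    measurable_measure_prodMk_left (ν := (volume : Measure (E d)))
      ((measurableSet_lt measurable_const hg).inter
        ((hf.comp measurable_snd) (measurableSet_singleton 0)))
  exact ((measurableSet_lt measurable_const hmass).inter
    (measurableSet_lt measurable_const hvol)).inter
    (measurableSet_lt (((hg.of_uncurry_right.div hmass).const_mul _).add_const _) measurable_const)

lemma measurable_indicator_prod {S α : Type*} {_ : MeasurableSpace S} [MeasurableSpace α]
    {D : Set S} {T : Set α} (hD : MeasurableSet D) (hT : MeasurableSet T) :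
    Measurable (Function.uncurry fun s y => (D ×ˢ T).indicator (1 : S × α → ℝ≥0∞) (s, y)) :=
  measurable_one.indicator (hD.prod hT)

namespace Algorithm

variable {P : Setting d η f q0 K γ b lam} {X : ℕ → Ω → E d} {g q : ℕ → Ω → E d → ℝ} {n k : ℕ}
  {ω : Ω}

lemma exists_g_eq_mul_of_mem_unweighted (A : Algorithm P μ X g q) (hn : P.N ≤ n) (hnk : n ≤ k)
    (hω : ω ∈ unweighted f X n k) : ∃ ρ > 0, ∀ x, g k ω x = ρ * g n ω x := by
  induction k, hnk using Nat.le_induction with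
  | base => exact ⟨1, one_pos, fun x => (one_mul _).symm⟩
  | succ k hk ih =>
    rw [unweighted_succ f X hk] at hω
    obtain ⟨ρ, hρ, hg⟩ := ih hω.1
    have hfX : f (X (k + 1) ω) = 0 := hω.2
    have hγ := P.γ_lt_one_of_lt le_rfl (k + 1) (Nat.lt_succ_of_le (hn.trans hk))
    refine ⟨(1 - γ (k + 1)) * ρ, mul_pos (sub_pos.2 hγ) hρ, fun x => ?_⟩
    rw [A.g_succ, hfX, hg, zero_div, Real.zero_rpow P.η_pos.ne']
    ring

lemma q_eq_of_mem_unweighted (A : Algorithm P μ X g q) (hn : P.N ≤ n) (hnk : n ≤ k)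
    (hω : ω ∈ unweighted f X n k) (x : E d) :
    q k ω x = (1 - lam k) * (g n ω x / ∫ y, g n ω y) + lam k * q0 x := by
  obtain ⟨ρ, hρ, hg⟩ := A.exists_g_eq_mul_of_mem_unweighted hn hnk hω
  rw [A.q_eq ((P.one_le_N.trans hn).trans hnk)]
  simp only [hg, integral_const_mul, mul_div_mul_left _ _ hρ.ne']

variable [IsProbabilityMeasure μ]

lemma measure_inter_preimage_X_succ (A : Algorithm P μ X g q) (hk : 1 ≤ k) {D : Set Ω}
    (hD : MeasurableSet[natFilt X k] D) {S : Set (E d)} (hS : MeasurableSet S) :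
    μ (D ∩ X (k + 1) ⁻¹' S) = ∫⁻ ω in D, ∫⁻ y in S, ENNReal.ofReal (q k ω y) ∂volume ∂μ := by
  have hD' : MeasurableSet D := A.natFilt_le k _ hD
  have hprod := A.lintegral_apply_X_succ hk (Φ := fun ω y => (D ×ˢ S).indicator 1 (ω, y))
    (measurable_indicator_prod hD hS)
  have hleft (ω : Ω) : (D ×ˢ S).indicator (1 : Ω × E d → ℝ≥0∞) (ω, X (k + 1) ω) =
      (D ∩ X (k + 1) ⁻¹' S).indicator 1 ω := rfl
  have hright (ω : Ω) :
      ∫⁻ y, ENNReal.ofReal (q k ω y) * (D ×ˢ S).indicator 1 (ω, y) ∂volume =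
        D.indicator (fun ω => ∫⁻ y in S, ENNReal.ofReal (q k ω y) ∂volume) ω := by
    classical
    simp only [← lintegral_indicator hS, Set.indicator_apply, Pi.one_apply]
    by_cases hω : ω ∈ D <;> simp [hω]
  simp only [hleft, hright] at hprod
  rwa [lintegral_indicator hD', lintegral_indicator_one (hD'.inter (A.measurable_X _ hS))]
    at hprod

lemma measure_eq_zero_of_inter_preimage_X_succ (A : Algorithm P μ X g q) (hk : 1 ≤ k) {D : Set Ω}
    (hD : MeasurableSet[natFilt X k] D) {S : Set (E d)} (hS : MeasurableSet S)
    (hq : ∀ ω ∈ D, 0 < volume {y | 0 < q k ω y ∧ y ∈ S}) (hnull : μ (D ∩ X (k + 1) ⁻¹' S) = 0) :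
    μ D = 0 := by
  by_contra hpos
  have hqm := measurable_uncurry_of_le (A.natFilt_le k) (A.measurable_uncurry k).2
  rw [A.measure_inter_preimage_X_succ hk hD hS] at hnull
  refine hnull.not_gt ((setLIntegral_pos_iff hqm.ennreal_ofReal.lintegral_prod_right').2 ?_)
  refine (pos_iff_ne_zero.2 hpos).trans_le (measure_mono fun ω hω => ⟨ne_of_gt ?_, hω⟩)
  refine (setLIntegral_pos_iff hqm.of_uncurry_left.ennreal_ofReal).2
    ((hq ω hω).trans_le (measure_mono fun y hy => ⟨?_, hy.2⟩))
  exact (ENNReal.ofReal_pos.2 hy.1).ne'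

lemma measure_overlapNeg_eq_zero (A : Algorithm P μ X g q) {m : ℕ} (hn : P.N ≤ n) (hnm : n ≤ m)
    (x : E d) : μ (overlapNeg f q0 (g n) (lam m) x) = 0 := by
  set C := overlapNeg f q0 (g n) (lam m) x
  have hfm := P.f_continuous.measurable
  have hCm : MeasurableSet[natFilt X n] C :=
    measurableSet_overlapNeg hfm (A.measurable_uncurry n).1 _ _
  have hnull : ∀ k, n ≤ k → k ≤ m → μ (C ∩ unweighted f X n k) = 0 := by
    intro k hk hkm
    induction hkm using Nat.decreasingInduction with
    | self =>
      refine measure_mono_null ?_ (ae_iff.1 (A.ae_isDensity (P.one_le_N.trans (hn.trans hnm))))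
      rintro ω ⟨hωC, hω⟩ hq
      exact hωC.2.not_ge (A.q_eq_of_mem_unweighted hn hnm hω x ▸ hq.nonneg x)
    | of_succ k _ ih =>
      have ih := ih (hk.trans k.le_succ)
      rw [unweighted_succ f X hk, ← Set.inter_assoc] at ih
      refine A.measure_eq_zero_of_inter_preimage_X_succ (P.one_le_N.trans (hn.trans hk))
        ((natFilt_mono hk _ hCm).inter (measurableSet_unweighted hfm hk))
        (hfm (measurableSet_singleton 0)) (fun ω hω => hω.1.1.2.trans_le (measure_mono ?_)) ih
      rintro y ⟨hgy, hfy⟩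
      refine ⟨?_, hfy⟩
      rw [A.q_eq_of_mem_unweighted hn hk hω.2]
      have hlam : 0 < 1 - lam k := by linarith [P.lam_le_half k (hn.trans hk)]
      exact add_pos_of_pos_of_nonneg (mul_pos hlam (div_pos hgy hω.1.1.1))
        (mul_nonneg (P.lam_pos k).le (P.q0_density.nonneg y))
  simpa [unweighted_self] using hnull n le_rfl hnm

lemma ae_nonneg_of_overlap (A : Algorithm P μ X g q) (hn : P.N ≤ n) :
    ∀ᵐ ω ∂μ, 0 < ∫ y, g n ω y → 0 < volume {x | 0 < g n ω x ∧ f x = 0} → ∀ x, 0 ≤ g n ω x := by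
  have hnot : ∀ᵐ ω ∂μ, ∀ m i : ℕ,
      ω ∉ overlapNeg f q0 (g n) (lam (m + n)) (TopologicalSpace.denseSeq (E d) i) :=
    ae_all_iff.2 fun m => ae_all_iff.2 fun i =>
      measure_eq_zero_iff_ae_notMem.1 (A.measure_overlapNeg_eq_zero hn (Nat.le_add_left n m) _)
  filter_upwards [hnot] with ω hω hmass hvol x
  refine isClosed_property (TopologicalSpace.denseRange_denseSeq (E d))
    (isClosed_le continuous_const (A.g_continuous n ω)) (fun i => ?_) x
  set x := TopologicalSpace.denseSeq (E d) i
  have hmix (m : ℕ) :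
      0 ≤ (1 - lam (m + n)) * (g n ω x / ∫ y, g n ω y) + lam (m + n) * q0 x :=
    not_lt.1 fun h => hω m i ⟨⟨hmass, hvol⟩, h⟩
  have hlam : Tendsto (fun m => lam (m + n)) atTop (𝓝 0) :=
    (tendsto_add_atTop_iff_nat n).2 P.tendsto_lam
  have hlim := ((hlam.const_sub 1).mul_const (g n ω x / ∫ y, g n ω y)).add
    (hlam.mul_const (q0 x))
  have := ge_of_tendsto' hlim hmix
  rw [sub_zero, one_mul, zero_mul, add_zero] at this
  exact not_lt.1 fun h => (div_neg_of_neg_of_pos h hmass).not_ge this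

theorem ae_trajectory (A : Algorithm P μ X g q) :
    ∀ᵐ ω ∂μ, Trajectory P (fun j => X j ω) (fun j => g j ω) (fun j => q j ω) := by
  have hoverlap : ∀ᵐ ω ∂μ, ∀ n, P.N ≤ n → 0 < ∫ y, g n ω y →
      0 < volume {x | 0 < g n ω x ∧ f x = 0} → ∀ x, 0 ≤ g n ω x :=
    ae_all_iff.2 fun _ => ae_all_iff.2 fun hn => A.ae_nonneg_of_overlap hn
  filter_upwards [A.ae_forall_isDensity, A.ae_eventually_abs_avgNoise_kernelAt_le,
    A.ae_eventually_abs_avgNoise_one_le, hoverlap] with ω hq hkernel hone hoverlap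
  exact
    { q_density := hq
      g_succ := fun n _ x => A.g_succ n ω x
      q_eq := fun n hn x => A.q_eq (P.one_le_N.trans hn) ω x
      g_bounded := fun n => A.g_bounded n ω
      g_integrable := fun n => A.g_integrable n ω
      g_continuous := fun n => A.g_continuous n ω
      noise_kernelAt := hkernel
      noise_one := hone
      nonneg_of_overlap := hoverlap }

end Algorithm

end Overlap

lemma exists_measurable_forall_eq {Ω : Type*} [MeasurableSpace Ω] {μ : Measure Ω}
    [IsProbabilityMeasure μ] {d : ℕ} {X : ℕ → Ω → E d} {p : Ω → E d → ℝ}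
    (hp : Measurable (Function.uncurry p)) (hadapt : ∀ x, Measurable[natFilt X 0] fun ω => p ω x) :
    ∃ p₀ : E d → ℝ, Measurable p₀ ∧ ∀ ω, p ω = p₀ := by
  rw [natFilt_zero] at hadapt
  choose p₀ hp₀ using fun x => eq_const_of_measurable_bot (hadapt x)
  obtain ⟨ω₀⟩ := nonempty_of_isProbabilityMeasure μ
  refine ⟨p ω₀, hp.of_uncurry_left, fun ω => funext fun x => ?_⟩
  rw [congrFun (hp₀ x) ω, congrFun (hp₀ x) ω₀]

end Midas

theorem midas_g_limsup_ball_general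
    {Ω : Type*} [MeasurableSpace Ω] (μ : Measure Ω) [IsProbabilityMeasure μ]
    {d : ℕ} (hd : 1 ≤ d) {η : ℝ} (hη : 0 < η) (hη1 : η < 1)
    (f q0 K : EuclideanSpace ℝ (Fin d) → ℝ)
    (γ b lam : ℕ → ℝ)
    (X : ℕ → Ω → EuclideanSpace ℝ (Fin d))
    (w : ℕ → Ω → ℝ)
    (g q : ℕ → Ω → EuclideanSpace ℝ (Fin d) → ℝ)
    (hf : Midas.IsDensity f) (hq0 : Midas.IsDensity q0) (hK : Midas.IsDensity K)
    (hγpos : ∀ n, 0 < γ n) (hbpos : ∀ n, 0 < b n) (hlampos : ∀ n, 0 < lam n)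
    (hX : ∀ n, Measurable (X n))
    (hq_zero : ∃ p : EuclideanSpace ℝ (Fin d) → ℝ, Measurable p ∧ ∀ ω, q 0 ω = p)
    (hg0 : ∀ (ω : Ω) x, g 0 ω x = 0)
    (hw : ∀ n (ω : Ω), w (n + 1) ω = f (X (n + 1) ω) / q n ω (X (n + 1) ω))
    (hgrec : ∀ n (ω : Ω) x, g (n + 1) ω x
      = (1 - γ (n + 1)) * g n ω x
        + γ (n + 1) * w (n + 1) ω ^ η * kb K (b (n + 1)) (x - X (n + 1) ω))
    (hqrec : ∀ n (ω : Ω) x, q (n + 1) ω x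
      = (1 - lam (n + 1)) * (g (n + 1) ω x / (∫ y, g (n + 1) ω y)) + lam (n + 1) * q0 x)
    (hpolicy : ∀ n (φ : EuclideanSpace ℝ (Fin d) → ℝ), Continuous φ →
      (∃ C, ∀ x, |φ x| ≤ C) →
      (μ[fun ω => φ (X (n + 1) ω) | natFilt X n]) =ᵐ[μ] (fun ω => ∫ y, φ y * q n ω y))
    (hfbdd : ∃ C, ∀ x, f x ≤ C) (hfcont : Continuous f)
    (hq0bdd : ∃ C, ∀ x, q0 x ≤ C) (hq0cont : Continuous q0)
    (hfq0 : ∃ c > (0 : ℝ), ∀ x, c * f x ≤ q0 x)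
    (hKbdd : ∃ C, ∀ x, K x ≤ C) (hKlip : ∃ L : NNReal, LipschitzWith L K)
    (hKpos : 0 < K 0)
    (hKtail : ∃ rK > (0 : ℝ), ∃ CK > (0 : ℝ), ∀ x,
      (1 + ‖x‖ ^ ((d : ℝ) + rK)) * K x ≤ CK)
    (hγanti : Antitone γ) (hγ0 : Tendsto γ atTop (nhds 0))
    (hbanti : Antitone b) (hb0 : Tendsto b atTop (nhds 0))
    (hlamanti : Antitone lam) (hlam0 : Tendsto lam atTop (nhds 0))
    (hγrate : ∃ Cγ > (0 : ℝ), ∃ nγ : ℕ, 1 ≤ nγ ∧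
      (∀ n : ℕ, 1 ≤ n → ((n : ℝ))⁻¹ ≤ Cγ * γ n) ∧
      (∀ n : ℕ, nγ ≤ n → γ n - γ (n + 1) ≤ γ n * γ (n + 1)))
    (hrate1 : 1/2 ≤ η → Tendsto
      (fun n : ℕ => (n : ℝ) * γ n ^ 2 * Real.log n / (lam n * b n ^ d))
      atTop (nhds 0))
    (hrate2 : η < 1/2 → Tendsto
      (fun n : ℕ => (n : ℝ) * γ n ^ 2 * Real.log n
        / (lam n ^ (2 * (1 - η)) * b n ^ (2 * (d : ℝ) * (1 - η))))
      atTop (nhds 0)) :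
    ∀ᵐ ω ∂μ, ∀ ε : ℝ, 0 < ε → ∀ x : EuclideanSpace ℝ (Fin d),
      Filter.limsup (fun n : ℕ => ⨆ y ∈ Metric.ball x ε, g n ω y) atTop
        ≤ ⨆ y ∈ Metric.ball x ε, f y := by
  obtain ⟨T⟩ := Midas.nonempty_target hf hfbdd hfcont hq0 hq0bdd hq0cont hfq0
  obtain ⟨κ⟩ := Midas.nonempty_smoothingKernel hK hKbdd hKlip hKpos hKtail
  obtain ⟨S⟩ := Midas.nonempty_schedule hγpos hbpos hlampos hγanti hγ0 hbanti hb0 hlamanti hlam0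
    hγrate hrate1 hrate2
  let P : Midas.Setting d η f q0 K γ b lam := ⟨T, κ, S, hd, hη, hη1⟩
  have A : Midas.Algorithm P μ X g q :=
    ⟨hX, hq_zero, hg0, fun n ω x => hw n ω ▸ hgrec n ω x, hqrec, hpolicy⟩
  filter_upwards [A.ae_trajectory] with ω H ε hε x using H.limsup_biSup_ball_le hε x

theorem midas_g_limsup_ball
    {Ω : Type*} [MeasurableSpace Ω] (μ : Measure Ω) [IsProbabilityMeasure μ]
    {d : ℕ} (hd : 1 ≤ d) {η : ℝ} (hη : 0 < η) (hη1 : η < 1)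
    (f q0 K : EuclideanSpace ℝ (Fin d) → ℝ)
    (γ b lam : ℕ → ℝ)
    (X : ℕ → Ω → EuclideanSpace ℝ (Fin d))
    (w : ℕ → Ω → ℝ)
    (g q : ℕ → Ω → EuclideanSpace ℝ (Fin d) → ℝ)
    (hf0 : ∀ x, 0 ≤ f x) (hfint1 : (∫ x, f x) = 1)
    (hK0 : ∀ x, 0 ≤ K x) (hKint1 : (∫ x, K x) = 1)
    (hγpos : ∀ n, 0 < γ n) (hbpos : ∀ n, 0 < b n) (hlampos : ∀ n, 0 < lam n)
    (hX : ∀ n, Measurable (X n))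
    (hqmeas : ∀ n, Measurable (Function.uncurry (q n)))
    (hg0 : ∀ (ω : Ω) x, g 0 ω x = 0)
    (hw : ∀ n (ω : Ω), w (n+1) ω = f (X (n+1) ω) / q n ω (X (n+1) ω))
    (hgrec : ∀ n (ω : Ω) x, g (n+1) ω x
      = (1 - γ (n+1)) * g n ω x
        + γ (n+1) * w (n+1) ω ^ η * kb K (b (n+1)) (x - X (n+1) ω))
    (hqrec : ∀ n (ω : Ω) x, q (n+1) ω x
      = (1 - lam (n+1)) * (g (n+1) ω x / (∫ y, g (n+1) ω y)) + lam (n+1) * q0 x)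
    (hpolicy : ∀ n (φ : EuclideanSpace ℝ (Fin d) → ℝ), Continuous φ →
      (∃ C, ∀ x, |φ x| ≤ C) →
      (μ[fun ω => φ (X (n+1) ω) | natFilt X n]) =ᵐ[μ] (fun ω => ∫ y, φ y * q n ω y))
    (hadapt : ∀ n x, Measurable[natFilt X n] fun ω => q n ω x)
    (hfbdd : ∃ C, ∀ x, f x ≤ C) (hfcont : Continuous f)
    (hfInt : Integrable f)
    (hq00 : ∀ x, 0 ≤ q0 x) (hq0bdd : ∃ C, ∀ x, q0 x ≤ C) (hq0cont : Continuous q0)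
    (hq0Int : Integrable q0) (hq0int1 : (∫ x, q0 x) = 1)
    (hftail : ∃ r > (0:ℝ), ∃ Cf > (0:ℝ), ∀ t : ℝ, 0 < t →
      (∫ x in {x : EuclideanSpace ℝ (Fin d) | t < ‖x‖}, f x) ≤ Cf * t ^ (-r))
    (hfq0 : ∃ c > (0:ℝ), ∀ x, c * f x ≤ q0 x)
    (hKbdd : ∃ C, ∀ x, K x ≤ C) (hKlip : ∃ L : NNReal, LipschitzWith L K)
    (hKpos : 0 < K 0)
    (hKtail : ∃ rK > (0:ℝ), ∃ CK > (0:ℝ), ∀ x,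
      (1 + ‖x‖ ^ ((d : ℝ) + rK)) * K x ≤ CK)
    (hγanti : Antitone γ) (hγ0 : Tendsto γ atTop (nhds 0))
    (hbanti : Antitone b) (hb0 : Tendsto b atTop (nhds 0))
    (hlamanti : Antitone lam) (hlam0 : Tendsto lam atTop (nhds 0))
    (hγrate : ∃ Cγ > (0:ℝ), ∃ nγ : ℕ, 1 ≤ nγ ∧
      (∀ n : ℕ, 1 ≤ n → ((n : ℝ))⁻¹ ≤ Cγ * γ n) ∧
      (∀ n : ℕ, nγ ≤ n → γ n - γ (n+1) ≤ γ n * γ (n+1)))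
    (hγsq : Summable fun n => γ n ^ 2)
    (hrate1 : 1/2 ≤ η → Tendsto
      (fun n : ℕ => (n : ℝ) * γ n ^ 2 * Real.log n / (lam n * b n ^ d))
      atTop (nhds 0))
    (hrate2 : η < 1/2 → Tendsto
      (fun n : ℕ => (n : ℝ) * γ n ^ 2 * Real.log n
        / (lam n ^ (2 * (1 - η)) * b n ^ (2 * (d : ℝ) * (1 - η))))
      atTop (nhds 0))
    :
    ∀ᵐ ω ∂μ, ∀ ε : ℝ, 0 < ε → ∀ x : EuclideanSpace ℝ (Fin d),
      Filter.limsup (fun n : ℕ => ⨆ y ∈ Metric.ball x ε, g n ω y) atTop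
        ≤ ⨆ y ∈ Metric.ball x ε, f y :=
  midas_g_limsup_ball_general μ hd hη hη1 f q0 K γ b lam X w g q ⟨hf0, hfint1⟩ ⟨hq00, hq0int1⟩
    ⟨hK0, hKint1⟩ hγpos hbpos hlampos hX
    (Midas.exists_measurable_forall_eq (μ := μ) (hqmeas 0) (hadapt 0)) hg0 hw hgrec hqrec hpolicy
    hfbdd hfcont hq0bdd hq0cont hfq0 hKbdd hKlip hKpos hKtail hγanti hγ0 hbanti hb0 hlamanti hlam0
    hγrate hrate1 hrate2
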